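/- arXiv:1104.5007 — 2 statements merged into one kernel-verified Lean document; each statement's English description precedes it below -/
import Mathlib

section
/- For every integer k ≥ 1 there exists a constant γ₀ > 0 with the following property. Let γ_k(n) := γ₀·(β_{k+1}(n)+2), let n ≥ 1, and let 𝒫 be a nonempty family of n-permutations with VC-dimension at most k such that v(𝒫) ≥ 2·γ_k(n). Then there exists a subfamily 𝒫′ ⊆ 𝒫 with v(𝒫′) ≤ v(𝒫) − v(𝒫)²/(γ_k(n)²·n) and |𝒫′| ≥ |𝒫|/(2·v(𝒫)^{2k}). -/
/-! ## Inverse Ackermann hierarchy -/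

/-- Bounded-fuel iteration counter: number of applications of `f` needed to bring `m`
down to a value `≤ 1` (assuming `f` strictly decreases on values `≥ 2`). -/
def iterCount (f : ℕ → ℕ) : ℕ → ℕ → ℕ
  | 0, _ => 0
  | fuel + 1, m => if m ≤ 1 then 0 else 1 + iterCount f fuel (f m)

/-- The inverse Ackermann hierarchy: `alphaHier 1 m = ⌈m/2⌉`, `alphaHier d 1 = 0` for `d ≥ 2`,
and `alphaHier d m = 1 + alphaHier d (alphaHier (d-1) m)` for `m, d ≥ 2`. -/
def alphaHier : ℕ → ℕ → ℕ
  | 0, m => m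
  | 1, m => (m + 1) / 2
  | d + 2, m => iterCount (alphaHier (d + 1)) m m

/-- The inverse Ackermann function `α(m) = min {k ≥ 1 : α_k(m) ≤ 3}`. -/
noncomputable def invAck (m : ℕ) : ℕ := sInf {k : ℕ | 1 ≤ k ∧ alphaHier k m ≤ 3}

/-! ## Permutations, restrictions, VC-dimension -/

/-- The restriction of the `n`-permutation `π` to the (increasing) `k`-tuple of positions `a`
is the `k`-permutation `σ`. -/
def PermRestrictionIs {n k : ℕ} (π : Equiv.Perm (Fin n)) (a : Fin k → Fin n)
    (σ : Equiv.Perm (Fin k)) : Prop :=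
  ∀ i j : Fin k, σ i < σ j ↔ π (a i) < π (a j)

/-- The `k`-tuple of positions `a` is shattered by the family `P` of `n`-permutations. -/
def Shatters {n k : ℕ} (P : Finset (Equiv.Perm (Fin n))) (a : Fin k → Fin n) : Prop :=
  StrictMono a ∧ ∀ σ : Equiv.Perm (Fin k), ∃ π ∈ P, PermRestrictionIs π a σ

/-- The family `P` of `n`-permutations has VC-dimension at most `k`:
no `(k+1)`-tuple of positions is shattered by `P`. -/
def VCDimLE (n k : ℕ) (P : Finset (Equiv.Perm (Fin n))) : Prop :=
  ∀ a : Fin (k + 1) → Fin n, ¬ Shatters P a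

/-- The number of `1`-entries of the union of the permutation matrices of a family `P`
of `n`-permutations. -/
noncomputable def permOnes {n : ℕ} (P : Finset (Equiv.Perm (Fin n))) : ℕ :=
  Nat.card {p : Fin n × Fin n // ∃ π ∈ P, π p.2 = p.1}

/-- `v(P) = |M_P| / n`, the average number of `1`-entries per column of the union
of the permutation matrices of the family `P`. -/
noncomputable def vPerm {n : ℕ} (P : Finset (Equiv.Perm (Fin n))) : ℝ :=
  (permOnes P : ℝ) / (n : ℝ)

/-! ## (0,1)-matrices -/

/-- The number of `1`-entries of a `(0,1)`-matrix (represented as a `Bool` matrix). -/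
noncomputable def matOnes {m n : ℕ} (M : Fin m → Fin n → Bool) : ℕ :=
  Nat.card {p : Fin m × Fin n // M p.1 p.2 = true}

/-- The number of `1`-entries in column `j` of a `(0,1)`-matrix. -/
noncomputable def colOnes {m n : ℕ} (M : Fin m → Fin n → Bool) (j : Fin n) : ℕ :=
  Nat.card {i : Fin m // M i j = true}

/-- The matrix `B` contains the matrix `S`. -/
def MatContains {m n p q : ℕ} (B : Fin m → Fin n → Bool) (S : Fin p → Fin q → Bool) : Prop :=
  ∃ (r : Fin p → Fin m) (c : Fin q → Fin n), StrictMono r ∧ StrictMono c ∧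
    ∀ a b, S a b = true → B (r a) (c b) = true

/-- The `s × 2` matrix `DS_s`, with a `1`-entry in (1-indexed) row `i` and column `j`
exactly when `i + j` is odd. -/
def DS (s : ℕ) : Fin s → Fin 2 → Bool :=
  fun i j => decide ((i.val + j.val) % 2 = 1)

/-- The maximum number of `1`-entries in an `n × n` matrix avoiding `S`. -/
noncomputable def exMat {p q : ℕ} (S : Fin p → Fin q → Bool) (n : ℕ) : ℕ :=
  sSup {x : ℕ | ∃ M : Fin n → Fin n → Bool, ¬ MatContains M S ∧ matOnes M = x}

/-- An `n × n` matrix is `k`-full if some increasing `k`-tuple of columns contains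
every `k`-permutation matrix. -/
def IsFull (k : ℕ) {n : ℕ} (M : Fin n → Fin n → Bool) : Prop :=
  ∃ c : Fin k → Fin n, StrictMono c ∧ ∀ σ : Equiv.Perm (Fin k),
    ∃ r : Fin k → Fin n, StrictMono r ∧ ∀ b : Fin k, M (r (σ b)) (c b) = true

/-- `pFull k n` is the maximum number of `1`-entries in an `n × n` matrix that is
not `(k+1)`-full. -/
noncomputable def pFull (k n : ℕ) : ℕ :=
  sSup {x : ℕ | ∃ M : Fin n → Fin n → Bool, ¬ IsFull (k + 1) M ∧ matOnes M = x}

/-! ## Formations -/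

/-- `M` contains a `B`-fat `(r,s)`-formation: there are an `s`-partition of the rows into
intervals (the fibers of a monotone map `g`) and `r` columns, each having at least `B`
`1`-entries in every interval. -/
def FatFormation (B r s : ℕ) {m n : ℕ} (M : Fin m → Fin n → Bool) : Prop :=
  ∃ g : Fin m → Fin s, Monotone g ∧ ∃ c : Fin r → Fin n, StrictMono c ∧
    ∀ (j : Fin r) (i : Fin s), B ≤ Nat.card {x : Fin m // g x = i ∧ M x (c j) = true}

/-- `M` contains a doubled `(r,s)`-formation: there are an `s`-partition of the rows into
intervals and `r` columns, each having at least one `1`-entry in the first and last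
interval and at least two `1`-entries in every other interval. -/
def DoubledFormation (r s : ℕ) {m n : ℕ} (M : Fin m → Fin n → Bool) : Prop :=
  ∃ g : Fin m → Fin s, Monotone g ∧ ∃ c : Fin r → Fin n, StrictMono c ∧
    ∀ (j : Fin r) (i : Fin s),
      1 ≤ Nat.card {x : Fin m // g x = i ∧ M x (c j) = true} ∧
      (i.val ≠ 0 → i.val ≠ s - 1 → 2 ≤ Nat.card {x : Fin m // g x = i ∧ M x (c j) = true})

/-! ## The functions R, D, β -/

/-- Nivasch's hierarchy `R_s(d)` (shifted as in the paper). -/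
def Rfun : ℕ → ℕ → ℕ
  | 0, _ => 0
  | 1, _ => 0
  | 2, _ => 2
  | 3, _ => 3
  | 4, d => 2 * d + 1
  | _ + 5, 0 => 0
  | _ + 5, 1 => 0
  | s + 5, 2 => 2 ^ (s + 3) + 1
  | s + 5, d + 3 =>
      2 * (Rfun (s + 4) (d + 3) - 1) + (Rfun (s + 3) (d + 3) - 1) * (Rfun (s + 5) (d + 2) - 3) + 1
  termination_by s d => (s, d)

/-- The hierarchy `D_s(d)`. -/
def Dfun : ℕ → ℕ → ℕ
  | 0, _ => 0
  | 1, _ => 0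
  | 2, _ => 2
  | _ + 3, 0 => 0
  | _ + 3, 1 => 0
  | s + 3, 2 => 2 ^ (s + 2) + 2 ^ (s + 1) - 1
  | s + 3, d + 3 =>
      2 * Dfun (s + 2) (d + 3) + (Dfun (s + 1) (d + 3) + 1) * (Rfun (s + 3) (d + 2) - 3)
        + Dfun (s + 3) (d + 2) - Rfun (s + 3) (d + 2) + 1
  termination_by s d => (s, d)

/-- `β_s(m) = D_s(α(m))`. -/
noncomputable def betaFun (s m : ℕ) : ℕ := Dfun s (invAck m)

/-! ## Sequences: MST and formations in sequences -/

/-- The list of column indices of the `1`-entries of a row, in increasing order. -/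
def rowList {n : ℕ} (row : Fin n → Bool) : List (Fin n) :=
  (List.finRange n).filter (fun j => row j)

/-- The matrix → sequence transformation: read the rows top to bottom, writing for each
`1`-entry the index of its column. -/
def MST {m n : ℕ} (M : Fin m → Fin n → Bool) : List (Fin n) :=
  ((List.finRange m).map (fun i => rowList (M i))).flatten

/-- The list `L` contains an `(r,s)`-formation as a subsequence: a concatenation of `s`
permutations of the same `r`-element set of symbols is a sublist of `L`. -/
def IsFormationSeq {A : Type*} [DecidableEq A] (r s : ℕ) (L : List A) : Prop :=
  ∃ (T : Finset A) (F : List (List A)), T.card = r ∧ F.length = s ∧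
    (∀ l ∈ F, l.Nodup ∧ l.toFinset = T) ∧ List.Sublist F.flatten L

/-!
Let `g` cut the rows into `k + 1` intervals such that some `r` columns of the union of the
permutation matrices of `𝒫` have at least `B` ones in each interval (a fat formation). Choose
columns `x₁, x₂, …` one at a time such that every pattern of intervals of `π(x₁), π(x₂), …` is
attained by a proportion `(2 r)^(-t)` of `𝒫` after `t` steps. After `k + 1` steps the patterns that
are permutations would shatter these columns. So at some earlier step a constant proportion of the
columns is rare: for each of them some interval is hit by less than the proportion `1 / (2 r)` of a
common pattern class. Half of that class avoids all these intervals at once, so each of these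
columns loses `B` ones.

Fat formations exist by the recurrences for formations behind generalized Davenport–Schinzel
bounds. Cut the `m` rows into slabs of height `t`. A column is either concentrated in one slab up to
few entries below and above it, or it meets many slabs, or it meets many slabs at least twice. In
the first case one uses the bounds for `t` rows and formations with up to two blocks less, otherwise
the bound for `m / t` rows at the previous inverse Ackermann level. Iterating gives
`O(r m (α_d(m) + 1)^p)` columns with at least `D_s(d)` entries and no doubled `(r, s)`-formation. A
column with `B (D_s(d) + 1)` ones has a skeleton of `D_s(d)` markers on `m = n / B + 1` blocks of
rows, with `B` ones between any two markers, and a doubled formation of skeletons is a fat formation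
of the columns. For `d = α(n)`, where `α_d(n) ≤ 3`, this is applied with `B ≈ v(𝒫) / γ_k(n)`.
-/

/-! ## The inverse Ackermann hierarchy -/

theorem iterCount_eq_of_le {f : ℕ → ℕ} (hf : ∀ x, 2 ≤ x → f x < x) {m fuel fuel' : ℕ}
    (h : m ≤ fuel) (h' : m ≤ fuel') : iterCount f fuel m = iterCount f fuel' m := by
  induction m using Nat.strong_induction_on generalizing fuel fuel' with
  | _ m ih =>
    by_cases hm : m ≤ 1
    · cases fuel <;> cases fuel' <;> simp [iterCount, hm]
    · obtain ⟨fuel, rfl⟩ : ∃ l, fuel = l + 1 := ⟨fuel - 1, by omega⟩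
      obtain ⟨fuel', rfl⟩ : ∃ l, fuel' = l + 1 := ⟨fuel' - 1, by omega⟩
      have hlt := hf m (by omega)
      simp only [iterCount, hm, if_false]
      rw [ih (f m) hlt (fuel := fuel) (fuel' := fuel') (by omega) (by omega)]

theorem alphaHier_one (m : ℕ) : alphaHier 1 m = (m + 1) / 2 := by simp [alphaHier]

theorem alphaHier_add_two_eq_zero (d : ℕ) {m : ℕ} (hm : m ≤ 1) : alphaHier (d + 2) m = 0 := by
  rw [alphaHier]
  cases m <;> simp [iterCount, hm]

theorem alphaHier_add_two_of_lt_self {d m : ℕ} (h : ∀ x, 2 ≤ x → alphaHier (d + 1) x < x)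
    (hm : 2 ≤ m) :
    alphaHier (d + 2) m = 1 + alphaHier (d + 2) (alphaHier (d + 1) m) := by
  have hlt := h m hm
  rw [alphaHier, alphaHier]
  obtain ⟨l, rfl⟩ : ∃ l, m = l + 1 := ⟨m - 1, by omega⟩
  rw [iterCount, if_neg (by omega)]
  rw [iterCount_eq_of_le h (by omega) le_rfl]

theorem alphaHier_lt_self (d : ℕ) {m : ℕ} (hm : 2 ≤ m) : alphaHier (d + 1) m < m := by
  induction d generalizing m with
  | zero => rw [alphaHier_one]; omega
  | succ d ih =>
    induction m using Nat.strong_induction_on with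
    | _ m ihm =>
      rw [alphaHier_add_two_of_lt_self (fun x => ih) hm]
      have hlt : alphaHier (d + 1) m < m := ih hm
      by_cases hy : 2 ≤ alphaHier (d + 1) m
      · have : alphaHier (d + 2) (alphaHier (d + 1) m) < _ := ihm _ hlt hy
        omega
      · rw [alphaHier_add_two_eq_zero d (by omega)]
        omega

theorem alphaHier_add_two (d : ℕ) {m : ℕ} (hm : 2 ≤ m) :
    alphaHier (d + 2) m = 1 + alphaHier (d + 2) (alphaHier (d + 1) m) :=
  alphaHier_add_two_of_lt_self (fun _ => alphaHier_lt_self d) hm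

theorem one_le_alphaHier (d : ℕ) {m : ℕ} (hm : 2 ≤ m) : 1 ≤ alphaHier (d + 1) m := by
  cases d with
  | zero => rw [alphaHier_one]; omega
  | succ d => rw [alphaHier_add_two d hm]; omega

theorem alphaHier_mono (d : ℕ) : Monotone (alphaHier (d + 1)) := by
  intro m m' h
  induction d generalizing m m' with
  | zero => rw [alphaHier_one, alphaHier_one]; omega
  | succ d ih =>
    induction m using Nat.strong_induction_on generalizing m' with
    | _ m ihm =>
      by_cases hm : m ≤ 1
      · rw [alphaHier_add_two_eq_zero d hm]; omega
      · rw [alphaHier_add_two d (m := m) (by omega), alphaHier_add_two d (m := m') (by omega)]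
        have : alphaHier (d + 2) (alphaHier (d + 1) m) ≤
            alphaHier (d + 2) (alphaHier (d + 1) m') :=
          ihm _ (alphaHier_lt_self d (by omega)) (ih h)
        omega

theorem alphaHier_two_le_of_le_two_pow {j m : ℕ} (hm : m ≤ 2 ^ j) : alphaHier 2 m ≤ j := by
  induction j generalizing m with
  | zero => rw [alphaHier_add_two_eq_zero 0 (by simpa using hm)]
  | succ j ih =>
    by_cases h : m ≤ 1
    · rw [alphaHier_add_two_eq_zero 0 h]; omega
    · have hhalf := ih (m := (m + 1) / 2) (by rw [pow_succ] at hm; omega)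
      have hrec := alphaHier_add_two 0 (m := m) (by omega)
      rw [Nat.zero_add, Nat.zero_add, alphaHier_one] at hrec
      omega

theorem alphaHier_succ_le (d m : ℕ) : alphaHier (d + 2) m ≤ alphaHier (d + 1) m := by
  by_cases h : m ≤ 1
  · rw [alphaHier_add_two_eq_zero d h]; omega
  · rw [alphaHier_add_two d (by omega)]
    have hpos := one_le_alphaHier d (m := m) (by omega)
    by_cases hy : 2 ≤ alphaHier (d + 1) m
    · have : alphaHier (d + 2) (alphaHier (d + 1) m) < _ := alphaHier_lt_self (d + 1) hy
      omega
    · rw [alphaHier_add_two_eq_zero d (by omega)]; omega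

theorem alphaHier_add_two_le_alphaHier_two (d m : ℕ) : alphaHier (d + 2) m ≤ alphaHier 2 m := by
  induction d with
  | zero => exact le_rfl
  | succ d ih => exact (alphaHier_succ_le (d + 1) m).trans ih

theorem alphaHier_add_two_le_sub_two (d : ℕ) {m : ℕ} (hm : 4 ≤ m) :
    alphaHier (d + 2) m ≤ m - 2 := by
  refine (alphaHier_add_two_le_alphaHier_two d m).trans (alphaHier_two_le_of_le_two_pow ?_)
  obtain ⟨i, rfl⟩ : ∃ i, m = i + 4 := ⟨m - 4, by omega⟩
  have : i < 2 ^ i := Nat.lt_two_pow_self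
  rw [show i + 4 - 2 = i + 2 by omega, pow_add]
  omega

theorem alphaHier_add_two_le_max (n k : ℕ) :
    alphaHier (k + 2) n ≤ max 3 (alphaHier 2 n - k) := by
  induction k with
  | zero => simp
  | succ k ih =>
    have hsucc : alphaHier (k + 1 + 2) n ≤ alphaHier (k + 2) n := alphaHier_succ_le (k + 1) n
    by_cases h : 4 ≤ alphaHier (k + 2) n
    · have hn : 2 ≤ n := by
        by_contra hn
        rw [alphaHier_add_two_eq_zero k (by omega)] at h
        omega
      have hrec : alphaHier (k + 1 + 2) n = 1 + alphaHier (k + 1 + 2) (alphaHier (k + 2) n) :=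
        alphaHier_add_two (k + 1) hn
      have := alphaHier_add_two_le_sub_two (k + 1) h
      omega
    · omega

theorem alphaHier_invAck_le_three (n : ℕ) : alphaHier (invAck n) n ≤ 3 := by
  have hne : {k : ℕ | 1 ≤ k ∧ alphaHier k n ≤ 3}.Nonempty :=
    ⟨alphaHier 2 n + 2, by omega, by simpa using alphaHier_add_two_le_max n (alphaHier 2 n)⟩
  exact (Nat.sInf_mem hne).2

theorem two_le_invAck {n : ℕ} (hn : 7 ≤ n) : 2 ≤ invAck n := by
  have h := alphaHier_invAck_le_three n
  match invAck n, h with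
  | 0, h => rw [alphaHier] at h; omega
  | 1, h => rw [alphaHier_one] at h; omega
  | d + 2, _ => omega

/-! ## The thresholds -/

/-- The number of entries that forces a column to take part in a plain formation with `s` blocks.
For `s ≠ 1` this is Nivasch's `R_s(d)`; for a single block the correct value is `1`, whereas
`Rfun 1 d = 0`. -/
def plainThreshold (s d : ℕ) : ℕ := if s = 1 then 1 else Rfun s d

theorem plainThreshold_add_two_two (s : ℕ) : plainThreshold (s + 2) 2 = 2 ^ s + 1 := by
  match s with
  | 0 => simp [plainThreshold, Rfun]
  | 1 => simp [plainThreshold, Rfun]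
  | 2 => simp [plainThreshold, Rfun]
  | s + 3 => simp [plainThreshold, Rfun]

theorem plainThreshold_add_three_add_three (s d : ℕ) : plainThreshold (s + 3) (d + 3) =
    2 * (plainThreshold (s + 2) (d + 3) - 1) +
      (plainThreshold (s + 3) (d + 2) - 3) * (plainThreshold (s + 1) (d + 3) - 1) + 1 := by
  match s with
  | 0 => simp [plainThreshold, Rfun]
  | 1 => simp [plainThreshold, Rfun]; omega
  | s + 2 =>
    simp only [plainThreshold, Nat.reduceEqDiff, reduceIte]
    rw [show s + 2 + 3 = s + 5 by rfl, Rfun, mul_comm (Rfun (s + 5) (d + 2) - 3)]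

theorem succ_le_plainThreshold (s : ℕ) {d : ℕ} (hd : 2 ≤ d) : s + 1 ≤ plainThreshold (s + 1) d := by
  induction s using Nat.strong_induction_on generalizing d with
  | _ s ih =>
    match s, ih with
    | 0, _ => simp [plainThreshold]
    | 1, _ => simp [plainThreshold, Rfun]
    | s + 2, ih =>
      obtain ⟨d, rfl⟩ : ∃ l, d = l + 2 := ⟨d - 2, by omega⟩
      cases d with
      | zero =>
        have hbase := plainThreshold_add_two_two (s + 1)
        have : s + 1 < 2 ^ (s + 1) := Nat.lt_two_pow_self
        simp only [Nat.add_assoc, Nat.reduceAdd, Nat.zero_add] at *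
        omega
      | succ d =>
        have hrec := plainThreshold_add_three_add_three s d
        have := ih (s + 1) (by omega) (d := d + 3) (by omega)
        simp only [Nat.add_assoc, Nat.reduceAdd] at *
        omega

theorem plainThreshold_succ_le (s d : ℕ) :
    plainThreshold (s + 3) (d + 2) ≤ plainThreshold (s + 3) (d + 3) := by
  rw [plainThreshold_add_three_add_three s d]
  have hmid := succ_le_plainThreshold (s + 1) (d := d + 3) (by omega)
  cases s with
  | zero => simp [plainThreshold, Rfun]
  | succ s =>
    have hlow := succ_le_plainThreshold (s + 1) (d := d + 3) (by omega)
    have := Nat.mul_le_mul_left (plainThreshold (s + 1 + 3) (d + 2) - 3)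
      (show 1 ≤ plainThreshold (s + 1 + 1) (d + 3) - 1 by omega)
    simp only [Nat.add_assoc, Nat.reduceAdd] at *
    omega

theorem plainThreshold_two_le (s : ℕ) {d : ℕ} (hd : 2 ≤ d) :
    plainThreshold (s + 3) 2 ≤ plainThreshold (s + 3) d := by
  induction d, hd using Nat.le_induction with
  | base => exact le_rfl
  | succ d hd ih =>
    obtain ⟨d, rfl⟩ : ∃ l, d = l + 2 := ⟨d - 2, by omega⟩
    exact ih.trans (plainThreshold_succ_le s d)

theorem Dfun_two (d : ℕ) : Dfun 2 d = 2 := by simp [Dfun]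

theorem Dfun_add_three_two (s : ℕ) : Dfun (s + 3) 2 = 2 * Dfun (s + 2) 2 + 1 := by
  cases s with
  | zero => simp [Dfun]
  | succ s =>
    rw [Dfun, show s + 1 + 2 = s + 3 by omega, Dfun]
    have : 0 < 2 ^ s := by positivity
    simp only [pow_succ]
    omega

theorem Dfun_add_three_add_three_eq (s d : ℕ) : Dfun (s + 3) (d + 3) =
    2 * Dfun (s + 2) (d + 3) + (Dfun (s + 1) (d + 3) + 1) * (plainThreshold (s + 3) (d + 2) - 3)
      + Dfun (s + 3) (d + 2) - plainThreshold (s + 3) (d + 2) + 1 := by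
  rw [Dfun]
  simp [plainThreshold]

theorem two_le_Dfun (s : ℕ) {d : ℕ} (hd : 2 ≤ d) : 2 ≤ Dfun (s + 2) d := by
  induction s generalizing d with
  | zero => simp [Dfun]
  | succ s ih =>
    induction d, hd using Nat.le_induction with
    | base =>
      have := ih le_rfl
      have := Dfun_add_three_two s
      simp only [Nat.add_assoc, Nat.reduceAdd] at *
      omega
    | succ d hd ihd =>
      obtain ⟨d, rfl⟩ : ∃ l, d = l + 2 := ⟨d - 2, by omega⟩
      have hmid := ih (d := d + 3) (by omega)
      have hrec := Dfun_add_three_add_three_eq s d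
      have := succ_le_plainThreshold (s + 2) hd
      have := Nat.mul_le_mul_right (plainThreshold (s + 3) (d + 2) - 3)
        (Nat.le_add_left 1 (Dfun (s + 1) (d + 3)))
      simp only [Nat.add_assoc, Nat.reduceAdd] at *
      omega

theorem Dfun_succ_le (s d : ℕ) : Dfun (s + 3) (d + 2) ≤ Dfun (s + 3) (d + 3) := by
  rw [Dfun_add_three_add_three_eq]
  have := two_le_Dfun s (d := d + 3) (by omega)
  have := succ_le_plainThreshold (s + 2) (d := d + 2) (by omega)
  have := Nat.mul_le_mul_right (plainThreshold (s + 3) (d + 2) - 3)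
    (Nat.le_add_left 1 (Dfun (s + 1) (d + 3)))
  simp only [Nat.add_assoc, Nat.reduceAdd] at *
  omega

theorem Dfun_two_le (s : ℕ) {d : ℕ} (hd : 2 ≤ d) : Dfun (s + 3) 2 ≤ Dfun (s + 3) d := by
  induction d, hd using Nat.le_induction with
  | base => exact le_rfl
  | succ d hd ih =>
    obtain ⟨d, rfl⟩ : ∃ l, d = l + 2 := ⟨d - 2, by omega⟩
    exact ih.trans (Dfun_succ_le s d)

theorem Dfun_add_three_add_three (s d : ℕ) : Dfun (s + 3) (d + 3) =
    2 * Dfun (s + 2) (d + 3) + (Dfun (s + 3) (d + 2) - 3) +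
      (plainThreshold (s + 3) (d + 2) - 3) * Dfun (s + 1) (d + 3) + 1 := by
  have hD : 3 ≤ Dfun (s + 3) (d + 2) := by
    have := two_le_Dfun s (d := 2) le_rfl
    have := Dfun_add_three_two s
    have := Dfun_two_le s (d := d + 2) (by omega)
    omega
  have hR := succ_le_plainThreshold (s + 2) (d := d + 2) (by omega)
  rw [Dfun_add_three_add_three_eq, add_one_mul, mul_comm (Dfun (s + 1) (d + 3))]
  simp only [Nat.add_assoc, Nat.reduceAdd] at *
  omega

/-! ## Formations in families of columns -/

section Formation

variable {α β ι : Type*} [LinearOrder α] [LinearOrder β] {r s e : ℕ} {S : Finset ι}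

/-- The family of columns `A`, indexed by `S`, contains a formation: `r` of the columns and a
partition of the rows into `s` consecutive blocks, given as the fibers of a monotone map, such that
each of the `r` columns has at least `w i` entries in the `i`-th block. -/
def HasFormation (w : Fin s → ℕ) (r : ℕ) (S : Finset ι) (A : ι → Finset α) : Prop :=
  ∃ T ⊆ S, T.card = r ∧ ∃ g : α → Fin s, Monotone g ∧
    ∀ c ∈ T, ∀ i, w i ≤ {x ∈ A c | g x = i}.card

/-- The weight `1 + e` of an interior block, lowered by `e` at each end of the formation. Thus
`e = 0` describes plain formations and `e = 1` doubled ones, except that a single doubled block has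
weight `0`; this makes `Dfun 1 d = 0` the right threshold. -/
def blockWeight (e : ℕ) (i : Fin s) : ℕ :=
  1 + e - (if (i : ℕ) = 0 then e else 0) - (if (i : ℕ) + 1 = s then e else 0)

theorem HasFormation.mono {w w' : Fin s → ℕ} {S' : Finset ι} {A A' : ι → Finset α}
    (h : HasFormation w r S A) (hw : w' ≤ w) (hS : S ⊆ S') (hA : ∀ c ∈ S, A c ⊆ A' c) :
    HasFormation w' r S' A' := by
  obtain ⟨T, hT, hr, g, hg, hTw⟩ := h
  refine ⟨T, hT.trans hS, hr, g, hg, fun c hc i => (hw i).trans ((hTw c hc i).trans ?_)⟩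
  exact Finset.card_le_card (Finset.filter_subset_filter _ (hA c (hT hc)))

theorem HasFormation.map_toDual {w : Fin s → ℕ} {A : ι → Finset α} (h : HasFormation w r S A) :
    HasFormation (w ∘ Fin.rev) r S fun c => (A c).map OrderDual.toDual.toEmbedding := by
  obtain ⟨T, hT, hr, g, hg, hTw⟩ := h
  refine ⟨T, hT, hr, fun x => (g (OrderDual.ofDual x)).rev,
    fun x y hxy => Fin.rev_le_rev.2 (hg hxy), fun c hc i => ?_⟩
  rw [Finset.filter_map, Finset.card_map]
  exact (hTw c hc i.rev).trans (Finset.card_le_card fun x hx => by simpa [Fin.rev_eq_iff] using hx)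

theorem HasFormation.of_map_toDual {w : Fin s → ℕ} {A : ι → Finset α}
    (h : HasFormation w r S fun c => (A c).map OrderDual.toDual.toEmbedding) :
    HasFormation (w ∘ Fin.rev) r S A := by
  obtain ⟨T, hT, hr, g, hg, hTw⟩ := h
  refine ⟨T, hT, hr, fun x => (g (OrderDual.toDual x)).rev,
    fun x y hxy => Fin.rev_le_rev.2 (hg hxy), fun c hc i => ?_⟩
  simpa [Finset.filter_map, Function.comp_def, Fin.rev_eq_iff] using hTw c hc i.rev

theorem blockWeight_comp_rev (e : ℕ) : blockWeight e ∘ Fin.rev = (blockWeight e : Fin s → ℕ) := by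
  funext i
  have := i.isLt
  simp only [blockWeight, Function.comp_apply, Fin.val_rev]
  split_ifs <;> omega

theorem blockWeight_castSucc_le (i : Fin s) :
    blockWeight e i.castSucc ≤ blockWeight e i + if (i : ℕ) + 1 = s then e else 0 := by
  have := i.isLt
  simp only [blockWeight, Fin.val_castSucc]
  split_ifs <;> omega

theorem exists_lt_split {Q : Finset α} {k : ℕ} (h : k + e ≤ Q.card) :
    ∃ B ⊆ Q, ∃ Z ⊆ Q, B.card = k ∧ Z.card = e ∧ ∀ y ∈ B, ∀ z ∈ Z, y < z := by
  induction e generalizing Q with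
  | zero =>
    obtain ⟨B, hBQ, hB⟩ := Finset.exists_subset_card_eq (show k ≤ Q.card by omega)
    exact ⟨B, hBQ, ∅, Finset.empty_subset Q, hB, rfl, by simp⟩
  | succ e ih =>
    have hQ : Q.Nonempty := Finset.card_pos.1 (by omega)
    set q := Q.max' hQ
    have hqQ : q ∈ Q := Q.max'_mem hQ
    obtain ⟨B, hBQ, Z, hZQ, hB, hZ, hBZ⟩ :=
      ih (Q := Q.erase q) (by rw [Finset.card_erase_of_mem hqQ]; omega)
    refine ⟨B, hBQ.trans (Q.erase_subset q), insert q Z, ?_, hB, ?_, fun y hy z hz => ?_⟩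
    · exact Finset.insert_subset hqQ (hZQ.trans (Q.erase_subset q))
    · rw [Finset.card_insert_of_notMem fun h => Q.notMem_erase q (hZQ h), hZ]
    · rcases Finset.mem_insert.1 hz with rfl | hz
      · exact Q.lt_max'_of_mem_erase_max' hQ (hBQ hy)
      · exact hBZ y hy z hz

theorem blockWeight_castSucc_le_card_union {g : α → Fin s} (hg : Monotone g) {B Z : Finset α}
    (hB : ∀ i, blockWeight e i ≤ {x ∈ B | g x = i}.card) (hBZ : ∀ y ∈ B, ∀ z ∈ Z, y < z)
    (hZ : e ≤ Z.card) (i : Fin s) :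
    blockWeight e i.castSucc ≤ {x ∈ B ∪ Z | g x = i}.card := by
  refine (blockWeight_castSucc_le i).trans ?_
  by_cases hi : (i : ℕ) + 1 = s
  · have hZi : ∀ z ∈ Z, g z = i := by
      intro z hz
      by_cases hs1 : s = 1
      · subst hs1; exact Subsingleton.elim _ _
      have hpos : 0 < {x ∈ B | g x = i}.card :=
        lt_of_lt_of_le (by simp only [blockWeight]; split_ifs <;> omega) (hB i)
      obtain ⟨y, hy⟩ := Finset.card_pos.1 hpos
      obtain ⟨hyB, rfl⟩ := Finset.mem_filter.1 hy
      have : g y ≤ g z := hg (hBZ y hyB z hz).le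
      have := (g z).isLt
      omega
    have hdisj : Disjoint {x ∈ B | g x = i} Z := Finset.disjoint_left.2 fun y hy hyZ =>
      lt_irrefl y (hBZ y (Finset.mem_filter.1 hy).1 y hyZ)
    rw [if_pos hi, Finset.filter_union, Finset.filter_true_of_mem hZi,
      Finset.card_union_of_disjoint hdisj]
    exact add_le_add (hB i) hZ
  · rw [if_neg hi]
    exact (hB i).trans (Finset.card_le_card
      (Finset.filter_subset_filter _ Finset.subset_union_left))

/-- The last block absorbs the reserve `Z`, and the entry outside `I` forms the new block. -/
theorem HasFormation.extend_above {A B Z : ι → Finset α} {I : Set α}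
    (h : HasFormation (blockWeight e : Fin s → ℕ) r S B) (hI : IsLowerSet I)
    (hBA : ∀ c ∈ S, B c ⊆ A c) (hZA : ∀ c ∈ S, Z c ⊆ A c)
    (hBI : ∀ c ∈ S, ↑(B c) ⊆ I) (hZI : ∀ c ∈ S, ↑(Z c) ⊆ I)
    (hBZ : ∀ c ∈ S, ∀ y ∈ B c, ∀ z ∈ Z c, y < z) (hZ : ∀ c ∈ S, e ≤ (Z c).card)
    (hnew : ∀ c ∈ S, ∃ x ∈ A c, x ∉ I) :
    HasFormation (blockWeight e : Fin (s + 1) → ℕ) r S A := by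
  classical
  obtain ⟨T, hT, hr, g, hg, hTw⟩ := h
  refine ⟨T, hT, hr, fun x => if x ∈ I then (g x).castSucc else Fin.last s, ?_, ?_⟩
  · intro x y hxy
    by_cases hy : y ∈ I
    · simpa [hy, hI hxy hy] using hg hxy
    · simpa [hy] using Fin.le_last _
  intro c hc i
  have hcS := hT hc
  cases i using Fin.lastCases with
  | last =>
    obtain ⟨x, hxA, hxI⟩ := hnew c hcS
    have hw : blockWeight e (Fin.last s) ≤ 1 := by
      simp only [blockWeight, Fin.val_last, if_true]; omega
    exact hw.trans (Finset.card_pos.2 ⟨x, Finset.mem_filter.2 ⟨hxA, if_neg hxI⟩⟩)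
  | cast i =>
    refine (blockWeight_castSucc_le_card_union hg (hTw c hc) (hBZ c hcS) (hZ c hcS) i).trans
      (Finset.card_le_card fun x hx => ?_)
    obtain ⟨hxBZ, rfl⟩ := Finset.mem_filter.1 hx
    have hxA : x ∈ A c := Finset.union_subset (hBA c hcS) (hZA c hcS) hxBZ
    have hxI : x ∈ I :=
      (Finset.mem_union.1 hxBZ).elim (fun h => hBI c hcS h) fun h => hZI c hcS h
    simp [hxA, hxI]

theorem HasFormation.extend_below {A B Z : ι → Finset α} {I : Set α}
    (h : HasFormation (blockWeight e : Fin s → ℕ) r S B) (hI : IsUpperSet I)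
    (hBA : ∀ c ∈ S, B c ⊆ A c) (hZA : ∀ c ∈ S, Z c ⊆ A c)
    (hBI : ∀ c ∈ S, ↑(B c) ⊆ I) (hZI : ∀ c ∈ S, ↑(Z c) ⊆ I)
    (hZB : ∀ c ∈ S, ∀ z ∈ Z c, ∀ y ∈ B c, z < y) (hZ : ∀ c ∈ S, e ≤ (Z c).card)
    (hnew : ∀ c ∈ S, ∃ x ∈ A c, x ∉ I) :
    HasFormation (blockWeight e : Fin (s + 1) → ℕ) r S A := by
  rw [← blockWeight_comp_rev] at h ⊢
  refine HasFormation.of_map_toDual (HasFormation.extend_above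
    (B := fun c => (B c).map OrderDual.toDual.toEmbedding)
    (Z := fun c => (Z c).map OrderDual.toDual.toEmbedding)
    (I := OrderDual.ofDual ⁻¹' I) ?_ hI.toDual ?_ ?_ ?_ ?_ ?_ ?_ ?_)
  · simpa only [blockWeight_comp_rev] using h.map_toDual
  · exact fun c hc => Finset.map_subset_map.2 (hBA c hc)
  · exact fun c hc => Finset.map_subset_map.2 (hZA c hc)
  · exact fun c hc => by simpa [Set.subset_def] using hBI c hc
  · exact fun c hc => by simpa [Set.subset_def] using hZI c hc
  · simpa [Finset.forall_mem_map] using fun c hc y hy z hz => hZB c hc z hz y hy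
  · simpa using hZ
  · simpa using hnew

theorem HasFormation.of_subset_image {w : Fin s → ℕ} {f : α → β} (hf : Monotone f)
    {A : ι → Finset α} {L : ι → Finset β} (hL : ∀ c ∈ S, L c ⊆ (A c).image f)
    (h : HasFormation w r S L) : HasFormation w r S A := by
  classical
  obtain ⟨T, hT, hr, g, hg, hTw⟩ := h
  refine ⟨T, hT, hr, g ∘ f, hg.comp hf, fun c hc i => (hTw c hc i).trans ?_⟩
  refine le_trans (Finset.card_le_card fun y hy => ?_) (Finset.card_image_le (f := f))
  obtain ⟨hyL, hgy⟩ := Finset.mem_filter.1 hy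
  obtain ⟨x, hxA, rfl⟩ := Finset.mem_image.1 (hL c (hT hc) hyL)
  exact Finset.mem_image.2 ⟨x, Finset.mem_filter.2 ⟨hxA, hgy⟩, rfl⟩

theorem HasFormation.of_thick_fibers {f : α → β} (hf : Monotone f)
    {A : ι → Finset α} {F : ι → Finset β} (hF : ∀ c ∈ S, F c ⊆ (A c).image f)
    (hthick : ∀ c ∈ S, ∀ y ∈ F c, (∃ y' ∈ F c, y' < y) → (∃ y' ∈ F c, y < y') →
      1 + e ≤ {x ∈ A c | f x = y}.card)
    (h : HasFormation (blockWeight 0 : Fin s → ℕ) r S F) :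
    HasFormation (blockWeight e : Fin s → ℕ) r S A := by
  obtain ⟨T, hT, hr, g, hg, hTw⟩ := h
  refine ⟨T, hT, hr, g ∘ f, hg.comp hf, fun c hc i => ?_⟩
  have hrep (l : Fin s) : ∃ y ∈ F c, g y = l := by
    have hpos : 0 < {y ∈ F c | g y = l}.card :=
      lt_of_lt_of_le (by simp [blockWeight]) (hTw c hc l)
    obtain ⟨y, hy⟩ := Finset.card_pos.1 hpos
    exact ⟨y, Finset.mem_filter.1 hy⟩
  obtain ⟨y, hyF, rfl⟩ := hrep i
  have hfiber : {x ∈ A c | f x = y}.card ≤ {x ∈ A c | (g ∘ f) x = g y}.card :=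
    Finset.card_le_card (Finset.monotone_filter_right _ fun x _ hx => congrArg g hx)
  have hlt := (g y).isLt
  refine le_trans ?_ hfiber
  by_cases hint : 0 < (g y : ℕ) ∧ (g y : ℕ) + 1 < s
  · obtain ⟨y₀, hy₀, hgy₀⟩ := hrep ⟨0, by omega⟩
    obtain ⟨y₁, hy₁, hgy₁⟩ := hrep ⟨s - 1, by omega⟩
    refine le_trans (by simp only [blockWeight]; omega) (hthick c (hT hc) y hyF
      ⟨y₀, hy₀, hg.reflect_lt ?_⟩ ⟨y₁, hy₁, hg.reflect_lt ?_⟩)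
    · simpa [hgy₀, Fin.lt_def] using hint.1
    · simp only [hgy₁, Fin.lt_def]; omega
  · obtain ⟨x, hxA, hx⟩ := Finset.mem_image.1 (hF c (hT hc) hyF)
    have hone : 1 ≤ {x ∈ A c | f x = y}.card :=
      Finset.card_pos.2 ⟨x, Finset.mem_filter.2 ⟨hxA, hx⟩⟩
    refine le_trans ?_ hone
    simp only [blockWeight]
    split_ifs <;> omega

end Formation

/-! ## Numbers of columns without formations -/

section ColumnBound

variable {ι : Type*} {e s k r m X : ℕ} {S : Finset ι} {A : ι → Finset ℕ} {a : ℕ}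

/-- Among `m` consecutive rows there are at most `X` columns, indexed by `ι`, with at least `k`
entries each and without a formation on `r` columns with `s` blocks of weights `blockWeight e`. -/
def ColumnBound (ι : Type*) (e s k r m X : ℕ) : Prop :=
  ∀ (S : Finset ι) (A : ι → Finset ℕ) (a : ℕ), (∀ c ∈ S, A c ⊆ Finset.Ico a (a + m)) →
    (∀ c ∈ S, k ≤ (A c).card) → ¬ HasFormation (blockWeight e : Fin s → ℕ) r S A → S.card ≤ X

/-- At most `G` columns per row, for every number of rows up to `m`. -/
def ColumnRate (ι : Type*) (e s k r m G : ℕ) : Prop :=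
  ∀ m', 1 ≤ m' → m' ≤ m → ColumnBound ι e s k r m' (m' * G)

theorem ColumnBound.mono {k' X' : ℕ} (h : ColumnBound ι e s k r m X) (hk : k ≤ k')
    (hX : X ≤ X') : ColumnBound ι e s k' r m X' :=
  fun S A a hA hcard hF => (h S A a hA (fun c hc => hk.trans (hcard c hc)) hF).trans hX

theorem ColumnBound.hasFormation (h : ColumnBound ι e s k r m X) (hS : X < S.card)
    (hA : ∀ c ∈ S, A c ⊆ Finset.Ico a (a + m)) (hk : ∀ c ∈ S, k ≤ (A c).card) :
    HasFormation (blockWeight e : Fin s → ℕ) r S A := by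
  by_contra hF
  exact (h S A a hA hk hF).not_gt hS

theorem ColumnBound.hasFormation_of_above (h : ColumnBound ι e s k r m X) (hS : X < S.card)
    (hk : ∀ c ∈ S, k + e ≤ (A c ∩ Finset.Ico a (a + m)).card)
    (habove : ∀ c ∈ S, ∃ x ∈ A c, a + m ≤ x) :
    HasFormation (blockWeight e : Fin (s + 1) → ℕ) r S A := by
  have hsplit := fun c hc => exists_lt_split (hk c hc)
  choose! B hB Z hZ hBk hZe hBZ using hsplit
  have hwindow {x c} (hx : x ∈ A c ∩ Finset.Ico a (a + m)) : x ∈ Set.Iio (a + m) :=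
    (Finset.mem_Ico.1 (Finset.mem_inter.1 hx).2).2
  refine HasFormation.extend_above
    (h.hasFormation hS (fun c hc => (hB c hc).trans Finset.inter_subset_right)
      fun c hc => (hBk c hc).ge) (isLowerSet_Iio (a + m))
    (fun c hc => (hB c hc).trans Finset.inter_subset_left)
    (fun c hc => (hZ c hc).trans Finset.inter_subset_left)
    (fun c hc x hx => hwindow (hB c hc hx)) (fun c hc x hx => hwindow (hZ c hc hx))
    hBZ (fun c hc => (hZe c hc).ge) ?_
  simpa using habove

theorem ColumnBound.hasFormation_of_below (h : ColumnBound ι e s k r m X) (hS : X < S.card)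
    (hk : ∀ c ∈ S, k + e ≤ (A c ∩ Finset.Ico a (a + m)).card)
    (hbelow : ∀ c ∈ S, ∃ x ∈ A c, x < a) :
    HasFormation (blockWeight e : Fin (s + 1) → ℕ) r S A := by
  have hsplit := fun c hc => exists_lt_split ((add_comm e k).trans_le (hk c hc))
  choose! Z hZ B hB hZe hBk hZB using hsplit
  have hwindow {x c} (hx : x ∈ A c ∩ Finset.Ico a (a + m)) : x ∈ Set.Ici a :=
    (Finset.mem_Ico.1 (Finset.mem_inter.1 hx).2).1
  refine HasFormation.extend_below
    (h.hasFormation hS (fun c hc => (hB c hc).trans Finset.inter_subset_right)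
      fun c hc => (hBk c hc).ge) (isUpperSet_Ici a)
    (fun c hc => (hB c hc).trans Finset.inter_subset_left)
    (fun c hc => (hZ c hc).trans Finset.inter_subset_left)
    (fun c hc x hx => hwindow (hB c hc hx)) (fun c hc x hx => hwindow (hZ c hc hx))
    hZB (fun c hc => (hZe c hc).ge) ?_
  simpa using hbelow

theorem ColumnBound.hasFormation_of_between (h : ColumnBound ι e s k r m X) (hS : X < S.card)
    (hk : ∀ c ∈ S, k + 2 * e ≤ (A c ∩ Finset.Ico a (a + m)).card)
    (hbelow : ∀ c ∈ S, ∃ x ∈ A c, x < a) (habove : ∀ c ∈ S, ∃ x ∈ A c, a + m ≤ x) :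
    HasFormation (blockWeight e : Fin (s + 2) → ℕ) r S A := by
  have hsplit := fun c hc =>
    exists_lt_split (show k + e + e ≤ _ by simpa only [two_mul, add_assoc] using hk c hc)
  choose! B hB Z hZ hBk hZe hBZ using hsplit
  have hlow : HasFormation (blockWeight e : Fin (s + 1) → ℕ) r S
      fun c => {x ∈ A c | x < a} ∪ B c := by
    refine h.hasFormation_of_below (a := a) hS (fun c hc => (hBk c hc).ge.trans ?_) fun c hc => ?_
    · exact Finset.card_le_card fun x hx => Finset.mem_inter.2
        ⟨Finset.mem_union_right _ hx, (Finset.mem_inter.1 (hB c hc hx)).2⟩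
    · obtain ⟨x, hxA, hxa⟩ := hbelow c hc
      exact ⟨x, Finset.mem_union_left _ (Finset.mem_filter.2 ⟨hxA, hxa⟩), hxa⟩
  have hmem {c x} (hx : x ∈ A c ∩ Finset.Ico a (a + m)) : x ∈ A c ∧ a ≤ x ∧ x < a + m := by
    simpa using hx
  refine hlow.extend_above (Z := Z) (isLowerSet_Iio (a + m)) ?_ (fun c hc x hx =>
    (hmem (hZ c hc hx)).1) ?_ (fun c hc x hx => (hmem (hZ c hc hx)).2.2) ?_
    (fun c hc => (hZe c hc).ge) (by simpa using habove)
  · exact fun c hc => Finset.union_subset (Finset.filter_subset _ _)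
      fun x hx => (hmem (hB c hc hx)).1
  · intro c hc x hx
    rcases Finset.mem_union.1 hx with hx | hx
    · exact (Finset.mem_filter.1 hx).2.trans_le (Nat.le_add_right a m)
    · exact (hmem (hB c hc hx)).2.2
  · intro c hc y hy z hz
    rcases Finset.mem_union.1 hy with hy | hy
    · exact (Finset.mem_filter.1 hy).2.trans_le (hmem (hZ c hc hz)).2.1
    · exact hBZ c hc y hy z hz

theorem ColumnBound.of_rows_lt (h : m < k) : ColumnBound ι e s k r m 0 := by
  intro S A a hA hk _
  rw [Nat.le_zero, Finset.card_eq_zero, Finset.eq_empty_iff_forall_notMem]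
  intro c hc
  have hcard := Finset.card_le_card (hA c hc)
  have := hk c hc
  rw [Nat.card_Ico] at hcard
  omega

theorem ColumnBound.one_block (hk : 1 ≤ k + e) : ColumnBound ι e 1 k r m r := by
  intro S A a _ hcard hF
  by_contra! hlt
  obtain ⟨T, hTS, hTr⟩ := Finset.exists_subset_card_eq hlt.le
  refine hF ⟨T, hTS, hTr, fun _ => 0, monotone_const, fun c hc i => ?_⟩
  have := hcard c (hTS hc)
  rw [Finset.filter_true_of_mem fun _ _ => Subsingleton.elim _ _]
  simp only [blockWeight, Fin.val_eq_zero, if_true]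
  omega

theorem hasFormation_two_blocks_of_split (x : ℕ) (hr : r ≤ S.card)
    (hlow : ∀ c ∈ S, ∃ y ∈ A c, y ≤ x) (hhigh : ∀ c ∈ S, ∃ y ∈ A c, x < y) :
    HasFormation (blockWeight e : Fin 2 → ℕ) r S A := by
  obtain ⟨T, hTS, hTr⟩ := Finset.exists_subset_card_eq hr
  refine ⟨T, hTS, hTr, fun y => if y ≤ x then 0 else 1, fun y z hyz => ?_, fun c hc i => ?_⟩
  · dsimp only
    split_ifs <;> omega
  have hw : blockWeight e i ≤ 1 := by
    have := i.isLt
    simp only [blockWeight]; split_ifs <;> omega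
  refine hw.trans (Finset.card_pos.2 ?_)
  match i with
  | 0 =>
    obtain ⟨y, hyA, hy⟩ := hlow c (hTS hc)
    exact ⟨y, by simp [hyA, hy]⟩
  | 1 =>
    obtain ⟨y, hyA, hy⟩ := hhigh c (hTS hc)
    exact ⟨y, by simp [hyA, hy]⟩

theorem ColumnBound.two_blocks : ColumnBound ι e 2 2 r m (m * r) := by
  classical
  intro S A a hA hk hF
  have hnonmax : ∀ c ∈ S, ∃ x ∈ A c, ∃ y ∈ A c, x < y := by
    intro c hc
    obtain ⟨x, hx, y, hy, hxy⟩ := Finset.one_lt_card.1 (hk c hc)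
    rcases Nat.lt_or_gt_of_ne hxy with h | h
    · exact ⟨x, hx, y, hy, h⟩
    · exact ⟨y, hy, x, hx, h⟩
  choose! f hfA hf using hnonmax
  have hfiber : ∀ x ∈ Finset.Ico a (a + m), {c ∈ S | f c = x}.card ≤ r := by
    intro x _
    by_contra! hlt
    refine hF ((hasFormation_two_blocks_of_split x hlt.le ?_ ?_).mono le_rfl
      (Finset.filter_subset _ S) fun _ _ => subset_rfl) <;> intro c hc
    all_goals obtain ⟨hcS, rfl⟩ := Finset.mem_filter.1 hc
    exacts [⟨f c, hfA c hcS, le_rfl⟩, hf c hcS]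
  have := Finset.card_le_mul_card_image_of_maps_to (fun c hc => hA c hc (hfA c hc)) r hfiber
  rwa [Nat.card_Ico, Nat.add_sub_cancel_left, mul_comm] at this

end ColumnBound

/-! ## Cutting the rows into slabs -/

section Slabs

variable {ι : Type*} {e s k k₁ k₂ k₃ k₄ r m t g H₁ H₂ X₀ X₁ X₂ X Y a b l : ℕ}
  {S : Finset ι} {A : ι → Finset ℕ}

/-- The index of the slab of `t` consecutive rows, counted from row `a`, that contains row `x`. -/
def slabIndex (a t x : ℕ) : ℕ := (x - a) / t

/-- The number of rows of the `j`-th slab when `m` rows are cut into slabs of height `t`; the last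
nonempty slab may be shorter, and all later ones have height `0`. -/
def slabHeight (m t j : ℕ) : ℕ := min ((j + 1) * t) m - j * t

/-- The entries of `A` in the window `[b, b + l)` are so numerous that a formation of such columns
in the window, with `s + 2`, `s + 1` or `s` blocks, extends to one with `s + 2` blocks by means of
the entries of `A` above and below the window. -/
def IsConcentrated (e k₁ k₂ b l : ℕ) (A : Finset ℕ) : Prop :=
  A ⊆ Finset.Ico b (b + l) ∨
    (k₁ + e ≤ (A ∩ Finset.Ico b (b + l)).card ∧ ∃ x ∈ A, b + l ≤ x) ∨
    (k₁ + e ≤ (A ∩ Finset.Ico b (b + l)).card ∧ ∃ x ∈ A, x < b) ∨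
    k₂ + 2 * e ≤ (A ∩ Finset.Ico b (b + l)).card ∧ (∃ x ∈ A, x < b) ∧ ∃ x ∈ A, b + l ≤ x

theorem monotone_slabIndex (a t : ℕ) : Monotone (slabIndex a t) :=
  fun _ _ h => Nat.div_le_div_right (Nat.sub_le_sub_right h a)

theorem sum_slabHeight (m t n : ℕ) : ∑ j ∈ Finset.range n, slabHeight m t j = min (n * t) m := by
  induction n with
  | zero => simp
  | succ n ih =>
    rw [Finset.sum_range_succ, ih, slabHeight, add_one_mul]
    omega

theorem slabHeight_le_min (m t j : ℕ) : slabHeight m t j ≤ min t m := by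
  rw [slabHeight, add_one_mul]
  omega

theorem slabIndex_le (ht : 1 ≤ t) {j x : ℕ} (hx : a ≤ x) :
    slabIndex a t x ≤ j ↔ x < a + (j + 1) * t := by
  rw [slabIndex, ← Nat.lt_add_one_iff, Nat.div_lt_iff_lt_mul ht]
  omega

theorem le_slabIndex (ht : 1 ≤ t) {j x : ℕ} (hx : a ≤ x) :
    j ≤ slabIndex a t x ↔ a + j * t ≤ x := by
  rw [slabIndex, Nat.le_div_iff_mul_le ht]
  omega

theorem slabIndex_eq_iff (ht : 1 ≤ t) {j x : ℕ} (hx : x ∈ Finset.Ico a (a + m)) :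
    slabIndex a t x = j ↔ x ∈ Finset.Ico (a + j * t) (a + j * t + slabHeight m t j) := by
  obtain ⟨hax, hxm⟩ := Finset.mem_Ico.1 hx
  rw [le_antisymm_iff, slabIndex_le ht hax, le_slabIndex ht hax, Finset.mem_Ico, slabHeight,
    add_one_mul]
  omega

theorem slabIndex_lt (ht : 1 ≤ t) {x : ℕ} (hx : x ∈ Finset.Ico a (a + m)) :
    slabIndex a t x < (m + t - 1) / t := by
  obtain ⟨hax, hxm⟩ := Finset.mem_Ico.1 hx
  rw [slabIndex, Nat.div_lt_iff_lt_mul ht]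
  have := Nat.lt_mul_div_succ (m + t - 1) ht
  rw [mul_add_one, mul_comm] at this
  omega

theorem card_le_of_isConcentrated (h₀ : ColumnBound ι e (s + 2) k r l X₀)
    (h₁ : ColumnBound ι e (s + 1) k₁ r l X₁) (h₂ : ColumnBound ι e s k₂ r l X₂)
    (hk : ∀ c ∈ S, k ≤ (A c).card) (hS : ∀ c ∈ S, IsConcentrated e k₁ k₂ b l (A c))
    (hF : ¬ HasFormation (blockWeight e : Fin (s + 2) → ℕ) r S A) :
    S.card ≤ X₀ + 2 * X₁ + X₂ := by
  classical
  have card_le {T : Finset ι} {Z : ℕ} (hTS : T ⊆ S)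
      (hT : Z < T.card → HasFormation (blockWeight e : Fin (s + 2) → ℕ) r T A) : T.card ≤ Z := by
    by_contra! hlt
    exact hF ((hT hlt).mono le_rfl hTS fun _ _ => subset_rfl)
  set W := Finset.Ico b (b + l)
  set T₀ := {c ∈ S | A c ⊆ W} with hT₀
  set T₁ := {c ∈ S | k₁ + e ≤ (A c ∩ W).card ∧ ∃ x ∈ A c, b + l ≤ x} with hT₁
  set T₁' := {c ∈ S | k₁ + e ≤ (A c ∩ W).card ∧ ∃ x ∈ A c, x < b} with hT₁'
  set T₂ := {c ∈ S | k₂ + 2 * e ≤ (A c ∩ W).card ∧ (∃ x ∈ A c, x < b) ∧ ∃ x ∈ A c, b + l ≤ x}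
    with hT₂
  have hcover : S ⊆ T₀ ∪ T₁ ∪ T₁' ∪ T₂ := fun c hc => by
    simpa [hT₀, hT₁, hT₁', hT₂, hc, IsConcentrated, or_assoc] using hS c hc
  have hconfined : T₀.card ≤ X₀ := card_le (Finset.filter_subset _ S) fun hlt =>
    h₀.hasFormation hlt (fun c hc => (Finset.mem_filter.1 hc).2)
      fun c hc => hk c (Finset.mem_filter.1 hc).1
  have habove : T₁.card ≤ X₁ := card_le (Finset.filter_subset _ S) fun hlt =>
    h₁.hasFormation_of_above hlt (fun c hc => (Finset.mem_filter.1 hc).2.1)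
      fun c hc => (Finset.mem_filter.1 hc).2.2
  have hbelow : T₁'.card ≤ X₁ := card_le (Finset.filter_subset _ S) fun hlt =>
    h₁.hasFormation_of_below hlt (fun c hc => (Finset.mem_filter.1 hc).2.1)
      fun c hc => (Finset.mem_filter.1 hc).2.2
  have hbetween : T₂.card ≤ X₂ := card_le (Finset.filter_subset _ S) fun hlt =>
    h₂.hasFormation_of_between hlt (fun c hc => (Finset.mem_filter.1 hc).2.1)
      (fun c hc => (Finset.mem_filter.1 hc).2.2.1) fun c hc => (Finset.mem_filter.1 hc).2.2.2
  have := Finset.card_le_card hcover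
  have := Finset.card_union_le (T₀ ∪ T₁ ∪ T₁') T₂
  have := Finset.card_union_le (T₀ ∪ T₁) T₁'
  have := Finset.card_union_le T₀ T₁
  omega

theorem card_le_of_exists_isConcentrated_slab
    (h₀ : ColumnRate ι e (s + 2) k r (min t m) g) (h₁ : ColumnRate ι e (s + 1) k₁ r (min t m) H₁)
    (h₂ : ColumnRate ι e s k₂ r (min t m) H₂) (hk : ∀ c ∈ S, k ≤ (A c).card)
    (hS : ∀ c ∈ S, ∃ j < m, 1 ≤ slabHeight m t j ∧
      IsConcentrated e k₁ k₂ (a + j * t) (slabHeight m t j) (A c))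
    (hF : ¬ HasFormation (blockWeight e : Fin (s + 2) → ℕ) r S A) :
    S.card ≤ m * (g + 2 * H₁ + H₂) := by
  classical
  let bad (j : ℕ) : Finset ι := {c ∈ S | 1 ≤ slabHeight m t j ∧
    IsConcentrated e k₁ k₂ (a + j * t) (slabHeight m t j) (A c)}
  have hbad (j : ℕ) : (bad j).card ≤ slabHeight m t j * (g + 2 * H₁ + H₂) := by
    rcases (bad j).eq_empty_or_nonempty with hj | ⟨c, hc⟩
    · simp [hj]
    have hpos := (Finset.mem_filter.1 hc).2.1
    have hle := slabHeight_le_min m t j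
    calc (bad j).card ≤ _ := card_le_of_isConcentrated (h₀ _ hpos hle) (h₁ _ hpos hle)
          (h₂ _ hpos hle) (fun c hc => hk c (Finset.mem_filter.1 hc).1)
          (fun c hc => (Finset.mem_filter.1 hc).2.2)
          fun h => hF (h.mono le_rfl (Finset.filter_subset _ S) fun _ _ => subset_rfl)
      _ = slabHeight m t j * (g + 2 * H₁ + H₂) := by ring
  calc S.card ≤ ((Finset.range m).biUnion bad).card := Finset.card_le_card fun c hc => by
        obtain ⟨j, hj, hjc⟩ := hS c hc
        exact Finset.mem_biUnion.2 ⟨j, Finset.mem_range.2 hj, Finset.mem_filter.2 ⟨hc, hjc⟩⟩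
    _ ≤ ∑ j ∈ Finset.range m, (bad j).card := Finset.card_biUnion_le
    _ ≤ ∑ j ∈ Finset.range m, slabHeight m t j * (g + 2 * H₁ + H₂) :=
        Finset.sum_le_sum fun j _ => hbad j
    _ = min (m * t) m * (g + 2 * H₁ + H₂) := by rw [← Finset.sum_mul, sum_slabHeight]
    _ ≤ m * (g + 2 * H₁ + H₂) := Nat.mul_le_mul_right _ (min_le_right _ _)

/-- The values of `f` on `A` that are extreme or are taken more than `e` times. -/
def heavyImage (e : ℕ) (f : ℕ → ℕ) (A : Finset ℕ) : Finset ℕ :=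
  {j ∈ A.image f | (∀ y ∈ A.image f, y ≤ j) ∨ (∀ y ∈ A.image f, j ≤ y) ∨
    e < {x ∈ A | f x = j}.card}

theorem sum_le_of_two_exceptions {w : ℕ → ℕ} {L F : Finset ℕ} {lo hi p d : ℕ} (hFL : F ⊆ L)
    (hlo : lo ∈ F) (hhi : hi ∈ F) (hne : lo ≠ hi) (hwlo : w lo ≤ p) (hwhi : w hi ≤ p)
    (hw : ∀ j ∈ L \ {lo, hi}, w j ≤ e + if j ∈ F then d else 0) :
    ∑ j ∈ L, w j ≤ 2 * p + (L.card - 2) * e + (F.card - 2) * d := by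
  have hpair {U : Finset ℕ} (hU : F ⊆ U) : {lo, hi} ⊆ U := by
    simp [Finset.insert_subset_iff, hU hlo, hU hhi]
  have card_sdiff {U : Finset ℕ} (hU : F ⊆ U) : (U \ {lo, hi}).card = U.card - 2 := by
    rw [Finset.card_sdiff_of_subset (hpair hU), Finset.card_pair hne]
  have hmid : (L \ {lo, hi}).filter (· ∈ F) ⊆ F \ {lo, hi} := fun j hj => by
    simp only [Finset.mem_filter, Finset.mem_sdiff] at hj ⊢
    exact ⟨hj.2, hj.1.2⟩
  calc ∑ j ∈ L, w j = (∑ j ∈ L \ {lo, hi}, w j) + (w lo + w hi) := by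
        rw [← Finset.sum_sdiff (hpair hFL), Finset.sum_pair hne]
    _ ≤ (∑ j ∈ L \ {lo, hi}, (e + if j ∈ F then d else 0)) + (p + p) :=
        Nat.add_le_add (Finset.sum_le_sum hw) (Nat.add_le_add hwlo hwhi)
    _ = (L.card - 2) * e + ((L \ {lo, hi}).filter (· ∈ F)).card * d + (p + p) := by
        rw [Finset.sum_add_distrib, Finset.sum_const, card_sdiff hFL, ← Finset.sum_filter,
          Finset.sum_const, smul_eq_mul, smul_eq_mul]
    _ ≤ (L.card - 2) * e + (F.card - 2) * d + (p + p) := by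
        rw [← card_sdiff subset_rfl]; gcongr
    _ = 2 * p + (L.card - 2) * e + (F.card - 2) * d := by ring

theorem card_le_of_card_fiber_lt {f : ℕ → ℕ} {A : Finset ℕ} {p q : ℕ}
    (hconfined : ∀ j, ∃ y ∈ A.image f, y ≠ j)
    (habove : ∀ j ∈ A.image f, (∃ y ∈ A.image f, j < y) → {x ∈ A | f x = j}.card < p)
    (hbelow : ∀ j ∈ A.image f, (∃ y ∈ A.image f, y < j) → {x ∈ A | f x = j}.card < p)
    (hbetween : ∀ j ∈ A.image f, (∃ y ∈ A.image f, y < j) → (∃ y ∈ A.image f, j < y) →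
      {x ∈ A | f x = j}.card < q) :
    A.card ≤ 2 * (p - 1) + ((A.image f).card - 2) * e +
      ((heavyImage e f A).card - 2) * (q - 1 - e) := by
  set L := A.image f
  have hL : L.Nonempty := (hconfined 0).imp fun _ h => h.1
  set lo := L.min' hL
  set hi := L.max' hL
  have hloL : lo ∈ L := L.min'_mem hL
  have hhiL : hi ∈ L := L.max'_mem hL
  have hlohi : lo < hi := by
    obtain ⟨y, hy, hne⟩ := hconfined lo
    exact ((L.min'_le y hy).lt_of_ne' hne).trans_le (L.le_max' y hy)
  rw [Finset.card_eq_sum_card_fiberwise (f := f) (t := L) fun x hx => Finset.mem_image_of_mem f hx]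
  refine sum_le_of_two_exceptions (Finset.filter_subset _ L)
    (Finset.mem_filter.2 ⟨hloL, .inr (.inl fun y hy => L.min'_le y hy)⟩)
    (Finset.mem_filter.2 ⟨hhiL, .inl fun y hy => L.le_max' y hy⟩) hlohi.ne
    (Nat.le_sub_one_of_lt (habove lo hloL ⟨hi, hhiL, hlohi⟩))
    (Nat.le_sub_one_of_lt (hbelow hi hhiL ⟨lo, hloL, hlohi⟩)) fun j hj => ?_
  obtain ⟨hjL, hne⟩ := Finset.mem_sdiff.1 hj
  simp only [Finset.mem_insert, Finset.mem_singleton, not_or] at hne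
  split_ifs with hjF
  · have := hbetween j hjL ⟨lo, hloL, (L.min'_le j hjL).lt_of_ne' hne.1⟩
      ⟨hi, hhiL, (L.le_max' j hjL).lt_of_ne hne.2⟩
    omega
  · exact not_lt.1 fun h => hjF (Finset.mem_filter.2 ⟨hjL, .inr (.inr h)⟩)

theorem card_le_of_not_isConcentrated (ht : 1 ≤ t) {A : Finset ℕ} (hne : A.Nonempty)
    (hA : A ⊆ Finset.Ico a (a + m))
    (hscat : ∀ j < m, 1 ≤ slabHeight m t j →
      ¬ IsConcentrated e k₁ k₂ (a + j * t) (slabHeight m t j) A) :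
    A.card ≤ 2 * (k₁ + e - 1) + ((A.image (slabIndex a t)).card - 2) * e +
      ((heavyImage e (slabIndex a t) A).card - 2) * (k₂ + e - 1) := by
  have hslab {x j : ℕ} (hx : x ∈ A) := slabIndex_eq_iff ht (hA hx) (j := j)
  have hscat' : ∀ x ∈ A, ¬ IsConcentrated e k₁ k₂ (a + slabIndex a t x * t)
      (slabHeight m t (slabIndex a t x)) A := by
    intro x hx
    have hxs := Finset.mem_Ico.1 ((hslab hx).1 rfl)
    have hxm := Finset.mem_Ico.1 (hA hx)
    have := Nat.le_mul_of_pos_right (slabIndex a t x) ht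
    exact hscat _ (by omega) (by omega)
  have hfiber (j : ℕ) : {x ∈ A | slabIndex a t x = j} =
      A ∩ Finset.Ico (a + j * t) (a + j * t + slabHeight m t j) := by
    ext x
    simp only [Finset.mem_filter, Finset.mem_inter]
    exact and_congr_right fun hx => hslab hx
  have habove {x y : ℕ} (hy : y ∈ A) (hxy : slabIndex a t x < slabIndex a t y) :
      a + slabIndex a t x * t + slabHeight m t (slabIndex a t x) ≤ y := by
    have := (le_slabIndex ht (Finset.mem_Ico.1 (hA hy)).1).1 hxy
    rw [Nat.succ_mul] at this
    rw [slabHeight, add_one_mul]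
    omega
  have hbelow {x y : ℕ} (hy : y ∈ A) (hxy : slabIndex a t y < slabIndex a t x) :
      y < a + slabIndex a t x * t :=
    not_le.1 fun h => hxy.not_ge ((le_slabIndex ht (Finset.mem_Ico.1 (hA hy)).1).2 h)
  rw [show k₂ + e - 1 = k₂ + 2 * e - 1 - e by omega]
  apply card_le_of_card_fiber_lt
  · intro j
    by_contra! hall
    obtain ⟨x, hx⟩ := hne
    refine hscat' x hx (.inl fun y hy => (hslab hy).1 ?_)
    rw [hall _ (Finset.mem_image_of_mem _ hx), hall _ (Finset.mem_image_of_mem _ hy)]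
  all_goals
    simp only [Finset.forall_mem_image, Finset.exists_mem_image, hfiber]
    intro x hx
  · rintro ⟨y, hy, hxy⟩
    exact not_le.1 fun h => hscat' x hx (.inr (.inl ⟨h, y, hy, habove hy hxy⟩))
  · rintro ⟨y, hy, hxy⟩
    exact not_le.1 fun h => hscat' x hx (.inr (.inr (.inl ⟨h, y, hy, hbelow hy hxy⟩)))
  · rintro ⟨y, hy, hyx⟩ ⟨z, hz, hxz⟩
    exact not_le.1 fun h => hscat' x hx
      (.inr (.inr (.inr ⟨h, ⟨y, hy, hbelow hy hyx⟩, z, hz, habove hz hxz⟩)))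

theorem ColumnBound.card_le_of_le_card_image
    (hX : ColumnBound ι e s k₃ r ((m + t - 1) / t) X) (ht : 1 ≤ t)
    (hA : ∀ c ∈ S, A c ⊆ Finset.Ico a (a + m))
    (hS : ∀ c ∈ S, k₃ ≤ ((A c).image (slabIndex a t)).card)
    (hF : ¬ HasFormation (blockWeight e : Fin s → ℕ) r S A) : S.card ≤ X := by
  refine hX S (fun c => (A c).image (slabIndex a t)) 0 (fun c hc j hj => ?_) hS fun h =>
    hF (h.of_subset_image (monotone_slabIndex a t) fun c _ => subset_rfl)
  obtain ⟨x, hx, rfl⟩ := Finset.mem_image.1 hj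
  simpa using slabIndex_lt ht (hA c hc hx)

theorem ColumnBound.card_le_of_le_card_heavyImage
    (hY : ColumnBound ι 0 s k₄ r ((m + t - 1) / t) Y) (ht : 1 ≤ t)
    (hA : ∀ c ∈ S, A c ⊆ Finset.Ico a (a + m))
    (hS : ∀ c ∈ S, k₄ ≤ (heavyImage e (slabIndex a t) (A c)).card)
    (hF : ¬ HasFormation (blockWeight e : Fin s → ℕ) r S A) : S.card ≤ Y := by
  refine hY S (fun c => heavyImage e (slabIndex a t) (A c)) 0 (fun c hc j hj => ?_) hS fun h =>
    hF (h.of_thick_fibers (monotone_slabIndex a t) (fun c _ => Finset.filter_subset _ _) ?_)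
  · obtain ⟨x, hx, rfl⟩ := Finset.mem_image.1 (Finset.mem_filter.1 hj).1
    simpa using slabIndex_lt ht (hA c hc hx)
  · rintro c - j hj ⟨j₀, hj₀, hlt₀⟩ ⟨j₁, hj₁, hlt₁⟩
    rcases (Finset.mem_filter.1 hj).2 with hmax | hmin | hthick
    · exact absurd (hmax j₁ (Finset.mem_filter.1 hj₁).1) hlt₁.not_ge
    · exact absurd (hmin j₀ (Finset.mem_filter.1 hj₀).1) hlt₀.not_ge
    · omega

/-- A column that is concentrated in no slab meets many slabs or has a large heavy image; such
columns are counted on the `⌈m / t⌉` rows obtained by contracting each slab. -/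
theorem ColumnBound.slab_recurrence (ht : 1 ≤ t)
    (hk : 2 * (k₁ + e - 1) + (k₃ - 3) * e + (k₄ - 3) * (k₂ + e - 1) < k)
    (h₀ : ColumnRate ι e (s + 2) k r (min t m) g) (h₁ : ColumnRate ι e (s + 1) k₁ r (min t m) H₁)
    (h₂ : ColumnRate ι e s k₂ r (min t m) H₂)
    (hX : ColumnBound ι e (s + 2) k₃ r ((m + t - 1) / t) X)
    (hY : ColumnBound ι 0 (s + 2) k₄ r ((m + t - 1) / t) Y) :
    ColumnBound ι e (s + 2) k r m (m * (g + 2 * H₁ + H₂) + (X + Y)) := by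
  classical
  intro S A a hA hcard hF
  have no_formation {T : Finset ι} (hTS : T ⊆ S) :
      ¬ HasFormation (blockWeight e : Fin (s + 2) → ℕ) r T A :=
    fun h => hF (h.mono le_rfl hTS fun _ _ => subset_rfl)
  let concentrated (c : ι) : Prop := ∃ j < m, 1 ≤ slabHeight m t j ∧
    IsConcentrated e k₁ k₂ (a + j * t) (slabHeight m t j) (A c)
  set T₀ := {c ∈ S | concentrated c} with hT₀
  set T₁ := {c ∈ S | k₃ ≤ ((A c).image (slabIndex a t)).card} with hT₁
  set T₂ := {c ∈ S | k₄ ≤ (heavyImage e (slabIndex a t) (A c)).card} with hT₂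
  have hcover : S ⊆ T₀ ∪ (T₁ ∪ T₂) := by
    intro c hc
    by_contra hnot
    simp only [hT₀, hT₁, hT₂, Finset.mem_union, Finset.mem_filter, hc, true_and, not_or,
      not_le] at hnot
    obtain ⟨hscat, hL, hH⟩ := hnot
    have hkc := hcard c hc
    have hle := card_le_of_not_isConcentrated (k₁ := k₁) (k₂ := k₂) (e := e) ht
      (Finset.card_pos.1 (by omega)) (hA c hc) fun j hj hpos hconc => hscat ⟨j, hj, hpos, hconc⟩
    have := Nat.mul_le_mul_right e
      (show ((A c).image (slabIndex a t)).card - 2 ≤ k₃ - 3 by omega)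
    have := Nat.mul_le_mul_right (k₂ + e - 1)
      (show (heavyImage e (slabIndex a t) (A c)).card - 2 ≤ k₄ - 3 by omega)
    omega
  have hconc : T₀.card ≤ m * (g + 2 * H₁ + H₂) :=
    card_le_of_exists_isConcentrated_slab h₀ h₁ h₂ (fun c hc => hcard c (Finset.mem_filter.1 hc).1)
      (fun c hc => (Finset.mem_filter.1 hc).2) (no_formation (Finset.filter_subset _ S))
  have hwide : T₁.card ≤ X := hX.card_le_of_le_card_image ht
    (fun c hc => hA c (Finset.mem_filter.1 hc).1) (fun c hc => (Finset.mem_filter.1 hc).2)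
    (no_formation (Finset.filter_subset _ S))
  have hheavy : T₂.card ≤ Y := hY.card_le_of_le_card_heavyImage ht
    (fun c hc => hA c (Finset.mem_filter.1 hc).1) (fun c hc => (Finset.mem_filter.1 hc).2)
    (no_formation (Finset.filter_subset _ S))
  calc S.card ≤ (T₀ ∪ (T₁ ∪ T₂)).card := Finset.card_le_card hcover
    _ ≤ T₀.card + (T₁.card + T₂.card) := (Finset.card_union_le _ _).trans
        (Nat.add_le_add_left (Finset.card_union_le _ _) _)
    _ ≤ m * (g + 2 * H₁ + H₂) + (X + Y) := Nat.add_le_add hconc (Nat.add_le_add hwide hheavy)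

end Slabs

/-! ## Inverse Ackermann rates -/

section PowerBounds

theorem add_one_pow_succ_add_pow_le (a p : ℕ) :
    (a + 1) ^ (p + 1) + (a + 2) ^ p ≤ (a + 2) ^ (p + 1) := by
  have : (a + 1) ^ p * (a + 1) ≤ (a + 2) ^ p * (a + 1) := by gcongr; omega
  rw [pow_succ, pow_succ]
  linarith

theorem exists_succ_pow_le_mul_two_pow (p : ℕ) : ∃ K, ∀ j, (j + 1) ^ p ≤ K * 2 ^ j := by
  refine ⟨p.factorial * 2 ^ p, fun j => ?_⟩
  calc (j + 1) ^ p ≤ (j + 1).ascFactorial p := Nat.pow_succ_le_ascFactorial _ _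
    _ = p.factorial * (j + p).choose p := Nat.ascFactorial_eq_factorial_mul_choose _ _
    _ ≤ p.factorial * 2 ^ (j + p) := Nat.mul_le_mul_left _ (Nat.choose_le_two_pow _ _)
    _ = p.factorial * 2 ^ p * 2 ^ j := by rw [pow_add]; ring

theorem exists_add_mul_pow_le_two_pow (A B p : ℕ) : ∃ e, A + B * (e + p + 1) ^ p ≤ 2 ^ e := by
  obtain ⟨K, hK⟩ := exists_succ_pow_le_mul_two_pow (p + 1)
  have hKpos : 0 < K * 2 ^ p := by
    have : 1 ≤ K := by simpa using hK 0
    positivity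
  refine ⟨(A + B) * (K * 2 ^ p), ?_⟩
  generalize he : (A + B) * (K * 2 ^ p) = e
  have hpow : 1 ≤ (e + p + 1) ^ p := Nat.one_le_pow _ _ (by omega)
  refine Nat.le_of_mul_le_mul_left ?_ hKpos
  calc K * 2 ^ p * (A + B * (e + p + 1) ^ p)
      ≤ K * 2 ^ p * (A * (e + p + 1) ^ p + B * (e + p + 1) ^ p) := by
        gcongr; exact Nat.le_mul_of_pos_right A hpow
    _ = e * (e + p + 1) ^ p := by rw [← he]; ring
    _ ≤ (e + p + 1) * (e + p + 1) ^ p := by gcongr; omega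
    _ = (e + p + 1) ^ (p + 1) := by ring
    _ ≤ K * 2 ^ (e + p) := hK _
    _ = K * 2 ^ p * 2 ^ e := by rw [pow_add]; ring

theorem exists_alphaHier_two_pow_le (p : ℕ) : ∃ K, ∀ e y, 1 ≤ y →
    (alphaHier 2 (2 ^ e * (y + 1) ^ p) + 1) ^ p ≤ K * (e + p + 1) ^ p * (y + 1) := by
  obtain ⟨K, hK⟩ := exists_succ_pow_le_mul_two_pow p
  refine ⟨2 * K, fun e y hy => ?_⟩
  obtain ⟨j, hyj, hjy⟩ : ∃ j, y + 1 ≤ 2 ^ j ∧ 2 ^ j ≤ 2 * (y + 1) := by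
    refine ⟨Nat.log 2 (y + 1) + 1, (Nat.lt_pow_succ_log_self one_lt_two _).le, ?_⟩
    have := Nat.pow_log_le_self 2 (show y + 1 ≠ 0 by omega)
    rw [pow_succ]; omega
  have hlog : alphaHier 2 (2 ^ e * (y + 1) ^ p) ≤ e + j * p := by
    refine alphaHier_two_le_of_le_two_pow ?_
    rw [pow_add, pow_mul]
    gcongr
  calc (alphaHier 2 (2 ^ e * (y + 1) ^ p) + 1) ^ p
      ≤ ((e + p + 1) * (j + 1)) ^ p := by gcongr; nlinarith
    _ = (e + p + 1) ^ p * (j + 1) ^ p := mul_pow _ _ _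
    _ ≤ (e + p + 1) ^ p * (K * (2 * (y + 1))) := by
        gcongr; exact (hK j).trans (Nat.mul_le_mul_left K hjy)
    _ = _ := by ring

end PowerBounds

section JointBound

variable {ι : Type*} {s d r m t g H X : ℕ}

/-- A simultaneous bound for columns without plain and without doubled formations, at the
thresholds `R_s(d)` and `D_s(d)`: the recurrence for the latter involves the former. -/
def JointBound (ι : Type*) (s d r m X : ℕ) : Prop :=
  ColumnBound ι 0 s (plainThreshold s d) r m X ∧ ColumnBound ι 1 s (Dfun s d) r m X

/-- At most `G` columns per row, for every number of rows up to `m`. -/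
def JointRate (ι : Type*) (s d r m G : ℕ) : Prop :=
  ∀ m', 1 ≤ m' → m' ≤ m → JointBound ι s d r m' (m' * G)

theorem JointBound.mono {X' : ℕ} (h : JointBound ι s d r m X) (hX : X ≤ X') :
    JointBound ι s d r m X' :=
  ⟨h.1.mono le_rfl hX, h.2.mono le_rfl hX⟩

theorem JointRate.mono {m' : ℕ} (h : JointRate ι s d r m g) (hm : m' ≤ m) :
    JointRate ι s d r m' g :=
  fun l hl hlm => h l hl (hlm.trans hm)

theorem JointRate.plain (h : JointRate ι s d r m g) :
    ColumnRate ι 0 s (plainThreshold s d) r m g :=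
  fun l hl hlm => (h l hl hlm).1

theorem JointRate.doubled (h : JointRate ι s d r m g) : ColumnRate ι 1 s (Dfun s d) r m g :=
  fun l hl hlm => (h l hl hlm).2

theorem JointBound.one_block : JointBound ι 1 d r m r :=
  ⟨ColumnBound.one_block (by simp [plainThreshold]), ColumnBound.one_block (by simp)⟩

theorem JointBound.two_blocks : JointBound ι 2 d r m (m * r) :=
  ⟨ColumnBound.two_blocks.mono (by simp [plainThreshold, Rfun]) le_rfl,
    ColumnBound.two_blocks.mono (Dfun_two d).ge le_rfl⟩

theorem JointBound.of_rows_le_one (hd : 2 ≤ d) (hm : m ≤ 1) :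
    JointBound ι (s + 2) d r m 0 := by
  have hplain : s + 2 ≤ plainThreshold (s + 2) d := succ_le_plainThreshold (s + 1) hd
  have hdoubled := two_le_Dfun s hd
  exact ⟨ColumnBound.of_rows_lt (by omega), ColumnBound.of_rows_lt (by omega)⟩

theorem JointBound.of_level_two (hd : 2 ≤ d) (h : JointBound ι (s + 3) 2 r m X) :
    JointBound ι (s + 3) d r m X :=
  ⟨h.1.mono (plainThreshold_two_le s hd) le_rfl, h.2.mono (Dfun_two_le s hd) le_rfl⟩

theorem JointBound.recurrence_two (ht : 1 ≤ t) (hmt : m ≤ 2 * t)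
    (h₀ : JointRate ι (s + 3) 2 r (min t m) g) (h₁ : JointRate ι (s + 2) 2 r (min t m) H)
    (h₂ : JointRate ι (s + 1) 2 r (min t m) H) :
    JointBound ι (s + 3) 2 r m (m * (g + 3 * H)) := by
  have hslabs : (m + t - 1) / t < 3 := by
    rw [Nat.div_lt_iff_lt_mul ht]; omega
  have hsum : m * (g + 2 * H + H) + (0 + 0) = m * (g + 3 * H) := by ring
  have hfew {e : ℕ} : ColumnBound ι e (s + 3) 3 r ((m + t - 1) / t) 0 :=
    ColumnBound.of_rows_lt hslabs
  rw [← hsum]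
  constructor
  · refine ColumnBound.slab_recurrence ht ?_ h₀.plain h₁.plain h₂.plain hfew hfew
    have h := plainThreshold_add_two_two (s + 1)
    rw [h, plainThreshold_add_two_two, pow_succ]
    omega
  · refine ColumnBound.slab_recurrence ht ?_ h₀.doubled h₁.doubled h₂.doubled hfew hfew
    rw [Dfun_add_three_two]
    omega

theorem ceilDiv_mul_le_two_mul (h : 2 ≤ (m + t - 1) / t) :
    (m + t - 1) / t * t ≤ 2 * m := by
  have hmul := Nat.div_mul_le_self (m + t - 1) t
  have : 2 * t ≤ (m + t - 1) / t * t := Nat.mul_le_mul_right _ h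
  omega

theorem JointBound.of_slab_rate {G : ℕ} (hd : 2 ≤ d)
    (h : JointBound ι (s + 2) d r ((m + t - 1) / t) ((m + t - 1) / t * (t * G))) :
    JointBound ι (s + 2) d r ((m + t - 1) / t) (2 * m * G) := by
  rcases Nat.lt_or_ge ((m + t - 1) / t) 2 with hb | hb
  · exact (JointBound.of_rows_le_one hd (by omega)).mono (Nat.zero_le _)
  · refine h.mono ?_
    rw [← mul_assoc]
    exact Nat.mul_le_mul_right G (ceilDiv_mul_le_two_mul hb)

theorem JointBound.recurrence {G : ℕ} (ht : 1 ≤ t)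
    (h₀ : JointRate ι (s + 3) (d + 3) r (min t m) g)
    (h₁ : JointRate ι (s + 2) (d + 3) r (min t m) H)
    (h₂ : JointRate ι (s + 1) (d + 3) r (min t m) H)
    (htop : JointBound ι (s + 3) (d + 2) r ((m + t - 1) / t) ((m + t - 1) / t * (t * G))) :
    JointBound ι (s + 3) (d + 3) r m (m * (g + 3 * H + 4 * G)) := by
  obtain ⟨hplain, hdoubled⟩ := htop.of_slab_rate (by omega)
  have hsum : m * (g + 2 * H + H) + (2 * m * G + 2 * m * G) = m * (g + 3 * H + 4 * G) := by ring
  rw [← hsum]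
  constructor
  · refine ColumnBound.slab_recurrence ht ?_ h₀.plain h₁.plain h₂.plain hplain hplain
    rw [plainThreshold_add_three_add_three]
    simp only [Nat.add_assoc, Nat.reduceAdd, add_zero, mul_zero]
    omega
  · refine ColumnBound.slab_recurrence ht ?_ h₀.doubled h₁.doubled h₂.doubled hdoubled hplain
    rw [Dfun_add_three_add_three]
    simp only [Nat.add_assoc, Nat.reduceAdd, Nat.add_sub_cancel, mul_one]
    omega

end JointBound

section AckermannRate

variable {ι : Type*} {s d r m m' t y g H C K p : ℕ}

/-- The bound `r C (α_d(m) + 1)^p` for the number of columns per row. -/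
def ackermannRate (C p r d m : ℕ) : ℕ := r * (C * (alphaHier d m + 1) ^ p)

/-- Formations with `s` blocks obey the rates `ackermannRate C p` at all levels `d ≥ 2`. -/
def HasAckermannRate (ι : Type*) (s C p : ℕ) : Prop :=
  ∀ d r m, 2 ≤ d → 1 ≤ m → JointBound ι s d r m (m * ackermannRate C p r d m)

theorem ackermannRate_mono {C' p' : ℕ} (hC : C ≤ C') (hp : p ≤ p') (hd : 1 ≤ d) (hm : m ≤ m') :
    ackermannRate C p r d m ≤ ackermannRate C' p' r d m' := by
  obtain ⟨d, rfl⟩ : ∃ l, d = l + 1 := ⟨d - 1, by omega⟩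
  have := alphaHier_mono d hm
  unfold ackermannRate
  gcongr
  omega

theorem JointRate.of_ackermannRate (hd : 1 ≤ d)
    (h : ∀ l, 1 ≤ l → l ≤ m → JointBound ι s d r l (l * ackermannRate C p r d l)) (hm : m ≤ m') :
    JointRate ι s d r m (ackermannRate C p r d m') :=
  fun l hl hlm => (h l hl hlm).mono
    (Nat.mul_le_mul_left l (ackermannRate_mono le_rfl le_rfl hd (hlm.trans hm)))

theorem HasAckermannRate.mono {C' p' : ℕ} (h : HasAckermannRate ι s C p) (hC : C ≤ C')
    (hp : p ≤ p') : HasAckermannRate ι s C' p' :=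
  fun d r m hd hm => (h d r m hd hm).mono
    (Nat.mul_le_mul_left m (ackermannRate_mono hC hp (by omega) le_rfl))

theorem HasAckermannRate.jointRate (h : HasAckermannRate ι s C p) (hd : 2 ≤ d) (hm : m ≤ m') :
    JointRate ι s d r m (ackermannRate C p r d m') :=
  JointRate.of_ackermannRate (by omega) (fun l hl _ => h d r l hd hl) hm

theorem HasAckermannRate.level_two (h₁ : HasAckermannRate ι (s + 2) C p)
    (h₂ : HasAckermannRate ι (s + 1) C p) (r m : ℕ) :
    JointBound ι (s + 3) 2 r m (m * ackermannRate (3 * C) (p + 1) r 2 m) := by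
  induction m using Nat.strong_induction_on with
  | _ m ih =>
    rcases Nat.lt_or_ge m 2 with hm | hm
    · exact (JointBound.of_rows_le_one le_rfl (by omega)).mono (Nat.zero_le _)
    have hhalf := alphaHier_one m
    have hlt : alphaHier 1 m < m := alphaHier_lt_self 0 hm
    have hrec : alphaHier 2 m = 1 + alphaHier 2 (alphaHier 1 m) := alphaHier_add_two 0 hm
    generalize alphaHier 1 m = t at hhalf hlt hrec
    refine (JointBound.recurrence_two (t := t) (by omega) (by omega)
      ((JointRate.of_ackermannRate one_le_two (fun l _ hl => ih l (by omega)) le_rfl).mono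
        (min_le_left t m))
      (h₁.jointRate le_rfl (min_le_right t m)) (h₂.jointRate le_rfl (min_le_right t m))).mono
      (Nat.mul_le_mul_left m ?_)
    simp only [ackermannRate, hrec, show ∀ a, 1 + a + 1 = a + 2 by omega]
    calc _ = r * (3 * C * ((alphaHier 2 t + 1) ^ (p + 1) + (alphaHier 2 t + 2) ^ p)) := by ring
      _ ≤ _ := by gcongr; exact add_one_pow_succ_add_pow_le _ p

theorem ceilDiv_le_self (hy : 1 ≤ y) : (m + y - 1) / y ≤ m := by
  rcases Nat.eq_zero_or_pos m with rfl | hm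
  · exact (Nat.div_eq_of_lt (by omega)).le
  · rw [Nat.div_le_iff_le_mul_add_pred hy]
    have := Nat.le_mul_of_pos_left m hy
    omega

/-- Slabs of height `y` carry a rate from `y` rows to any number `t` of rows that is so small that
`(α₂(t) + 1)^(p+1)` is linear in `y`. -/
theorem HasAckermannRate.extend_rate (h₁ : HasAckermannRate ι (s + 2) C p)
    (h₂ : HasAckermannRate ι (s + 1) C p) (hy : 1 ≤ y)
    (hK : (alphaHier 2 t + 1) ^ (p + 1) ≤ K * (y + 1))
    (hg : JointRate ι (s + 3) (d + 3) r y g) (hH₁ : JointRate ι (s + 2) (d + 3) r t H)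
    (hH₂ : JointRate ι (s + 1) (d + 3) r t H) :
    JointRate ι (s + 3) (d + 3) r t (g + 3 * H + 4 * (r * (6 * C * K))) := by
  intro l _ hlt
  have htop : ackermannRate (3 * C) (p + 1) r 2 ((l + y - 1) / y) ≤ y * (r * (6 * C * K)) :=
    calc _ ≤ ackermannRate (3 * C) (p + 1) r 2 t :=
          ackermannRate_mono le_rfl le_rfl one_le_two ((ceilDiv_le_self hy).trans hlt)
      _ ≤ r * (3 * C * (K * (y + 1))) := by unfold ackermannRate; gcongr
      _ ≤ r * (3 * C * (K * (2 * y))) := by gcongr; omega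
      _ = y * (r * (6 * C * K)) := by ring
  have hmin : min y l ≤ t := (min_le_right y l).trans hlt
  exact JointBound.recurrence hy (hg.mono (min_le_left y l)) (hH₁.mono hmin) (hH₂.mono hmin)
    (((h₁.level_two h₂ r _).of_level_two (by omega)).mono (Nat.mul_le_mul_left _ htop))

theorem ackermannRate_recurrence_le {A a : ℕ} (hA : 6 * C + 4 + 24 * C * K ≤ A) :
    r * (A * (a + 1) ^ (p + 1)) + 3 * (r * (C * (a + 2) ^ p)) + 4 * (r * (6 * C * K)) +
      3 * (r * (C * (a + 2) ^ p)) + 4 * r ≤ r * (A * (a + 2) ^ (p + 1)) := by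
  have hpow : 1 ≤ (a + 2) ^ p := Nat.one_le_pow _ _ (by omega)
  calc _ = r * (A * (a + 1) ^ (p + 1) + 6 * C * (a + 2) ^ p + (4 + 24 * C * K) * 1) := by ring
    _ ≤ r * (A * (a + 1) ^ (p + 1) + 6 * C * (a + 2) ^ p + (4 + 24 * C * K) * (a + 2) ^ p) := by
        gcongr
    _ = r * (A * (a + 1) ^ (p + 1) + (6 * C + 4 + 24 * C * K) * (a + 2) ^ p) := by ring
    _ ≤ r * (A * (a + 1) ^ (p + 1) + A * (a + 2) ^ p) := by gcongr
    _ = r * (A * ((a + 1) ^ (p + 1) + (a + 2) ^ p)) := by ring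
    _ ≤ _ := by gcongr; exact add_one_pow_succ_add_pow_le a p

/-- With `y = α_{d+2}(m)`, cut the rows twice: into slabs of height `A (y + 1)^(p+1)`, and those
into slabs of height `y`, whose rate is known by induction as `α_{d+3}(m) = 1 + α_{d+3}(y)`. -/
theorem HasAckermannRate.level_succ {A : ℕ} (h₁ : HasAckermannRate ι (s + 2) C p)
    (h₂ : HasAckermannRate ι (s + 1) C p) (hA : 6 * C + 4 + 24 * C * K ≤ A)
    (hK : ∀ y, 1 ≤ y → (alphaHier 2 (A * (y + 1) ^ (p + 1)) + 1) ^ (p + 1) ≤ K * (y + 1))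
    (hd : ∀ m, JointBound ι (s + 3) (d + 2) r m (m * ackermannRate A (p + 1) r (d + 2) m))
    (m : ℕ) : JointBound ι (s + 3) (d + 3) r m (m * ackermannRate A (p + 1) r (d + 3) m) := by
  induction m using Nat.strong_induction_on with
  | _ m ih =>
  rcases Nat.lt_or_ge m 2 with hm | hm
  · exact (JointBound.of_rows_le_one (by omega) (by omega)).mono (Nat.zero_le _)
  have hrec : alphaHier (d + 3) m = 1 + alphaHier (d + 3) (alphaHier (d + 2) m) :=
    alphaHier_add_two (d + 1) hm
  have hlt : alphaHier (d + 2) m < m := alphaHier_lt_self (d + 1) hm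
  have hpos : 1 ≤ alphaHier (d + 2) m := one_le_alphaHier (d + 1) hm
  set y := alphaHier (d + 2) m
  have ht : 1 ≤ A * (y + 1) ^ (p + 1) := Nat.mul_pos (by omega) (by positivity)
  have hKt := hK y hpos
  generalize htdef : A * (y + 1) ^ (p + 1) = t at ht hKt
  have hlow₁ := h₁.jointRate (r := r) (show 2 ≤ d + 3 by omega) (min_le_right t m)
  have hlow₂ := h₂.jointRate (r := r) (show 2 ≤ d + 3 by omega) (min_le_right t m)
  have hinner := h₁.extend_rate h₂ hpos
    ((Nat.pow_le_pow_left (Nat.succ_le_succ (alphaHier_mono 1 (min_le_left t m))) _).trans hKt)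
    (JointRate.of_ackermannRate (by omega) (fun l _ hl => ih l (by omega)) le_rfl) hlow₁ hlow₂
  have htop : ackermannRate A (p + 1) r (d + 2) ((m + t - 1) / t) ≤ t * r := by
    have hmono := alphaHier_mono (d + 1) (ceilDiv_le_self (m := m) ht)
    calc _ ≤ r * (A * (y + 1) ^ (p + 1)) := by unfold ackermannRate; gcongr
      _ = t * r := by rw [htdef, mul_comm]
  refine (JointBound.recurrence ht hinner hlow₁ hlow₂
    ((hd _).mono (Nat.mul_le_mul_left _ htop))).mono (Nat.mul_le_mul_left m ?_)
  simp only [ackermannRate, hrec, show ∀ a, 1 + a + 1 = a + 2 by omega]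
  exact ackermannRate_recurrence_le hA

theorem HasAckermannRate.succ_blocks {A : ℕ} (h₁ : HasAckermannRate ι (s + 2) C p)
    (h₂ : HasAckermannRate ι (s + 1) C p) (hA : 6 * C + 4 + 24 * C * K ≤ A)
    (hK : ∀ y, 1 ≤ y → (alphaHier 2 (A * (y + 1) ^ (p + 1)) + 1) ^ (p + 1) ≤ K * (y + 1)) :
    HasAckermannRate ι (s + 3) A (p + 1) := by
  intro d r m hd _
  induction d, hd using Nat.le_induction generalizing m with
  | base =>
    refine (h₁.level_two h₂ r m).mono
      (Nat.mul_le_mul_left m (ackermannRate_mono (le_trans ?_ hA) le_rfl one_le_two le_rfl))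
    have := Nat.zero_le (24 * C * K)
    omega
  | succ d hd ih =>
    obtain ⟨d, rfl⟩ : ∃ l, d = l + 2 := ⟨d - 2, by omega⟩
    refine h₁.level_succ h₂ hA hK (fun l => ?_) m
    rcases Nat.eq_zero_or_pos l with rfl | hl
    · exact (JointBound.of_rows_le_one hd zero_le_one).mono (Nat.zero_le _)
    · exact ih l hl

theorem exists_hasAckermannRate (s : ℕ) : ∃ C p, ∀ ι : Type*, HasAckermannRate ι (s + 1) C p := by
  induction s using Nat.strong_induction_on with
  | _ s ih =>
    match s, ih with
    | 0, _ => exact ⟨1, 0, fun _ d r m _ hm => JointBound.one_block.mono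
        (by simpa [ackermannRate] using Nat.le_mul_of_pos_left r hm)⟩
    | 1, _ => exact ⟨1, 0, fun _ d r m _ _ => JointBound.two_blocks.mono (by simp [ackermannRate])⟩
    | s + 2, ih =>
      obtain ⟨C₂, p₂, h₂⟩ := ih s (by omega)
      obtain ⟨C₁, p₁, h₁⟩ := ih (s + 1) (by omega)
      obtain ⟨K, hK⟩ := exists_alphaHier_two_pow_le (p₁ + p₂ + 1)
      obtain ⟨e, he⟩ := exists_add_mul_pow_le_two_pow (6 * (C₁ + C₂) + 4) (24 * (C₁ + C₂) * K)
        (p₁ + p₂ + 1)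
      exact ⟨2 ^ e, p₁ + p₂ + 1, fun ι =>
        ((h₁ ι).mono (Nat.le_add_right C₁ C₂) (Nat.le_add_right p₁ p₂)).succ_blocks
          ((h₂ ι).mono (Nat.le_add_left C₂ C₁) (Nat.le_add_left p₂ p₁))
          (by rwa [mul_assoc] at he) (hK e)⟩

end AckermannRate

/-! ## Fat formations -/

section Fat

variable {α κ : Type*} [LinearOrder α] {B D W r s : ℕ}

/-- `M` is a set of markers for the blocks `[B μ, B (μ + 1))` of rows, such that at least `B`
elements of `Q` lie up to any marker, from any marker on, and between any two markers. -/
structure IsSkeleton (B : ℕ) (Q M : Finset ℕ) : Prop where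
  le_card_below : ∀ μ ∈ M, B ≤ {x ∈ Q | x / B ≤ μ}.card
  le_card_above : ∀ μ ∈ M, B ≤ {x ∈ Q | μ ≤ x / B}.card
  le_card_between : ∀ μ ∈ M, ∀ ν ∈ M, μ < ν → B ≤ {x ∈ Q | μ ≤ x / B ∧ x / B ≤ ν}.card

theorem lt_div_of_le_card {Q : Finset ℕ} {μ u : ℕ} (hB : 1 ≤ B) (hu : ∀ x ∈ Q, x < u)
    (hμ : B ≤ {x ∈ Q | μ ≤ x / B}.card) : μ < u / B := by
  have hsub : {x ∈ Q | μ ≤ x / B} ⊆ Finset.Ico (μ * B) u := fun x hx => by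
    rw [Finset.mem_filter, Nat.le_div_iff_mul_le hB] at hx
    exact Finset.mem_Ico.2 ⟨hx.2, hu x hx.1⟩
  have hcard := hμ.trans (Finset.card_le_card hsub)
  rw [Nat.card_Ico] at hcard
  rw [Nat.lt_div_iff_mul_lt hB]
  omega

theorem IsSkeleton.insert {Q M U : Finset ℕ} {u : ℕ} (h : IsSkeleton B Q M) (hB : 1 ≤ B)
    (hQ : B ≤ Q.card) (hU : B ≤ U.card) (hQu : ∀ x ∈ Q, x < u) (huU : ∀ x ∈ U, u ≤ x) :
    IsSkeleton B (Q ∪ U) (insert (u / B) M) := by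
  have hlt : ∀ μ ∈ M, μ < u / B := fun μ hμ => lt_div_of_le_card hB hQu (h.le_card_above μ hμ)
  have hQ_le : ∀ x ∈ Q, x / B ≤ u / B := fun x hx => Nat.div_le_div_right (hQu x hx).le
  refine ⟨fun μ hμ => ?_, fun μ hμ => ?_, fun μ hμ ν hν hμν => ?_⟩
  · rcases Finset.mem_insert.1 hμ with rfl | hμ
    · exact hQ.trans (Finset.card_le_card fun x hx => by simp [hx, hQ_le x hx])
    · exact (h.le_card_below μ hμ).trans (Finset.card_le_card
        (Finset.filter_subset_filter _ Finset.subset_union_left))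
  · rcases Finset.mem_insert.1 hμ with rfl | hμ
    · exact hU.trans (Finset.card_le_card fun x hx => by
        simp [hx, Nat.div_le_div_right (huU x hx)])
    · exact (h.le_card_above μ hμ).trans (Finset.card_le_card
        (Finset.filter_subset_filter _ Finset.subset_union_left))
  · have hμM : μ ∈ M := (Finset.mem_insert.1 hμ).resolve_left fun hμu => by
      rcases Finset.mem_insert.1 hν with hν | hν
      · omega
      · have := hlt ν hν
        omega
    rcases Finset.mem_insert.1 hν with rfl | hν
    · exact (h.le_card_above μ hμM).trans (Finset.card_le_card fun x hx => by
        have := Finset.mem_filter.1 hx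
        simp [this, hQ_le x this.1])
    · exact (h.le_card_between μ hμM ν hν hμν).trans (Finset.card_le_card
        (Finset.filter_subset_filter _ Finset.subset_union_left))

theorem IsSkeleton.mono {Q Q' M : Finset ℕ} (h : IsSkeleton B Q M) (hQ : Q ⊆ Q') :
    IsSkeleton B Q' M where
  le_card_below μ hμ := (h.le_card_below μ hμ).trans
    (Finset.card_le_card (Finset.filter_subset_filter _ hQ))
  le_card_above μ hμ := (h.le_card_above μ hμ).trans
    (Finset.card_le_card (Finset.filter_subset_filter _ hQ))
  le_card_between μ hμ ν hν hμν := (h.le_card_between μ hμ ν hν hμν).trans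
    (Finset.card_le_card (Finset.filter_subset_filter _ hQ))

theorem exists_isSkeleton (hB : 1 ≤ B) {Q : Finset ℕ} (hQ : B * (D + 1) ≤ Q.card) :
    ∃ M, M.card = D ∧ IsSkeleton B Q M := by
  induction D generalizing Q with
  | zero => exact ⟨∅, rfl, by simp, by simp, by simp⟩
  | succ D ih =>
    obtain ⟨L, hLQ, U, hUQ, hL, hU, hLU⟩ := exists_lt_split (show B * (D + 1) + B ≤ Q.card from hQ)
    obtain ⟨M, hM, hLM⟩ := ih hL.ge
    have hUne : U.Nonempty := Finset.card_pos.1 (hU ▸ hB)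
    have hLlt : ∀ x ∈ L, x < U.min' hUne := fun x hx => hLU x hx _ (U.min'_mem hUne)
    refine ⟨insert (U.min' hUne / B) M, ?_, (hLM.insert hB ?_ hU.ge hLlt
      fun x hx => U.min'_le x hx).mono (Finset.union_subset hLQ hUQ)⟩
    · rw [Finset.card_insert_of_notMem, hM]
      exact fun hmem => (lt_div_of_le_card hB hLlt (hLM.le_card_above _ hmem)).false
    · exact hL ▸ Nat.le_mul_of_pos_right B D.succ_pos

theorem HasFormation.fatten {ι : Type*} {S : Finset ι} {Q M : ι → Finset ℕ}
    (h : HasFormation (blockWeight 1 : Fin (s + 2) → ℕ) r S M)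
    (hM : ∀ c ∈ S, IsSkeleton B (Q c) (M c)) :
    HasFormation (fun _ : Fin (s + 2) => B) r S Q := by
  obtain ⟨T, hTS, hr, g, hg, hT⟩ := h
  refine ⟨T, hTS, hr, fun x => g (x / B), fun x y hxy => hg (Nat.div_le_div_right hxy),
    fun c hc i => ?_⟩
  have hmarkers := hT c hc i
  have hskel := hM c (hTS hc)
  rcases eq_or_ne i 0 with rfl | hi₀
  · obtain ⟨μ, hμ⟩ := Finset.card_pos.1 (lt_of_lt_of_le (by simp [blockWeight]) hmarkers)
    obtain ⟨hμM, hgμ⟩ := Finset.mem_filter.1 hμ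
    exact (hskel.le_card_below μ hμM).trans (Finset.card_le_card
      (Finset.monotone_filter_right _ fun x _ hx => Fin.le_zero_iff.1 ((hg hx).trans hgμ.le)))
  rcases eq_or_ne i (Fin.last (s + 1)) with rfl | hi₁
  · obtain ⟨μ, hμ⟩ := Finset.card_pos.1 (lt_of_lt_of_le (by simp [blockWeight]) hmarkers)
    obtain ⟨hμM, hgμ⟩ := Finset.mem_filter.1 hμ
    exact (hskel.le_card_above μ hμM).trans (Finset.card_le_card
      (Finset.monotone_filter_right _ fun x _ hx => Fin.last_le_iff.1 (hgμ.ge.trans (hg hx))))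
  · have hweight : 2 ≤ blockWeight 1 i := by
      rw [Ne, Fin.ext_iff, Fin.val_zero] at hi₀
      rw [Ne, Fin.ext_iff, Fin.val_last] at hi₁
      simp only [blockWeight]
      split_ifs <;> omega
    obtain ⟨μ, hμ, ν, hν, hne⟩ := Finset.one_lt_card.1 (hweight.trans hmarkers)
    wlog hlt : μ < ν generalizing μ ν
    · exact this ν hν μ hμ hne.symm (hne.lt_or_gt.resolve_left hlt)
    obtain ⟨hμM, hgμ⟩ := Finset.mem_filter.1 hμ
    obtain ⟨hνM, hgν⟩ := Finset.mem_filter.1 hν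
    exact (hskel.le_card_between μ hμM ν hνM hlt).trans (Finset.card_le_card
      (Finset.monotone_filter_right _ fun x _ hx =>
        ((hg hx.2).trans hgν.le).antisymm (hgμ.ge.trans (hg hx.1))))

/-- All elements of `P` lie below all elements of `Q`, or the other way round. -/
def Separated (P Q : Finset α) : Prop :=
  (∀ x ∈ P, ∀ y ∈ Q, x < y) ∨ ∀ x ∈ Q, ∀ y ∈ P, x < y

theorem exists_separated_pieces (hW : 1 ≤ W) {N : ℕ} {O : Finset α} (hO : N * W ≤ O.card) :
    ∃ 𝒬 : Finset (Finset α), 𝒬.card = N ∧ (∀ Q ∈ 𝒬, Q ⊆ O ∧ Q.card = W) ∧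
      (𝒬 : Set (Finset α)).Pairwise Separated := by
  induction N generalizing O with
  | zero => exact ⟨∅, rfl, by simp, by simp⟩
  | succ N ih =>
    obtain ⟨L, hLO, U, hUO, hL, hU, hLU⟩ :=
      exists_lt_split (show N * W + W ≤ O.card from (Nat.succ_mul N W).ge.trans hO)
    obtain ⟨𝒬, hcard, h𝒬, hsep⟩ := ih hL.ge
    have hlt : ∀ Q ∈ 𝒬, ∀ x ∈ Q, ∀ y ∈ U, x < y := fun Q hQ x hx => hLU x ((h𝒬 Q hQ).1 hx)
    have hmem : U ∉ 𝒬 := fun hU𝒬 => by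
      obtain ⟨x, hx⟩ := Finset.card_pos.1 (hU ▸ hW)
      exact (hlt U hU𝒬 x hx x hx).false
    refine ⟨insert U 𝒬, by rw [Finset.card_insert_of_notMem hmem, hcard], ?_, ?_⟩
    · intro Q hQ
      rcases Finset.mem_insert.1 hQ with rfl | hQ
      exacts [⟨hUO, hU⟩, ⟨(h𝒬 Q hQ).1.trans hLO, (h𝒬 Q hQ).2⟩]
    · rw [Finset.coe_insert]
      exact hsep.insert fun Q hQ _ => ⟨Or.inr (hlt Q hQ), Or.inl (hlt Q hQ)⟩

theorem HasFormation.of_separated_pieces {w : Fin (s + 2) → ℕ} (hw : ∀ i, 1 ≤ w i)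
    {S : Finset (Σ _ : κ, Finset α)} {J : Finset κ} {O : κ → Finset α}
    (h : HasFormation w r S Sigma.snd) (hJ : ∀ c ∈ S, c.1 ∈ J) (hO : ∀ c ∈ S, c.2 ⊆ O c.1)
    (hsep : ∀ c ∈ S, ∀ c' ∈ S, c.1 = c'.1 → c.2 ≠ c'.2 → Separated c.2 c'.2) :
    HasFormation w r J O := by
  classical
  obtain ⟨T, hTS, hr, g, hg, hT⟩ := h
  have hnot_below : ∀ c ∈ T, ∀ c' ∈ T, ¬ ∀ x ∈ c.2, ∀ y ∈ c'.2, x < y := by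
    intro c hc c' hc' hlt
    obtain ⟨x, hx⟩ := Finset.card_pos.1 ((hw (Fin.last _)).trans (hT c hc (Fin.last _)))
    obtain ⟨y, hy⟩ := Finset.card_pos.1 ((hw 0).trans (hT c' hc' 0))
    rw [Finset.mem_filter] at hx hy
    have := hg (hlt x hx.1 y hy.1).le
    rw [hx.2, hy.2, Fin.last_le_iff] at this
    exact Fin.last_pos.ne this
  have hinj : Set.InjOn Sigma.fst (T : Set (Σ _ : κ, Finset α)) := by
    intro c hc c' hc' heq
    by_contra hne
    have hpiece : c.2 ≠ c'.2 := fun h => hne (Sigma.ext heq (heq_of_eq h))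
    rcases hsep c (hTS hc) c' (hTS hc') heq hpiece with hlt | hlt
    exacts [hnot_below c hc c' hc' hlt, hnot_below c' hc' c hc hlt]
  refine ⟨T.image Sigma.fst, ?_, by rw [Finset.card_image_of_injOn hinj, hr], g, hg, ?_⟩
  · exact Finset.image_subset_iff.2 fun c hc => hJ c (hTS hc)
  · intro j hj i
    obtain ⟨c, hc, rfl⟩ := Finset.mem_image.1 hj
    exact (hT c hc i).trans (Finset.card_le_card
      (Finset.filter_subset_filter _ (hO c (hTS hc))))

/-- Cut every column into pieces of `B (D_{s+2}(d) + 1)` entries. Doubled formations of skeletons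
of these pieces exist as the skeletons live on `n / B + 1` rows only. -/
theorem HasAckermannRate.hasFormation_fat {C p n d : ℕ} {J : Finset κ} {O : κ → Finset ℕ}
    (h : HasAckermannRate (Σ _ : κ, Finset ℕ) (s + 2) C p) (hd : 2 ≤ d) (hB : 1 ≤ B)
    (hO : ∀ j ∈ J, ∀ x ∈ O j, x < n)
    (hbig : (n / B + 1) * ackermannRate C p r d (n / B + 1) <
      ∑ j ∈ J, (O j).card / (B * (Dfun (s + 2) d + 1))) :
    HasFormation (fun _ : Fin (s + 2) => B) r J O := by
  generalize hW : B * (Dfun (s + 2) d + 1) = W at hbig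
  have hWpos : 1 ≤ W := hW ▸ Nat.mul_pos hB (Nat.succ_pos _)
  choose 𝒬 h𝒬card h𝒬 hsep using
    fun j => exists_separated_pieces hWpos (Nat.div_mul_le_self (O j).card W)
  have hskel (Q : Finset ℕ) (hQ : Q.card = W) :=
    exists_isSkeleton hB (D := Dfun (s + 2) d) (hW.trans hQ.symm).le
  choose! M hMcard hM using hskel
  have hpiece : ∀ c ∈ J.sigma 𝒬, c.2 ⊆ O c.1 ∧ c.2.card = W :=
    fun c hc => h𝒬 c.1 c.2 (Finset.mem_sigma.1 hc).2
  have hdoubled : HasFormation (blockWeight 1 : Fin (s + 2) → ℕ) r (J.sigma 𝒬)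
      fun c => M c.2 := by
    refine (h d r (n / B + 1) hd (Nat.succ_pos _)).2.hasFormation (a := 0) ?_ ?_
      fun c hc => (hMcard c.2 (hpiece c hc).2).ge
    · simpa only [Finset.card_sigma, h𝒬card] using hbig
    · intro c hc μ hμ
      have hpos := (hM c.2 (hpiece c hc).2).le_card_above μ hμ
      obtain ⟨x, hx⟩ := Finset.card_pos.1 (lt_of_lt_of_le hB hpos)
      obtain ⟨hxc, hμx⟩ := Finset.mem_filter.1 hx
      have hxn := hO c.1 (Finset.mem_sigma.1 hc).1 x ((hpiece c hc).1 hxc)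
      have : x / B ≤ n / B := Nat.div_le_div_right hxn.le
      exact Finset.mem_Ico.2 ⟨Nat.zero_le μ, by omega⟩
  refine (hdoubled.fatten fun c hc => hM c.2 (hpiece c hc).2).of_separated_pieces
    (fun _ => hB) (fun c hc => (Finset.mem_sigma.1 hc).1) (fun c hc => (hpiece c hc).1) ?_
  rintro ⟨j, Q⟩ hc ⟨j', Q'⟩ hc' rfl hne
  exact hsep j (Finset.mem_sigma.1 hc).2 (Finset.mem_sigma.1 hc').2 hne

end Fat

/-! ## Selecting a subfamily -/

section Selection

variable {Ω κ β : Type*} [DecidableEq β] {k n : ℕ} {f : Ω → κ → β} {P F : Finset Ω} {J : Finset κ}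

/-- The members of `P` whose colours on the columns `x` form the pattern `σ`. -/
def patternClass {t : ℕ} (f : Ω → κ → β) (P : Finset Ω) (x : Fin t → κ) (σ : Fin t → β) :
    Finset Ω :=
  {π ∈ P | ∀ l, f π (x l) = σ l}

/-- Column `j` does not attain every colour on the family `P`. -/
def MissesColor (f : Ω → κ → β) (P : Finset Ω) (j : κ) : Prop :=
  ∃ i, ∀ π ∈ P, f π j ≠ i

/-- The columns of `J` on which some colour is attained by less than the proportion `1 / (2 |J|)`
of `F`. -/
noncomputable def rareColumns (f : Ω → κ → β) (J : Finset κ) (F : Finset Ω) : Finset κ :=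
  open Classical in {j ∈ J | ∃ i, {π ∈ F | f π j = i}.card * (2 * J.card) < F.card}

theorem rareColumns_subset : rareColumns f J F ⊆ J := by
  simp [rareColumns]

theorem exists_subset_missesColor_rareColumns [Nonempty β] (f : Ω → κ → β) (J : Finset κ)
    (F : Finset Ω) :
    ∃ F' ⊆ F, F.card ≤ 2 * F'.card ∧ ∀ j ∈ rareColumns f J F, MissesColor f F' j := by
  classical
  have hrare : ∀ j ∈ rareColumns f J F, ∃ i, {π ∈ F | f π j = i}.card * (2 * J.card) < F.card :=
    fun j hj => (Finset.mem_filter.1 hj).2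
  generalize hX : rareColumns f J F = X at hrare
  have hXJ : X ⊆ J := hX ▸ rareColumns_subset
  choose! i hi using hrare
  refine ⟨{π ∈ F | ∀ j ∈ X, f π j ≠ i j}, Finset.filter_subset _ _, ?_,
    fun j hj => ⟨i j, fun π hπ => (Finset.mem_filter.1 hπ).2 j hj⟩⟩
  have hcompl := Finset.card_filter_add_card_filter_not (s := F) fun π => ∀ j ∈ X, f π j ≠ i j
  have hunion : {π ∈ F | ¬ ∀ j ∈ X, f π j ≠ i j}.card ≤ ∑ j ∈ X, {π ∈ F | f π j = i j}.card := by
    refine (Finset.card_le_card fun π hπ => ?_).trans Finset.card_biUnion_le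
    simpa [and_left_comm] using hπ
  rcases J.eq_empty_or_nonempty with rfl | hJ
  · simpa [Finset.subset_empty.1 hXJ] using Nat.le_mul_of_pos_left F.card two_pos
  have hsum : J.card * (2 * ∑ j ∈ X, {π ∈ F | f π j = i j}.card) ≤ J.card * F.card :=
    calc _ = ∑ j ∈ X, {π ∈ F | f π j = i j}.card * (2 * J.card) := by
          rw [← Finset.sum_mul]; ring
      _ ≤ X.card * F.card := Finset.sum_le_card_nsmul _ _ _ fun j hj => (hi j hj).le
      _ ≤ J.card * F.card := Nat.mul_le_mul_right _ (Finset.card_le_card hXJ)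
  have := Nat.le_of_mul_le_mul_left hsum hJ.card_pos
  omega

theorem exists_mem_forall_notMem_of_mul_card_lt {τ : Type*} [Fintype τ] [Nonempty τ] {N : ℕ}
    {X : τ → Finset κ} (hτ : Fintype.card τ ≤ N) (hX : ∀ σ, N * (X σ).card < J.card) :
    ∃ j ∈ J, ∀ σ, j ∉ X σ := by
  classical
  have hcard : (Finset.univ.biUnion X).card < J.card := by
    refine Finset.card_biUnion_le.trans_lt (lt_of_mul_lt_mul_left (a := N) ?_ (Nat.zero_le N))
    calc N * ∑ σ, (X σ).card = ∑ σ, N * (X σ).card := Finset.mul_sum _ _ _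
      _ < ∑ _σ : τ, J.card := Finset.sum_lt_sum_of_nonempty Finset.univ_nonempty fun σ _ => hX σ
      _ ≤ N * J.card := by simpa using Nat.mul_le_mul_right J.card hτ
  obtain ⟨j, hjJ, hj⟩ := Finset.exists_mem_notMem_of_card_lt_card hcard
  exact ⟨j, hjJ, by simpa using hj⟩

theorem card_patternClass_le_snoc {t : ℕ} {x : Fin t → κ} {j : κ} (σ : Fin (t + 1) → β)
    (hjJ : j ∈ J) (hj : j ∉ rareColumns f J (patternClass f P x (Fin.init σ))) :
    (patternClass f P x (Fin.init σ)).card ≤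
      (patternClass f P (Fin.snoc x j) σ).card * (2 * J.card) := by
  have hcommon : (patternClass f P x (Fin.init σ)).card ≤
      {π ∈ patternClass f P x (Fin.init σ) | f π j = σ (Fin.last t)}.card * (2 * J.card) := by
    by_contra! hlt
    exact hj (by simpa [rareColumns] using ⟨hjJ, σ (Fin.last t), hlt⟩)
  refine hcommon.trans (Nat.mul_le_mul_right _ (Finset.card_le_card fun π hπ => ?_))
  simp only [patternClass, Finset.mem_filter] at hπ ⊢
  exact ⟨hπ.1.1, Fin.lastCases (by simpa using hπ.2) fun l => by simpa [Fin.init] using hπ.1.2 l⟩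

/-- Columns are added to `x` one at a time, as long as one of them is not rare for any of the
pattern classes. -/
theorem exists_missesColor_or_card_le_patternClass [Fintype β] [Nonempty β] (f : Ω → κ → β)
    (P : Finset Ω) (hJ : J.Nonempty) {t : ℕ} (ht : t ≤ k + 1) :
    (∃ P' ⊆ P, P.card ≤ P'.card * (2 * (2 * J.card) ^ k) ∧
      ∃ J' ⊆ J, J.card ≤ Fintype.card β ^ k * J'.card ∧ ∀ j ∈ J', MissesColor f P' j) ∨
    ∃ x : Fin t → κ, ∀ σ, P.card ≤ (patternClass f P x σ).card * (2 * J.card) ^ t := by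
  classical
  induction t with
  | zero => exact Or.inr ⟨Fin.elim0, fun σ => by simp [patternClass]⟩
  | succ t ih =>
    rcases ih (by omega) with hdone | ⟨x, hx⟩
    · exact Or.inl hdone
    by_cases hrare : ∃ σ, J.card ≤
        Fintype.card β ^ k * (rareColumns f J (patternClass f P x σ)).card
    · obtain ⟨σ, hσ⟩ := hrare
      obtain ⟨P', hP', hcard, hmiss⟩ :=
        exists_subset_missesColor_rareColumns f J (patternClass f P x σ)
      refine Or.inl ⟨P', hP'.trans (Finset.filter_subset _ _), ?_, _, rareColumns_subset, hσ,
        hmiss⟩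
      calc P.card ≤ (patternClass f P x σ).card * (2 * J.card) ^ t := hx σ
        _ ≤ 2 * P'.card * (2 * J.card) ^ k := by
          have := hJ.card_pos
          gcongr <;> omega
        _ = P'.card * (2 * (2 * J.card) ^ k) := by ring
    · push Not at hrare
      have hpatterns : Fintype.card (Fin t → β) ≤ Fintype.card β ^ k := by
        rw [Fintype.card_fun, Fintype.card_fin]
        exact Nat.pow_le_pow_right Fintype.card_pos (by omega)
      obtain ⟨j, hjJ, hj⟩ := exists_mem_forall_notMem_of_mul_card_lt hpatterns hrare
      refine Or.inr ⟨Fin.snoc x j, fun σ => (hx (Fin.init σ)).trans ?_⟩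
      rw [pow_succ', ← mul_assoc]
      exact Nat.mul_le_mul_right _ (card_patternClass_le_snoc σ hjJ (hj _))

theorem Shatters.of_patterns {P : Finset (Equiv.Perm (Fin n))} {g : Fin n → Fin k}
    (hg : Monotone g) {x : Fin k → Fin n}
    (hx : ∀ σ : Equiv.Perm (Fin k), ∃ π ∈ P, ∀ l, g (π (x l)) = σ l) :
    Shatters P (x ∘ Tuple.sort x) := by
  have hinj : Function.Injective x := by
    intro a b hab
    obtain ⟨π, -, hπ⟩ := hx 1
    simpa [hab, hπ b, eq_comm] using hπ a
  refine ⟨(Tuple.monotone_sort x).strictMono_of_injective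
    (hinj.comp (Tuple.sort x).injective), fun σ => ?_⟩
  obtain ⟨π, hπP, hπ⟩ := hx ((Tuple.sort x).symm.trans σ)
  have hsorted (i : Fin k) : g (π ((x ∘ Tuple.sort x) i)) = σ i := by
    simpa using hπ (Tuple.sort x i)
  refine ⟨π, hπP, fun i j => ⟨fun hij => hg.reflect_lt (by rwa [hsorted, hsorted]), fun hij => ?_⟩⟩
  have hle := hg hij.le
  rw [hsorted, hsorted] at hle
  exact hle.lt_of_ne fun heq => hij.ne (by rw [σ.injective heq])

theorem VCDimLE.exists_missesColor {P : Finset (Equiv.Perm (Fin n))} {J : Finset (Fin n)}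
    {g : Fin n → Fin (k + 1)} (hVC : VCDimLE n k P) (hP : P.Nonempty) (hg : Monotone g)
    (hJ : J.Nonempty) :
    ∃ P' ⊆ P, P.card ≤ P'.card * (2 * (2 * J.card) ^ k) ∧ ∃ J' ⊆ J,
      J.card ≤ (k + 1) ^ k * J'.card ∧ ∀ j ∈ J', MissesColor (fun π i => g (π i)) P' j := by
  have hselect := exists_missesColor_or_card_le_patternClass
    (fun (π : Equiv.Perm (Fin n)) i => g (π i)) P hJ (le_refl (k + 1))
  rw [Fintype.card_fin] at hselect
  refine hselect.resolve_right ?_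
  rintro ⟨x, hx⟩
  refine hVC _ (Shatters.of_patterns hg (x := x) fun σ => ?_)
  have hpos := Nat.pos_of_mul_pos_right (hP.card_pos.trans_le (hx σ))
  obtain ⟨π, hπ⟩ := Finset.card_pos.1 hpos
  exact ⟨π, (Finset.mem_filter.1 hπ).1, (Finset.mem_filter.1 hπ).2⟩

end Selection

/-! ## Unions of permutation matrices -/

section Columns

variable {n k : ℕ} {P P' : Finset (Equiv.Perm (Fin n))}

/-- The rows of the `1`-entries in column `j` of the union of the permutation matrices of `P`. -/
def columnRows (P : Finset (Equiv.Perm (Fin n))) (j : Fin n) : Finset (Fin n) :=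
  P.image fun π => π j

theorem permOnes_eq_sum_card_columnRows (P : Finset (Equiv.Perm (Fin n))) :
    permOnes P = ∑ j, (columnRows P j).card := by
  have hentries : (Finset.univ.sigma (columnRows P)).card = permOnes P := by
    rw [permOnes, ← Nat.card_eq_finsetCard]
    exact Nat.card_congr
      ⟨fun q => ⟨(q.1.2, q.1.1), Finset.mem_image.1 (Finset.mem_sigma.1 q.2).2⟩,
        fun q => ⟨⟨q.1.2, q.1.1⟩, Finset.mem_sigma.2 ⟨Finset.mem_univ _, Finset.mem_image.2 q.2⟩⟩,
        fun _ => rfl, fun _ => rfl⟩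
  rw [← hentries, Finset.card_sigma]

theorem permOnes_le (P : Finset (Equiv.Perm (Fin n))) : permOnes P ≤ n * n := by
  rw [permOnes_eq_sum_card_columnRows]
  simpa using Finset.sum_le_sum fun j (_ : j ∈ Finset.univ) => (columnRows P j).card_le_univ

theorem permOnes_add_le {J : Finset (Fin n)} {B : ℕ} (hP : P' ⊆ P)
    (hJ : ∀ j ∈ J, (columnRows P' j).card + B ≤ (columnRows P j).card) :
    permOnes P' + J.card * B ≤ permOnes P := by
  rw [permOnes_eq_sum_card_columnRows, permOnes_eq_sum_card_columnRows,
    ← Finset.sum_add_sum_compl J, ← Finset.sum_add_sum_compl J]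
  have hdrop := Finset.sum_le_sum hJ
  rw [Finset.sum_add_distrib, Finset.sum_const, smul_eq_mul] at hdrop
  have hmono : ∑ j ∈ Jᶜ, (columnRows P' j).card ≤ ∑ j ∈ Jᶜ, (columnRows P j).card :=
    Finset.sum_le_sum fun j _ => Finset.card_le_card (Finset.image_subset_image hP)
  omega

theorem card_columnRows_add_le {β : Type*} [DecidableEq β] {g : Fin n → β} {i : β} {j : Fin n}
    (hP : P' ⊆ P) (hmiss : ∀ π ∈ P', g (π j) ≠ i) :
    (columnRows P' j).card + {x ∈ columnRows P j | g x = i}.card ≤ (columnRows P j).card := by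
  have hdisj : Disjoint (columnRows P' j) {x ∈ columnRows P j | g x = i} := by
    refine Finset.disjoint_left.2 fun x hx hxi => ?_
    obtain ⟨π, hπ, rfl⟩ := Finset.mem_image.1 hx
    exact hmiss π hπ (Finset.mem_filter.1 hxi).2
  rw [← Finset.card_union_of_disjoint hdisj]
  exact Finset.card_le_card
    (Finset.union_subset (Finset.image_subset_image hP) (Finset.filter_subset _ _))

theorem HasFormation.of_map {ι α β : Type*} [LinearOrder α] [LinearOrder β] {s r : ℕ}
    {w : Fin s → ℕ} {S : Finset ι} {A : ι → Finset α} (e : α ↪o β)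
    (h : HasFormation w r S fun c => (A c).map e.toEmbedding) : HasFormation w r S A := by
  obtain ⟨T, hTS, hr, g, hg, hT⟩ := h
  refine ⟨T, hTS, hr, g ∘ e, hg.comp e.monotone, fun c hc i => ?_⟩
  simpa [Finset.filter_map, Function.comp_def] using hT c hc i

theorem sum_le_mul_sum_div_add_card {ι : Type*} {W : ℕ} (hW : 0 < W) (J : Finset ι) (a : ι → ℕ) :
    ∑ j ∈ J, a j ≤ W * (∑ j ∈ J, a j / W + J.card) := by
  calc ∑ j ∈ J, a j ≤ ∑ j ∈ J, W * (a j / W + 1) :=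
        Finset.sum_le_sum fun j _ => (Nat.lt_mul_div_succ (a j) hW).le
    _ = W * (∑ j ∈ J, a j / W + J.card) := by
        rw [← Finset.mul_sum, Finset.sum_add_distrib, Finset.card_eq_sum_ones]

theorem mul_ackermannRate_invAck_le {B : ℕ} (C p K : ℕ) (hn : 7 ≤ n) (hB : 2 ≤ B) (hBn : B ≤ n) :
    (n / B + 1) * ackermannRate C p (K * B) (invAck n) (n / B + 1) ≤
      2 * n * (K * C * 4 ^ p) := by
  have hlevel : alphaHier (invAck n) (n / B + 1) + 1 ≤ 4 := by
    have hrows : n / B + 1 ≤ n := by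
      have := Nat.div_le_div_left hB two_pos (a := n)
      omega
    obtain ⟨d, hd⟩ := Nat.exists_eq_add_of_le' (one_le_two.trans (two_le_invAck hn))
    have hmono := alphaHier_mono d hrows
    rw [← hd] at hmono
    exact Nat.succ_le_succ (hmono.trans (alphaHier_invAck_le_three n))
  have hrowsB : (n / B + 1) * B ≤ 2 * n := by
    have := Nat.div_mul_le_self n B
    rw [Nat.add_mul]
    omega
  calc _ ≤ (n / B + 1) * (K * B * (C * 4 ^ p)) := by unfold ackermannRate; gcongr
    _ = (n / B + 1) * B * (K * C * 4 ^ p) := by ring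
    _ ≤ _ := by gcongr

theorem mul_le_two_mul_sum_div_add {B G b : ℕ} (hB : 0 < B) (a : Fin n → ℕ)
    (ha : B * G * (b + 2) * n ≤ 2 * ∑ j, a j) :
    G * n ≤ 2 * (∑ j, a j / (B * (b + 1)) + n) := by
  generalize hW : B * (b + 1) = W
  have hWpos : 0 < W := hW ▸ Nat.mul_pos hB b.succ_pos
  refine Nat.le_of_mul_le_mul_left ?_ hWpos
  calc W * (G * n) = B * G * (b + 1) * n := by rw [← hW]; ring
    _ ≤ B * G * (b + 2) * n := by gcongr; omega
    _ ≤ 2 * ∑ j, a j := ha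
    _ ≤ 2 * (W * (∑ j, a j / W + n)) := by
        simpa using sum_le_mul_sum_div_add_card hWpos Finset.univ a
    _ = _ := by ring

theorem HasAckermannRate.hasFormation_columnRows {C p B G K s : ℕ}
    (h : HasAckermannRate (Σ _ : Fin n, Finset ℕ) (s + 2) C p) (hn : 7 ≤ n) (hB : 2 ≤ B)
    (hBn : B ≤ n) (hG : 4 * (K * C * 4 ^ p) + 3 ≤ G)
    (hP : B * G * (betaFun (s + 2) n + 2) * n ≤ 2 * permOnes P) :
    HasFormation (fun _ : Fin (s + 2) => B) (K * B) Finset.univ (columnRows P) := by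
  refine HasFormation.of_map (Fin.valOrderEmb n) (h.hasFormation_fat (d := invAck n)
    (two_le_invAck hn) (one_le_two.trans hB) (n := n) (by simp [columnRows]) ?_)
  simp only [Finset.card_map]
  have hfew := mul_ackermannRate_invAck_le C p K hn hB hBn
  rw [permOnes_eq_sum_card_columnRows, betaFun] at hP
  have hmany := mul_le_two_mul_sum_div_add (zero_lt_two.trans_le hB) _ hP
  have hGn : 2 * (2 * n * (K * C * 4 ^ p)) + 3 * n ≤ G * n :=
    calc _ = (4 * (K * C * 4 ^ p) + 3) * n := by ring
      _ ≤ G * n := Nat.mul_le_mul_right n hG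
  omega

/-- The subfamily is selected with respect to the columns of a fat formation, at least `B` of which
then lose the `B` rows of some interval. -/
theorem HasAckermannRate.exists_subfamily {C p B G : ℕ}
    (h : HasAckermannRate (Σ _ : Fin n, Finset ℕ) (k + 2) C p) (hVC : VCDimLE n (k + 1) P)
    (hne : P.Nonempty) (hn : 7 ≤ n) (hB : 2 ≤ B) (hBn : B ≤ n)
    (hG : 4 * ((k + 2) ^ (k + 1) * C * 4 ^ p) + 3 ≤ G)
    (hP : B * G * (betaFun (k + 2) n + 2) * n ≤ 2 * permOnes P) :
    ∃ P' ⊆ P, P.card ≤ P'.card * (2 * (2 * ((k + 2) ^ (k + 1) * B)) ^ (k + 1)) ∧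
      permOnes P' + B * B ≤ permOnes P := by
  obtain ⟨J, -, hJ, g, hg, hfat⟩ := h.hasFormation_columnRows hn hB hBn hG hP
  have hJpos : J.Nonempty := Finset.card_pos.1 (hJ ▸ Nat.mul_pos (by positivity) (by omega))
  obtain ⟨P', hP', hcard, J', hJ'J, hJ', hmiss⟩ := hVC.exists_missesColor hne hg hJpos
  rw [hJ] at hcard hJ'
  have hBJ' : B ≤ J'.card := Nat.le_of_mul_le_mul_left hJ' (by positivity)
  refine ⟨P', hP', hcard, (Nat.add_le_add_left (Nat.mul_le_mul_right B hBJ') _).trans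
    (permOnes_add_le hP' fun j hj => ?_)⟩
  obtain ⟨i, hi⟩ := hmiss j hj
  exact (Nat.add_le_add_left (hfat j (hJ'J hj) i) _).trans (card_columnRows_add_le hP' hi)

end Columns

section Averages

variable {n k : ℕ} {P P' : Finset (Equiv.Perm (Fin n))} {γ v : ℝ}

theorem vPerm_le (P : Finset (Equiv.Perm (Fin n))) : vPerm P ≤ n :=
  div_le_of_le_mul₀ n.cast_nonneg n.cast_nonneg (by exact_mod_cast permOnes_le P)

theorem vPerm_mul (hn : n ≠ 0) (P : Finset (Equiv.Perm (Fin n))) : vPerm P * n = permOnes P :=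
  div_mul_cancel₀ _ (Nat.cast_ne_zero.2 hn)

theorem vPerm_le_sub_sq_div {B : ℕ} (hv : 0 ≤ vPerm P / γ) (hB : vPerm P / γ ≤ B)
    (hdrop : permOnes P' + B * B ≤ permOnes P) :
    vPerm P' ≤ vPerm P - vPerm P ^ 2 / (γ ^ 2 * n) := by
  have hsq : (vPerm P / γ) ^ 2 ≤ permOnes P - permOnes P' := by
    have : (permOnes P' + B * B : ℝ) ≤ permOnes P := by exact_mod_cast hdrop
    nlinarith
  calc vPerm P' ≤ (permOnes P - (vPerm P / γ) ^ 2) / n := by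
        rw [vPerm]; gcongr; linarith
    _ = vPerm P - vPerm P ^ 2 / (γ ^ 2 * n) := by
        rw [sub_div, div_pow, div_div, ← vPerm]

theorem exists_nat_div_le_mul_le (hγ : 0 < γ) (hv : 2 * γ ≤ v) :
    ∃ B : ℕ, 2 ≤ B ∧ v / γ ≤ B ∧ B * γ ≤ 2 * v := by
  have htwo : 2 ≤ v / γ := (le_div_iff₀ hγ).2 hv
  have hceil := Nat.ceil_lt_add_one (zero_le_two.trans htwo)
  refine ⟨⌈v / γ⌉₊, by exact_mod_cast htwo.trans (Nat.le_ceil _), Nat.le_ceil _, ?_⟩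
  calc ⌈v / γ⌉₊ * γ ≤ 2 * (v / γ) * γ := by gcongr; linarith
    _ = 2 * v := by field_simp

theorem div_two_mul_pow_le {x y c : ℝ} (hv : 0 < v) (hc : 0 ≤ c) (hcv : c ≤ v ^ 2) (hy : 0 ≤ y)
    (hxy : x ≤ y * (2 * c ^ k)) : x / (2 * v ^ (2 * k)) ≤ y := by
  rw [div_le_iff₀ (by positivity), pow_mul]
  exact hxy.trans (by gcongr)

theorem HasAckermannRate.exists_subfamily_vPerm_le {C p G : ℕ}
    (h : HasAckermannRate (Σ _ : Fin n, Finset ℕ) (k + 2) C p) (hVC : VCDimLE n (k + 1) P)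
    (hne : P.Nonempty) (hn : 1 ≤ n)
    (hG : 4 * ((k + 2) ^ (k + 1) * C * 4 ^ p) + 4 * (k + 2) ^ (k + 1) + 8 ≤ G)
    (hγ : γ = G * (betaFun (k + 2) n + 2)) (hv : 2 * γ ≤ vPerm P) :
    ∃ P' ⊆ P, vPerm P' ≤ vPerm P - vPerm P ^ 2 / (γ ^ 2 * n) ∧
      P.card / (2 * vPerm P ^ (2 * (k + 1))) ≤ (P'.card : ℝ) := by
  have hGγ : (G : ℝ) ≤ γ := by
    have : (0 : ℝ) ≤ betaFun (k + 2) n := Nat.cast_nonneg _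
    rw [hγ]
    exact le_mul_of_one_le_right G.cast_nonneg (by linarith)
  have hlarge : (4 * (k + 2) ^ (k + 1) + 8 : ℝ) ≤ γ := by
    refine le_trans ?_ hGγ
    exact_mod_cast (Nat.le_add_left _ _).trans ((Nat.add_assoc _ _ _).ge.trans hG)
  have hKpos : (0 : ℝ) < (k + 2) ^ (k + 1) := by positivity
  have hvn := vPerm_le P
  obtain ⟨B, hB, hvB, hBγ⟩ := exists_nat_div_le_mul_le (show 0 < γ by linarith) hv
  have hn7 : 7 ≤ n := by
    have : (7 : ℝ) ≤ n := by linarith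
    exact_mod_cast this
  have hBn : B ≤ n := by
    have : (B : ℝ) ≤ n := by nlinarith
    exact_mod_cast this
  have hones : B * G * (betaFun (k + 2) n + 2) * n ≤ 2 * permOnes P := by
    have : (B * G * (betaFun (k + 2) n + 2) * n : ℝ) ≤ 2 * permOnes P :=
      calc (B * G * (betaFun (k + 2) n + 2) * n : ℝ) = B * γ * n := by rw [hγ]; ring
        _ ≤ 2 * vPerm P * n := by gcongr
        _ = 2 * permOnes P := by rw [mul_assoc, vPerm_mul (by omega)]
    exact_mod_cast this
  obtain ⟨P', hP', hcard, hdrop⟩ := h.exists_subfamily hVC hne hn7 hB hBn (by omega) hones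
  refine ⟨P', hP', vPerm_le_sub_sq_div (div_nonneg (by linarith) (by linarith)) hvB hdrop,
    div_two_mul_pow_le (c := 2 * ((k + 2) ^ (k + 1) * B)) (by linarith) (by positivity) ?_
      P'.card.cast_nonneg (by exact_mod_cast hcard)⟩
  have : 4 * (k + 2) ^ (k + 1) * (B : ℝ) ≤ γ * B := by gcongr; linarith
  nlinarith

end Averages

/-- For every `k ≥ 1` there is a constant `γ₀ > 0` such that, setting
`γ_k(n) = γ₀·(β_{k+1}(n)+2)`, for every `n ≥ 1` and every nonempty family `P` of
`n`-permutations with VC-dimension at most `k` and `v(P) ≥ 2·γ_k(n)`, there is a subfamily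
`P′ ⊆ P` with `v(P′) ≤ v(P) − v(P)²/(γ_k(n)²·n)` and `|P′| ≥ |P|/(2·v(P)^(2k))`. -/
theorem iteration_lemma :
    ∀ k : ℕ, 1 ≤ k → ∃ γ₀ : ℝ, 0 < γ₀ ∧
      ∀ n : ℕ, 1 ≤ n → ∀ P : Finset (Equiv.Perm (Fin n)), P.Nonempty → VCDimLE n k P →
        2 * (γ₀ * ((betaFun (k + 1) n : ℝ) + 2)) ≤ vPerm P →
          ∃ P' : Finset (Equiv.Perm (Fin n)), P' ⊆ P ∧
            vPerm P' ≤ vPerm P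
              - (vPerm P) ^ 2 / ((γ₀ * ((betaFun (k + 1) n : ℝ) + 2)) ^ 2 * (n : ℝ)) ∧
            (P.card : ℝ) / (2 * (vPerm P) ^ (2 * k)) ≤ (P'.card : ℝ) := by
  intro k hk
  obtain ⟨k, rfl⟩ : ∃ l, k = l + 1 := ⟨k - 1, by omega⟩
  obtain ⟨C, p, hrate⟩ := exists_hasAckermannRate (k + 1)
  refine ⟨(4 * ((k + 2) ^ (k + 1) * C * 4 ^ p) + 4 * (k + 2) ^ (k + 1) + 8 : ℕ), by positivity,
    fun n hn P hP hVC hv => ?_⟩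
  exact (hrate (Σ _ : Fin n, Finset ℕ)).exists_subfamily_vPerm_le hVC hP hn le_rfl rfl hv
end

section
/- There exists a constant C such that for every integer n ≥ 1 there exists an n×n (0,1)-matrix that avoids DS₄ and has at least 2·α(n) − C 1-entries in every column. -/
/-!
A *block* is a `DS₄`-avoiding matrix whose columns have their first `1`-entries in few rows, each
shared by exactly `p` columns, and likewise their last `1`-entries in few rows, each shared by
exactly `q` columns. A block of width `w + 2` with parameters `p + 1` and `q + 1` is glued from two
blocks `C₁` and `C₂` of width `w + 2`, with parameters `p`, `q + 1` and `p + 1`, `q`, and a block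
`C₀` of width `w`: insert a copy of `C₁` before each first row of `C₀` and a copy of `C₂` after each
last row. The parameters of `C₀` are chosen such that the columns sharing a first row are as many as
the first rows of `C₁`; from left to right they receive a new first `1`-entry in these rows, from
top to bottom, and similarly for last `1`-entries and `C₂`. So every column of `C₀` gains two
`1`-entries, and two of them can only form a new `DS₄` if they share a first or a last row. This is
excluded by a stronger property of such pairs that gluing preserves: apart from the common row, no
`1`-entry of the left column lies strictly below one of the right column.

The numbers of first and last rows obey the recursion of the Ackermann function, so a block of width
`2 * d + 2` fits into an `n × n` matrix for some `d = α(n) - O(1)`, and its copies along the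
diagonal provide all columns.
-/

namespace DSFour

/-! ### Pairs of columns -/

section AvoidsDS4

variable {R R' : Type*} [LinearOrder R] [LinearOrder R']

/-- The two-column matrix whose left and right columns have their `1`-entries in the rows `A` and
`B` avoids `DS₄`. -/
def AvoidsDS4 (A B : Finset R) : Prop :=
  ∀ s₁ ∈ B, ∀ r₁ ∈ A, ∀ s₂ ∈ B, ∀ r₂ ∈ A, s₁ < r₁ → r₁ < s₂ → r₂ ≤ s₂

variable {A B : Finset R} {m : R}

lemma AvoidsDS4.map (h : AvoidsDS4 A B) (e : R ↪o R') :
    AvoidsDS4 (A.map e.toEmbedding) (B.map e.toEmbedding) := by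
  simpa [AvoidsDS4] using h

lemma AvoidsDS4.of_mapsTo (h : AvoidsDS4 A B) {A' B' : Finset R'} {g : R' → R}
    (hA : ∀ r ∈ A', g r ∈ A) (hB : ∀ s ∈ B', g s ∈ B)
    (hrs : ∀ r ∈ A', ∀ s ∈ B', r < s → g r < g s) (hsr : ∀ r ∈ A', ∀ s ∈ B', s < r → g s < g r) :
    AvoidsDS4 A' B' := by
  intro s₁ hs₁ r₁ hr₁ s₂ hs₂ r₂ hr₂ h₁ h₂
  by_contra! h₃
  exact (h _ (hB s₁ hs₁) _ (hA r₁ hr₁) _ (hB s₂ hs₂) _ (hA r₂ hr₂) (hsr r₁ hr₁ s₁ hs₁ h₁)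
    (hrs r₁ hr₁ s₂ hs₂ h₂)).not_gt (hsr r₂ hr₂ s₂ hs₂ h₃)

lemma AvoidsDS4.of_forall_lt (h : ∀ r ∈ A, ∀ s ∈ B, r < s) : AvoidsDS4 A B :=
  fun _ _ _ _ s₂ hs₂ r₂ hr₂ _ _ => (h r₂ hr₂ s₂ hs₂).le

lemma AvoidsDS4.of_forall_gt (h : ∀ r ∈ A, ∀ s ∈ B, s < r) : AvoidsDS4 A B :=
  fun _ _ r₁ hr₁ s₂ hs₂ _ _ _ hrs => absurd (h r₁ hr₁ s₂ hs₂) hrs.not_gt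

lemma AvoidsDS4.of_lowerBound (hm : ∀ s ∈ B, m ≤ s)
    (h : ∀ r ∈ A, ∀ s ∈ B, m < r → r < s → ∀ r' ∈ A, r' ≤ s) : AvoidsDS4 A B :=
  fun s₁ hs₁ r₁ hr₁ s₂ hs₂ r₂ hr₂ hsr hrs =>
    h r₁ hr₁ s₂ hs₂ ((hm s₁ hs₁).trans_lt hsr) hrs r₂ hr₂

lemma AvoidsDS4.of_upperBound (hm : ∀ r ∈ A, r ≤ m)
    (h : ∀ r ∈ A, ∀ s ∈ B, r < s → s < m → ∀ s' ∈ B, r ≤ s') : AvoidsDS4 A B := by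
  intro s₁ hs₁ r₁ hr₁ s₂ hs₂ r₂ hr₂ hsr hrs
  by_contra! hsr'
  exact (h r₁ hr₁ s₂ hs₂ hrs (hsr'.trans_le (hm r₂ hr₂)) s₁ hs₁).not_gt hsr

end AvoidsDS4

/-! ### Blocks -/

/-- A block of the construction: a matrix with `w` `1`-entries in each column that avoids `DS₄`,
whose rows and columns are abstract finite linear orders. The first `1`-entries of the columns lie
in `f` designated rows, each of which is the first row of exactly `p` columns; `firstRank` numbers
those columns from left to right. Symmetrically for `l`, `q` and last `1`-entries. The parameters
`f` and `l` are type indices so that gluing can match them with the ranks of another block. -/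
structure Block (w p q f l : ℕ) where
  Row : Type
  Col : Type
  [linearOrderRow : LinearOrder Row]
  [linearOrderCol : LinearOrder Col]
  [fintypeRow : Fintype Row]
  [fintypeCol : Fintype Col]
  rows : Col → Finset Row
  firstRows : Finset Row
  lastRows : Finset Row
  first : Col → Row
  last : Col → Row
  firstRank : Col → Fin p
  lastRank : Col → Fin q
  card_rows : ∀ k, (rows k).card = w
  card_firstRows : firstRows.card = f
  card_lastRows : lastRows.card = l
  card_row_add_two_le : Fintype.card Row + 2 ≤ 2 * (f + l)
  card_col_eq_first : Fintype.card Col = f * p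
  card_col_eq_last : Fintype.card Col = l * q
  disjoint : Disjoint firstRows lastRows
  first_mem : ∀ k, first k ∈ firstRows
  last_mem : ∀ k, last k ∈ lastRows
  first_mem_rows : ∀ k, first k ∈ rows k
  last_mem_rows : ∀ k, last k ∈ rows k
  first_le : ∀ k, ∀ r ∈ rows k, first k ≤ r
  le_last : ∀ k, ∀ r ∈ rows k, r ≤ last k
  first_eq : ∀ k, ∀ r ∈ rows k, r ∈ firstRows → first k = r
  last_eq : ∀ k, ∀ r ∈ rows k, r ∈ lastRows → last k = r
  firstRank_lt : ∀ a b, a < b → first a = first b → firstRank a < firstRank b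
  lastRank_lt : ∀ a b, a < b → last a = last b → lastRank a < lastRank b
  last_ne_last : ∀ a b, a < b → first a = first b → last a ≠ last b
  le_of_first_eq : ∀ a b, a < b → first a = first b →
    ∀ r ∈ rows a, ∀ s ∈ rows b, first b < s → r ≤ s
  le_of_last_eq : ∀ a b, a < b → last a = last b →
    ∀ r ∈ rows a, ∀ s ∈ rows b, r < last a → r ≤ s
  avoidsDS4 : ∀ a b, a < b → AvoidsDS4 (rows a) (rows b)

namespace Block

attribute [instance] linearOrderRow linearOrderCol fintypeRow fintypeCol

variable {w p q f l : ℕ}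

section

variable (C : Block w p q f l)

lemma first_le_last (k : C.Col) : C.first k ≤ C.last k :=
  C.first_le k _ (C.last_mem_rows k)

lemma first_ne_last (a b : C.Col) : C.first a ≠ C.last b :=
  Finset.disjoint_iff_ne.1 C.disjoint _ (C.first_mem a) _ (C.last_mem b)

end

/-- A block without columns, hence of any width. -/
def empty (hf : f * p = 0) (hl : l * q = 0) (hfl : 2 ≤ f + l) :
    Block w p q f l where
  Row := Fin f ⊕ₗ Fin l
  Col := Fin 0
  fintypeRow := inferInstanceAs (Fintype (Fin f ⊕ Fin l))
  rows _ := ∅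
  firstRows := Finset.univ.map (Function.Embedding.inl.trans toLex.toEmbedding)
  lastRows := Finset.univ.map (Function.Embedding.inr.trans toLex.toEmbedding)
  first := Fin.elim0
  last := Fin.elim0
  firstRank := Fin.elim0
  lastRank := Fin.elim0
  card_rows k := k.elim0
  card_firstRows := by simp
  card_lastRows := by simp
  card_row_add_two_le := by
    change Fintype.card (Fin f ⊕ Fin l) + 2 ≤ _
    simp only [Fintype.card_sum, Fintype.card_fin]
    omega
  card_col_eq_first := by simp [hf]
  card_col_eq_last := by simp [hl]
  disjoint := by simp [Finset.disjoint_left]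
  first_mem k := k.elim0
  last_mem k := k.elim0
  first_mem_rows k := k.elim0
  last_mem_rows k := k.elim0
  first_le k := k.elim0
  le_last k := k.elim0
  first_eq k := k.elim0
  last_eq k := k.elim0
  firstRank_lt k := k.elim0
  lastRank_lt k := k.elim0
  last_ne_last k := k.elim0
  le_of_first_eq k := k.elim0
  le_of_last_eq k := k.elim0
  avoidsDS4 k := k.elim0

/-- The block with a column for each pair consisting of an upper row and a lower row. -/
def grid (p q : ℕ) (hpq : 2 ≤ p + q) : Block 2 p q q p where
  Row := Fin q ⊕ₗ Fin p
  Col := Fin q ×ₗ Fin p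
  fintypeRow := inferInstanceAs (Fintype (Fin q ⊕ Fin p))
  fintypeCol := inferInstanceAs (Fintype (Fin q × Fin p))
  rows k := {toLex (.inl (ofLex k).1), toLex (.inr (ofLex k).2)}
  firstRows := Finset.univ.map (Function.Embedding.inl.trans toLex.toEmbedding)
  lastRows := Finset.univ.map (Function.Embedding.inr.trans toLex.toEmbedding)
  first k := toLex (.inl (ofLex k).1)
  last k := toLex (.inr (ofLex k).2)
  firstRank k := (ofLex k).2
  lastRank k := (ofLex k).1
  card_rows k := Finset.card_pair (by simp)
  card_firstRows := by simp
  card_lastRows := by simp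
  card_row_add_two_le := by
    change Fintype.card (Fin q ⊕ Fin p) + 2 ≤ _
    simp only [Fintype.card_sum, Fintype.card_fin]
    omega
  card_col_eq_first := by
    change Fintype.card (Fin q × Fin p) = _
    simp
  card_col_eq_last := by
    change Fintype.card (Fin q × Fin p) = _
    simp [mul_comm]
  disjoint := by simp [Finset.disjoint_left]
  first_mem k := by simp
  last_mem k := by simp
  first_mem_rows k := by simp
  last_mem_rows k := by simp
  first_le k := by simp
  le_last k := by simp
  first_eq k := by simp
  last_eq k := by simp
  firstRank_lt a b hab h := by simp_all [Prod.Lex.lt_iff]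
  lastRank_lt a b hab h := by simp_all [Prod.Lex.lt_iff]
  last_ne_last a b hab h := by simp_all [Prod.Lex.lt_iff, ne_of_lt]
  le_of_first_eq a b hab h := by simp_all [Prod.Lex.lt_iff, le_of_lt]
  le_of_last_eq a b hab h := by simp_all [Prod.Lex.lt_iff, le_of_lt]
  avoidsDS4 a b hab := by
    have hle : (ofLex a).1 ≤ (ofLex b).1 := Prod.Lex.monotone_fst _ _ hab.le
    exact .of_lowerBound (m := toLex (.inl (ofLex b).1)) (by simp)
      (by simpa [hle.not_gt] using fun h => h.le)

end Block

/-! ### Gluing linear orders -/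

/-- The rows of a glued block: the rows `X` of the old block, with a copy of `Y` inserted before
each row in `S` and a copy of `Z` inserted after each row in `T`. -/
inductive GlueRow {X : Type} (S T : Finset X) (Y Z : Type)
  | before (x : S) (y : Y)
  | old (x : X)
  | after (x : T) (z : Z)

namespace GlueRow

variable {X Y Z : Type} {S T : Finset X}

/-- The old row next to which a row is placed. -/
def base : GlueRow S T Y Z → X
  | before x _ => x
  | old x => x
  | after x _ => x

/-- The position of a row in the lexicographic order that defines the order on `GlueRow`. -/
def key : GlueRow S T Y Z → X ×ₗ (Y ⊕ₗ (Unit ⊕ₗ Z))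
  | before x y => toLex (x, toLex (.inl y))
  | old x => toLex (x, toLex (.inr (toLex (.inl ()))))
  | after x z => toLex (x, toLex (.inr (toLex (.inr z))))

lemma key_injective : Function.Injective (key : GlueRow S T Y Z → _) := by
  rintro (_ | _ | _) (_ | _ | _) h <;> simp_all [key]

/-- `GlueRow` as a disjoint union, for counting. -/
def equivSum : GlueRow S T Y Z ≃ (S × Y) ⊕ X ⊕ (T × Z) where
  toFun
    | before x y => .inl (x, y)
    | old x => .inr (.inl x)
    | after x z => .inr (.inr (x, z))
  invFun
    | .inl (x, y) => before x y
    | .inr (.inl x) => old x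
    | .inr (.inr (x, z)) => after x z
  left_inv := by rintro (_ | _ | _) <;> rfl
  right_inv := by rintro (_ | _ | _) <;> rfl

instance [Fintype X] [Fintype Y] [Fintype Z] : Fintype (GlueRow S T Y Z) :=
  Fintype.ofEquiv _ equivSum.symm

lemma card_eq [Fintype X] [Fintype Y] [Fintype Z] : Fintype.card (GlueRow S T Y Z) =
    S.card * Fintype.card Y + Fintype.card X + T.card * Fintype.card Z := by
  simp [Fintype.card_congr equivSum, add_assoc]

/-- The rows whose copy lies in `A`, if inserted before an old row, and in `B`, if inserted
after. -/
def copies (A : Finset Y) (B : Finset Z) : Finset (GlueRow S T Y Z) :=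
  ((Finset.univ ×ˢ A).disjSum ((∅ : Finset X).disjSum (Finset.univ ×ˢ B))).map
    equivSum.symm.toEmbedding

section copies

variable {A : Finset Y} {B : Finset Z}

@[simp] lemma before_mem_copies {x : S} {y : Y} :
    (before x y : GlueRow S T Y Z) ∈ copies A B ↔ y ∈ A := by
  simp [copies, Finset.mem_map_equiv, equivSum]

@[simp] lemma old_notMem_copies {x : X} : (old x : GlueRow S T Y Z) ∉ copies A B := by
  simp [copies, Finset.mem_map_equiv, equivSum]

@[simp] lemma after_mem_copies {x : T} {z : Z} :
    (after x z : GlueRow S T Y Z) ∈ copies A B ↔ z ∈ B := by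
  simp [copies, Finset.mem_map_equiv, equivSum]

lemma card_copies :
    (copies A B : Finset (GlueRow S T Y Z)).card = S.card * A.card + T.card * B.card := by
  simp [copies]

lemma disjoint_copies {A' : Finset Y} {B' : Finset Z} (hA : Disjoint A A') (hB : Disjoint B B') :
    Disjoint (copies A B : Finset (GlueRow S T Y Z)) (copies A' B') := by
  rw [Finset.disjoint_left] at hA hB ⊢
  rintro (_ | _ | _) <;> simp_all

end copies

section LinearOrder

variable [LinearOrder X] [LinearOrder Y] [LinearOrder Z]

instance : LinearOrder (GlueRow S T Y Z) := .lift' key key_injective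

lemma lt_iff_key_lt_key {ρ σ : GlueRow S T Y Z} : ρ < σ ↔ key ρ < key σ := Iff.rfl

variable {x x' : X} {u u' : S} {v v' : T} {y y' : Y} {z z' : Z}

@[simp] lemma before_lt_before :
    (before u y : GlueRow S T Y Z) < before u' y' ↔ u < u' ∨ u = u' ∧ y < y' := by
  simp [lt_iff_key_lt_key, key, Prod.Lex.toLex_lt_toLex]

@[simp] lemma before_lt_old :
    (before u y : GlueRow S T Y Z) < old x ↔ (u : X) ≤ x := by
  simp [lt_iff_key_lt_key, key, Prod.Lex.toLex_lt_toLex, le_iff_lt_or_eq]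

@[simp] lemma before_lt_after :
    (before u y : GlueRow S T Y Z) < after v z ↔ (u : X) ≤ v := by
  simp [lt_iff_key_lt_key, key, Prod.Lex.toLex_lt_toLex, le_iff_lt_or_eq]

@[simp] lemma old_lt_before : (old x : GlueRow S T Y Z) < before u y ↔ x < u := by
  simp [lt_iff_key_lt_key, key, Prod.Lex.toLex_lt_toLex]

@[simp] lemma old_lt_old : (old x : GlueRow S T Y Z) < old x' ↔ x < x' := by
  simp [lt_iff_key_lt_key, key, Prod.Lex.toLex_lt_toLex]

@[simp] lemma old_lt_after : (old x : GlueRow S T Y Z) < after v z ↔ x ≤ v := by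
  simp [lt_iff_key_lt_key, key, Prod.Lex.toLex_lt_toLex, le_iff_lt_or_eq]

@[simp] lemma after_lt_before :
    (after v z : GlueRow S T Y Z) < before u y ↔ (v : X) < u := by
  simp [lt_iff_key_lt_key, key, Prod.Lex.toLex_lt_toLex]

@[simp] lemma after_lt_old : (after v z : GlueRow S T Y Z) < old x ↔ (v : X) < x := by
  simp [lt_iff_key_lt_key, key, Prod.Lex.toLex_lt_toLex]

@[simp] lemma after_lt_after :
    (after v z : GlueRow S T Y Z) < after v' z' ↔ v < v' ∨ v = v' ∧ z < z' := by
  simp [lt_iff_key_lt_key, key, Prod.Lex.toLex_lt_toLex]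

/-- The embedding of the copy of `Y` inserted before the row `u`. -/
def beforeEmb (u : S) : Y ↪o GlueRow S T Y Z :=
  .ofStrictMono (before u) fun _ _ h => by simpa using h

@[simp] lemma beforeEmb_apply : (beforeEmb u y : GlueRow S T Y Z) = before u y := rfl

/-- The embedding of the copy of `Z` inserted after the row `v`. -/
def afterEmb (v : T) : Z ↪o GlueRow S T Y Z :=
  .ofStrictMono (after v) fun _ _ h => by simpa using h

@[simp] lemma afterEmb_apply : (afterEmb v z : GlueRow S T Y Z) = after v z := rfl

/-- The embedding of the old rows. -/
def oldEmb : X ↪o GlueRow S T Y Z :=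
  .ofStrictMono old fun _ _ h => by simpa using h

@[simp] lemma oldEmb_apply : (oldEmb x : GlueRow S T Y Z) = old x := rfl

lemma base_monotone : Monotone (base : GlueRow S T Y Z → X) := by
  intro ρ σ h
  by_contra! hlt
  refine h.not_gt ?_
  rcases ρ with _ | _ | _ <;> rcases σ with _ | _ | _ <;> simp_all [base, le_of_lt]

lemma base_mem_of_lt {ρ σ : GlueRow S T Y Z} (h : ρ < σ) (heq : base ρ = base σ) :
    base ρ ∈ S ∨ base ρ ∈ T := by
  rcases ρ with ⟨u, _⟩ | x | ⟨v, _⟩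
  · exact .inl u.2
  · rcases σ with ⟨u, _⟩ | x' | ⟨v, _⟩
    · exact absurd heq (old_lt_before.1 h).ne
    · exact absurd heq (old_lt_old.1 h).ne
    · exact .inr (heq ▸ v.2)
  · exact .inr v.2

end LinearOrder

end GlueRow

/-- The columns of a glued block: a copy of `A` for each element of `S`, the old columns `B`, and a
copy of `C` for each element of `T`, from left to right. -/
inductive GlueCol (S A B T C : Type)
  | before (s : S) (a : A)
  | old (b : B)
  | after (t : T) (c : C)

namespace GlueCol

variable {S A B T C : Type}

/-- `GlueCol` as a lexicographic sum, from which it gets its order. -/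
def equivLex : GlueCol S A B T C ≃ (S ×ₗ A) ⊕ₗ (B ⊕ₗ (T ×ₗ C)) where
  toFun
    | before s a => toLex (.inl (toLex (s, a)))
    | old b => toLex (.inr (toLex (.inl b)))
    | after t c => toLex (.inr (toLex (.inr (toLex (t, c)))))
  invFun
    | .inl (s, a) => before s a
    | .inr (.inl b) => old b
    | .inr (.inr (t, c)) => after t c
  left_inv := by rintro (_ | _ | _) <;> rfl
  right_inv := by rintro (_ | _ | _) <;> rfl

/-- `GlueCol` as a disjoint union, for counting. -/
def equivSum : GlueCol S A B T C ≃ (S × A) ⊕ B ⊕ (T × C) :=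
  equivLex.trans (ofLex.trans (.sumCongr ofLex (ofLex.trans (.sumCongr (.refl B) ofLex))))

instance [Fintype S] [Fintype A] [Fintype B] [Fintype T] [Fintype C] :
    Fintype (GlueCol S A B T C) :=
  .ofEquiv _ equivSum.symm

lemma card_eq [Fintype S] [Fintype A] [Fintype B] [Fintype T] [Fintype C] :
    Fintype.card (GlueCol S A B T C) = Fintype.card S * Fintype.card A + Fintype.card B +
      Fintype.card T * Fintype.card C := by
  simp [Fintype.card_congr equivSum, add_assoc]

variable [LinearOrder S] [LinearOrder A] [LinearOrder B] [LinearOrder T] [LinearOrder C]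

instance : LinearOrder (GlueCol S A B T C) := .lift' equivLex equivLex.injective

lemma lt_iff_equivLex_lt {k k' : GlueCol S A B T C} : k < k' ↔ equivLex k < equivLex k' := Iff.rfl

variable {s s' : S} {a a' : A} {b b' : B} {t t' : T} {c c' : C}

@[simp] lemma before_lt_before :
    (before s a : GlueCol S A B T C) < before s' a' ↔ s < s' ∨ s = s' ∧ a < a' := by
  simp [lt_iff_equivLex_lt, equivLex, Prod.Lex.toLex_lt_toLex]

@[simp] lemma not_old_lt_before : ¬ (old b : GlueCol S A B T C) < before s a := by
  simp [lt_iff_equivLex_lt, equivLex]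

@[simp] lemma old_lt_old : (old b : GlueCol S A B T C) < old b' ↔ b < b' := by
  simp [lt_iff_equivLex_lt, equivLex]

@[simp] lemma not_after_lt_before : ¬ (after t c : GlueCol S A B T C) < before s a := by
  simp [lt_iff_equivLex_lt, equivLex]

@[simp] lemma not_after_lt_old : ¬ (after t c : GlueCol S A B T C) < old b := by
  simp [lt_iff_equivLex_lt, equivLex]

@[simp] lemma after_lt_after :
    (after t c : GlueCol S A B T C) < after t' c' ↔ t < t' ∨ t = t' ∧ c < c' := by
  simp [lt_iff_equivLex_lt, equivLex, Prod.Lex.toLex_lt_toLex]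

end GlueCol

/-! ### Gluing blocks -/

namespace Block

section Glue

variable {w p q f₁ l₁ f₂ l₂ f l : ℕ} (C₀ : Block w f₁ l₂ f l) (C₁ : Block (w + 2) p (q + 1) f₁ l₁)
  (C₂ : Block (w + 2) (p + 1) q f₂ l₂)

open GlueRow

/-- The row of `C₁` that receives the new first `1`-entry of the column `k` of `C₀`. -/
def insFirst (k : C₀.Col) : C₁.Row := C₁.firstRows.orderEmbOfFin C₁.card_firstRows (C₀.firstRank k)

/-- The row of `C₂` that receives the new last `1`-entry of the column `k` of `C₀`. -/
def insLast (k : C₀.Col) : C₂.Row := C₂.lastRows.orderEmbOfFin C₂.card_lastRows (C₀.lastRank k)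

lemma insFirst_mem (k : C₀.Col) : C₀.insFirst C₁ k ∈ C₁.firstRows :=
  Finset.orderEmbOfFin_mem _ _ _

lemma insLast_mem (k : C₀.Col) : C₀.insLast C₂ k ∈ C₂.lastRows :=
  Finset.orderEmbOfFin_mem _ _ _

variable {C₀} in
lemma insFirst_lt_insFirst {a b : C₀.Col} (hab : a < b) (h : C₀.first a = C₀.first b) :
    C₀.insFirst C₁ a < C₀.insFirst C₁ b :=
  (C₁.firstRows.orderEmbOfFin C₁.card_firstRows).strictMono (C₀.firstRank_lt a b hab h)

variable {C₀} in
lemma insLast_lt_insLast {a b : C₀.Col} (hab : a < b) (h : C₀.last a = C₀.last b) :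
    C₀.insLast C₂ a < C₀.insLast C₂ b :=
  (C₂.lastRows.orderEmbOfFin C₂.card_lastRows).strictMono (C₀.lastRank_lt a b hab h)

/-- The rows of `C₀.glue C₁ C₂`: a copy of `C₁` is inserted before each first row of `C₀`, and a
copy of `C₂` after each last row. -/
abbrev GRow : Type := GlueRow C₀.firstRows C₀.lastRows C₁.Row C₂.Row

/-- The columns of `C₀.glue C₁ C₂`. -/
abbrev GCol : Type := GlueCol C₀.firstRows C₁.Col C₀.Col C₀.lastRows C₂.Col

/-- The first row of a column of `C₀.glue C₁ C₂`. -/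
def glueFirst : GCol C₀ C₁ C₂ → GRow C₀ C₁ C₂
  | .before s a => before s (C₁.first a)
  | .old k => before ⟨C₀.first k, C₀.first_mem k⟩ (C₀.insFirst C₁ k)
  | .after t c => after t (C₂.first c)

/-- The last row of a column of `C₀.glue C₁ C₂`. -/
def glueLast : GCol C₀ C₁ C₂ → GRow C₀ C₁ C₂
  | .before s a => before s (C₁.last a)
  | .old k => after ⟨C₀.last k, C₀.last_mem k⟩ (C₀.insLast C₂ k)
  | .after t c => after t (C₂.last c)

/-- The `1`-entries of a column of `C₀.glue C₁ C₂`: a column of `C₀` acquires two new ones. -/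
def glueRows : GCol C₀ C₁ C₂ → Finset (GRow C₀ C₁ C₂)
  | .before s a => (C₁.rows a).map (beforeEmb s).toEmbedding
  | .old k => insert (glueFirst C₀ C₁ C₂ (.old k)) (insert (glueLast C₀ C₁ C₂ (.old k))
      ((C₀.rows k).map oldEmb.toEmbedding))
  | .after t c => (C₂.rows c).map (afterEmb t).toEmbedding

/-- The position of a column of `C₀.glue C₁ C₂` among those with the same first row. -/
def glueFirstRank : GCol C₀ C₁ C₂ → Fin (p + 1)
  | .before _ a => (C₁.firstRank a).castSucc
  | .old _ => Fin.last p
  | .after _ c => C₂.firstRank c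

/-- The position of a column of `C₀.glue C₁ C₂` among those with the same last row. -/
def glueLastRank : GCol C₀ C₁ C₂ → Fin (q + 1)
  | .before _ a => C₁.lastRank a
  | .old _ => 0
  | .after _ c => (C₂.lastRank c).succ

variable {C₀ C₁ C₂}

lemma mem_glueRows_before {s : C₀.firstRows} {a : C₁.Col} {ρ : GRow C₀ C₁ C₂} :
    ρ ∈ glueRows C₀ C₁ C₂ (.before s a) ↔ ∃ r ∈ C₁.rows a, before s r = ρ := by
  simp [glueRows]

lemma mem_glueRows_after {t : C₀.lastRows} {c : C₂.Col} {ρ : GRow C₀ C₁ C₂} :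
    ρ ∈ glueRows C₀ C₁ C₂ (.after t c) ↔ ∃ r ∈ C₂.rows c, after t r = ρ := by
  simp [glueRows]

lemma mem_glueRows_old {k : C₀.Col} {ρ : GRow C₀ C₁ C₂} :
    ρ ∈ glueRows C₀ C₁ C₂ (.old k) ↔
      ρ = before ⟨C₀.first k, C₀.first_mem k⟩ (C₀.insFirst C₁ k) ∨
      ρ = after ⟨C₀.last k, C₀.last_mem k⟩ (C₀.insLast C₂ k) ∨ ∃ r ∈ C₀.rows k, old r = ρ := by
  simp [glueRows, glueFirst, glueLast]

lemma card_glueRows (k : GCol C₀ C₁ C₂) : (glueRows C₀ C₁ C₂ k).card = w + 2 := by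
  rcases k with ⟨s, a⟩ | k | ⟨t, c⟩
  · simp [glueRows, C₁.card_rows]
  · rw [glueRows, Finset.card_insert_of_notMem (by simp [glueFirst, glueLast]),
      Finset.card_insert_of_notMem (by simp [glueLast]), Finset.card_map, C₀.card_rows]
  · simp [glueRows, C₂.card_rows]

lemma glueFirst_mem_copies (k : GCol C₀ C₁ C₂) :
    glueFirst C₀ C₁ C₂ k ∈ copies C₁.firstRows C₂.firstRows := by
  rcases k with _ | _ | _ <;> simp [glueFirst, first_mem, insFirst_mem]

lemma glueLast_mem_copies (k : GCol C₀ C₁ C₂) :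
    glueLast C₀ C₁ C₂ k ∈ copies C₁.lastRows C₂.lastRows := by
  rcases k with _ | _ | _ <;> simp [glueLast, last_mem, insLast_mem]

lemma glueFirst_mem_glueRows (k : GCol C₀ C₁ C₂) :
    glueFirst C₀ C₁ C₂ k ∈ glueRows C₀ C₁ C₂ k := by
  rcases k with _ | _ | _ <;> simp [glueFirst, glueRows, first_mem_rows]

lemma glueLast_mem_glueRows (k : GCol C₀ C₁ C₂) :
    glueLast C₀ C₁ C₂ k ∈ glueRows C₀ C₁ C₂ k := by
  rcases k with _ | _ | _ <;> simp [glueLast, glueRows, last_mem_rows]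

lemma glueFirst_le {k : GCol C₀ C₁ C₂} {ρ : GRow C₀ C₁ C₂} (hρ : ρ ∈ glueRows C₀ C₁ C₂ k) :
    glueFirst C₀ C₁ C₂ k ≤ ρ := by
  rcases k with ⟨s, a⟩ | k | ⟨t, c⟩
  · obtain ⟨r, hr, rfl⟩ := mem_glueRows_before.1 hρ
    exact (beforeEmb s).monotone (C₁.first_le a r hr)
  · rcases mem_glueRows_old.1 hρ with rfl | rfl | ⟨r, hr, rfl⟩
    · exact le_rfl
    · exact (before_lt_after.2 (C₀.first_le_last k)).le
    · exact (before_lt_old.2 (C₀.first_le k r hr)).le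
  · obtain ⟨r, hr, rfl⟩ := mem_glueRows_after.1 hρ
    exact (afterEmb t).monotone (C₂.first_le c r hr)

lemma le_glueLast {k : GCol C₀ C₁ C₂} {ρ : GRow C₀ C₁ C₂} (hρ : ρ ∈ glueRows C₀ C₁ C₂ k) :
    ρ ≤ glueLast C₀ C₁ C₂ k := by
  rcases k with ⟨s, a⟩ | k | ⟨t, c⟩
  · obtain ⟨r, hr, rfl⟩ := mem_glueRows_before.1 hρ
    exact (beforeEmb s).monotone (C₁.le_last a r hr)
  · rcases mem_glueRows_old.1 hρ with rfl | rfl | ⟨r, hr, rfl⟩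
    · exact (before_lt_after.2 (C₀.first_le_last k)).le
    · exact le_rfl
    · exact (old_lt_after.2 (C₀.le_last k r hr)).le
  · obtain ⟨r, hr, rfl⟩ := mem_glueRows_after.1 hρ
    exact (afterEmb t).monotone (C₂.le_last c r hr)

lemma glueFirst_eq {k : GCol C₀ C₁ C₂} {ρ : GRow C₀ C₁ C₂} (hρ : ρ ∈ glueRows C₀ C₁ C₂ k)
    (h : ρ ∈ copies C₁.firstRows C₂.firstRows) : glueFirst C₀ C₁ C₂ k = ρ := by
  rcases k with ⟨s, a⟩ | k | ⟨t, c⟩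
  · obtain ⟨r, hr, rfl⟩ := mem_glueRows_before.1 hρ
    rw [glueFirst, C₁.first_eq a r hr (before_mem_copies.1 h)]
  · rcases mem_glueRows_old.1 hρ with rfl | rfl | ⟨r, -, rfl⟩
    · rfl
    · exact absurd (C₀.insLast_mem C₂ k)
        (Finset.disjoint_left.1 C₂.disjoint (after_mem_copies.1 h))
    · exact absurd h old_notMem_copies
  · obtain ⟨r, hr, rfl⟩ := mem_glueRows_after.1 hρ
    rw [glueFirst, C₂.first_eq c r hr (after_mem_copies.1 h)]

lemma glueLast_eq {k : GCol C₀ C₁ C₂} {ρ : GRow C₀ C₁ C₂} (hρ : ρ ∈ glueRows C₀ C₁ C₂ k)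
    (h : ρ ∈ copies C₁.lastRows C₂.lastRows) : glueLast C₀ C₁ C₂ k = ρ := by
  rcases k with ⟨s, a⟩ | k | ⟨t, c⟩
  · obtain ⟨r, hr, rfl⟩ := mem_glueRows_before.1 hρ
    rw [glueLast, C₁.last_eq a r hr (before_mem_copies.1 h)]
  · rcases mem_glueRows_old.1 hρ with rfl | rfl | ⟨r, -, rfl⟩
    · exact absurd (before_mem_copies.1 h)
        (Finset.disjoint_left.1 C₁.disjoint (C₀.insFirst_mem C₁ k))
    · rfl
    · exact absurd h old_notMem_copies
  · obtain ⟨r, hr, rfl⟩ := mem_glueRows_after.1 hρ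
    rw [glueLast, C₂.last_eq c r hr (after_mem_copies.1 h)]

lemma glueFirst_eq_cases {motive : GCol C₀ C₁ C₂ → GCol C₀ C₁ C₂ → Prop}
    (hbefore : ∀ s a a', a < a' → C₁.first a = C₁.first a' → motive (.before s a) (.before s a'))
    (hold : ∀ a k, C₁.first a = C₀.insFirst C₁ k →
      motive (.before ⟨C₀.first k, C₀.first_mem k⟩ a) (.old k))
    (hafter : ∀ t c c', c < c' → C₂.first c = C₂.first c' → motive (.after t c) (.after t c'))
    {a b : GCol C₀ C₁ C₂} (hab : a < b) (h : glueFirst C₀ C₁ C₂ a = glueFirst C₀ C₁ C₂ b) :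
    motive a b := by
  rcases a with ⟨s, a⟩ | k | ⟨t, c⟩ <;> rcases b with ⟨s', a'⟩ | k' | ⟨t', c'⟩ <;>
    simp only [glueFirst, before.injEq, after.injEq, Subtype.mk.injEq, reduceCtorEq] at h
  · obtain ⟨rfl, h⟩ := h
    exact hbefore s a a' (by simpa using hab) h
  · obtain ⟨rfl, h⟩ := h
    exact hold a k' h
  · exact absurd hab GlueCol.not_old_lt_before
  · exact absurd h.2 (insFirst_lt_insFirst C₁ (GlueCol.old_lt_old.1 hab) h.1).ne
  · obtain ⟨rfl, h⟩ := h
    exact hafter t c c' (by simpa using hab) h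

lemma glueLast_eq_cases {motive : GCol C₀ C₁ C₂ → GCol C₀ C₁ C₂ → Prop}
    (hbefore : ∀ s a a', a < a' → C₁.last a = C₁.last a' → motive (.before s a) (.before s a'))
    (hold : ∀ k c, C₀.insLast C₂ k = C₂.last c →
      motive (.old k) (.after ⟨C₀.last k, C₀.last_mem k⟩ c))
    (hafter : ∀ t c c', c < c' → C₂.last c = C₂.last c' → motive (.after t c) (.after t c'))
    {a b : GCol C₀ C₁ C₂} (hab : a < b) (h : glueLast C₀ C₁ C₂ a = glueLast C₀ C₁ C₂ b) :
    motive a b := by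
  rcases a with ⟨s, a⟩ | k | ⟨t, c⟩ <;> rcases b with ⟨s', a'⟩ | k' | ⟨t', c'⟩ <;>
    simp only [glueLast, before.injEq, after.injEq, Subtype.mk.injEq, reduceCtorEq] at h
  · obtain ⟨rfl, h⟩ := h
    exact hbefore s a a' (by simpa using hab) h
  · exact absurd h.2 (insLast_lt_insLast C₂ (GlueCol.old_lt_old.1 hab) h.1).ne
  · obtain ⟨rfl, h⟩ := h
    exact hold k c' h
  · exact absurd hab GlueCol.not_after_lt_old
  · obtain ⟨rfl, h⟩ := h
    exact hafter t c c' (by simpa using hab) h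

lemma glueFirstRank_lt {a b : GCol C₀ C₁ C₂} (hab : a < b)
    (h : glueFirst C₀ C₁ C₂ a = glueFirst C₀ C₁ C₂ b) :
    glueFirstRank C₀ C₁ C₂ a < glueFirstRank C₀ C₁ C₂ b :=
  glueFirst_eq_cases (motive := fun a b => glueFirstRank C₀ C₁ C₂ a < glueFirstRank C₀ C₁ C₂ b)
    (fun _ _ _ hlt heq => Fin.castSucc_lt_castSucc_iff.2 (C₁.firstRank_lt _ _ hlt heq))
    (fun _ _ _ => Fin.castSucc_lt_last _) (fun _ _ _ hlt heq => C₂.firstRank_lt _ _ hlt heq) hab h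

lemma glueLastRank_lt {a b : GCol C₀ C₁ C₂} (hab : a < b)
    (h : glueLast C₀ C₁ C₂ a = glueLast C₀ C₁ C₂ b) :
    glueLastRank C₀ C₁ C₂ a < glueLastRank C₀ C₁ C₂ b :=
  glueLast_eq_cases (motive := fun a b => glueLastRank C₀ C₁ C₂ a < glueLastRank C₀ C₁ C₂ b)
    (fun _ _ _ hlt heq => C₁.lastRank_lt _ _ hlt heq)
    (fun _ _ _ => Fin.succ_pos _)
    (fun _ _ _ hlt heq => Fin.succ_lt_succ_iff.2 (C₂.lastRank_lt _ _ hlt heq)) hab h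

lemma glueLast_ne_glueLast {a b : GCol C₀ C₁ C₂} (hab : a < b)
    (h : glueFirst C₀ C₁ C₂ a = glueFirst C₀ C₁ C₂ b) :
    glueLast C₀ C₁ C₂ a ≠ glueLast C₀ C₁ C₂ b :=
  glueFirst_eq_cases (motive := fun a b => glueLast C₀ C₁ C₂ a ≠ glueLast C₀ C₁ C₂ b)
    (fun _ _ _ hlt heq => by simpa [glueLast] using C₁.last_ne_last _ _ hlt heq)
    (fun _ _ _ => by simp [glueLast])
    (fun _ _ _ hlt heq => by simpa [glueLast] using C₂.last_ne_last _ _ hlt heq) hab h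

lemma le_of_glueFirst_eq {a b : GCol C₀ C₁ C₂} (hab : a < b)
    (h : glueFirst C₀ C₁ C₂ a = glueFirst C₀ C₁ C₂ b) :
    ∀ ρ ∈ glueRows C₀ C₁ C₂ a, ∀ σ ∈ glueRows C₀ C₁ C₂ b, glueFirst C₀ C₁ C₂ b < σ → ρ ≤ σ := by
  refine glueFirst_eq_cases (motive := fun a b => ∀ ρ ∈ glueRows C₀ C₁ C₂ a,
    ∀ σ ∈ glueRows C₀ C₁ C₂ b, glueFirst C₀ C₁ C₂ b < σ → ρ ≤ σ) ?_ ?_ ?_ hab h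
  · intro s a a' hlt heq ρ hρ σ hσ hfirst
    obtain ⟨r, hr, rfl⟩ := mem_glueRows_before.1 hρ
    obtain ⟨r', hr', rfl⟩ := mem_glueRows_before.1 hσ
    exact (beforeEmb s).monotone (C₁.le_of_first_eq a a' hlt heq r hr r' hr'
      ((beforeEmb s).lt_iff_lt.1 hfirst))
  · intro a k _ ρ hρ σ hσ hfirst
    obtain ⟨r, -, rfl⟩ := mem_glueRows_before.1 hρ
    rcases mem_glueRows_old.1 hσ with rfl | rfl | ⟨r', hr', rfl⟩
    · exact absurd hfirst (lt_irrefl _)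
    · exact (before_lt_after.2 (C₀.first_le_last k)).le
    · exact (before_lt_old.2 (C₀.first_le k r' hr')).le
  · intro t c c' hlt heq ρ hρ σ hσ hfirst
    obtain ⟨r, hr, rfl⟩ := mem_glueRows_after.1 hρ
    obtain ⟨r', hr', rfl⟩ := mem_glueRows_after.1 hσ
    exact (afterEmb t).monotone (C₂.le_of_first_eq c c' hlt heq r hr r' hr'
      ((afterEmb t).lt_iff_lt.1 hfirst))

lemma le_of_glueLast_eq {a b : GCol C₀ C₁ C₂} (hab : a < b)
    (h : glueLast C₀ C₁ C₂ a = glueLast C₀ C₁ C₂ b) :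
    ∀ ρ ∈ glueRows C₀ C₁ C₂ a, ∀ σ ∈ glueRows C₀ C₁ C₂ b, ρ < glueLast C₀ C₁ C₂ a → ρ ≤ σ := by
  refine glueLast_eq_cases (motive := fun a b => ∀ ρ ∈ glueRows C₀ C₁ C₂ a,
    ∀ σ ∈ glueRows C₀ C₁ C₂ b, ρ < glueLast C₀ C₁ C₂ a → ρ ≤ σ) ?_ ?_ ?_ hab h
  · intro s a a' hlt heq ρ hρ σ hσ hlast
    obtain ⟨r, hr, rfl⟩ := mem_glueRows_before.1 hρ
    obtain ⟨r', hr', rfl⟩ := mem_glueRows_before.1 hσ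
    exact (beforeEmb s).monotone (C₁.le_of_last_eq a a' hlt heq r hr r' hr'
      ((beforeEmb s).lt_iff_lt.1 hlast))
  · intro k c _ ρ hρ σ hσ hlast
    obtain ⟨r', -, rfl⟩ := mem_glueRows_after.1 hσ
    rcases mem_glueRows_old.1 hρ with rfl | rfl | ⟨r, hr, rfl⟩
    · exact (before_lt_after.2 (C₀.first_le_last k)).le
    · exact absurd hlast (lt_irrefl _)
    · exact (old_lt_after.2 (C₀.le_last k r hr)).le
  · intro t c c' hlt heq ρ hρ σ hσ hlast
    obtain ⟨r, hr, rfl⟩ := mem_glueRows_after.1 hρ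
    obtain ⟨r', hr', rfl⟩ := mem_glueRows_after.1 hσ
    exact (afterEmb t).monotone (C₂.le_of_last_eq c c' hlt heq r hr r' hr'
      ((afterEmb t).lt_iff_lt.1 hlast))

lemma base_mem_rows {k : C₀.Col} {ρ : GRow C₀ C₁ C₂} (hρ : ρ ∈ glueRows C₀ C₁ C₂ (.old k)) :
    base ρ ∈ C₀.rows k := by
  rcases mem_glueRows_old.1 hρ with rfl | rfl | ⟨r, hr, rfl⟩
  · exact C₀.first_mem_rows k
  · exact C₀.last_mem_rows k
  · exact hr

lemma base_lt_base_or {a b : C₀.Col} {ρ σ : GRow C₀ C₁ C₂}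
    (hρ : ρ ∈ glueRows C₀ C₁ C₂ (.old a)) (hσ : σ ∈ glueRows C₀ C₁ C₂ (.old b)) (h : ρ < σ) :
    base ρ < base σ ∨
      (C₀.first a = C₀.first b ∧ C₀.first a = base ρ ∧ C₀.first a = base σ) ∨
      (C₀.last a = C₀.last b ∧ C₀.last a = base ρ ∧ C₀.last a = base σ) := by
  rcases (base_monotone h.le).lt_or_eq with hlt | heq
  · exact .inl hlt
  have hρ := base_mem_rows hρ
  have hσ := base_mem_rows hσ
  rw [← heq] at hσ ⊢
  rcases base_mem_of_lt h heq with hmem | hmem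
  · have ha := C₀.first_eq a _ hρ hmem
    exact .inr (.inl ⟨ha.trans (C₀.first_eq b _ hσ hmem).symm, ha, ha⟩)
  · have ha := C₀.last_eq a _ hρ hmem
    exact .inr (.inr ⟨ha.trans (C₀.last_eq b _ hσ hmem).symm, ha, ha⟩)

lemma first_lt_base {a b : C₀.Col} (hab : a < b) (hF : C₀.first a = C₀.first b)
    {ρ σ : GRow C₀ C₁ C₂} (hρ : ρ ∈ glueRows C₀ C₁ C₂ (.old a))
    (hσ : σ ∈ glueRows C₀ C₁ C₂ (.old b)) (hbρ : glueFirst C₀ C₁ C₂ (.old b) < ρ) (h : ρ < σ) :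
    C₀.first b < base σ := by
  have hold : old (C₀.first b) ≤ ρ := by
    rw [← hF]
    rcases mem_glueRows_old.1 hρ with rfl | rfl | ⟨r, hr, rfl⟩
    · have := insFirst_lt_insFirst C₁ hab hF
      simp [glueFirst, hF, this.not_gt] at hbρ
    · exact (old_lt_after.2 (C₀.first_le_last a)).le
    · exact oldEmb.monotone (C₀.first_le a r hr)
  replace hold := hold.trans_lt h
  rcases mem_glueRows_old.1 hσ with rfl | rfl | ⟨r, -, rfl⟩
  · simp at hold
  · exact (C₀.first_le_last b).lt_of_ne (C₀.first_ne_last b b)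
  · exact old_lt_old.1 hold

lemma base_lt_last {a b : C₀.Col} (hab : a < b) (hL : C₀.last a = C₀.last b)
    {ρ σ : GRow C₀ C₁ C₂} (hρ : ρ ∈ glueRows C₀ C₁ C₂ (.old a))
    (hσ : σ ∈ glueRows C₀ C₁ C₂ (.old b)) (h : ρ < σ) (hσa : σ < glueLast C₀ C₁ C₂ (.old a)) :
    base ρ < C₀.last a := by
  have hold : σ ≤ old (C₀.last a) := by
    rw [hL]
    rcases mem_glueRows_old.1 hσ with rfl | rfl | ⟨r, hr, rfl⟩
    · exact (before_lt_old.2 (C₀.first_le_last b)).le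
    · have := insLast_lt_insLast C₂ hab hL
      simp [glueLast, hL, this.not_gt] at hσa
    · exact oldEmb.monotone (C₀.le_last b r hr)
  replace hold := h.trans_le hold
  rcases mem_glueRows_old.1 hρ with rfl | rfl | ⟨r, -, rfl⟩
  · exact (C₀.first_le_last a).lt_of_ne (C₀.first_ne_last a a)
  · simp at hold
  · exact old_lt_old.1 hold

lemma glueRows_old_avoidsDS4 {a b : C₀.Col} (hab : a < b) :
    AvoidsDS4 (glueRows C₀ C₁ C₂ (.old a)) (glueRows C₀ C₁ C₂ (.old b)) := by
  by_cases hF : C₀.first a = C₀.first b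
  · have hL := C₀.last_ne_last a b hab hF
    refine .of_lowerBound (fun σ => glueFirst_le) fun ρ hρ σ hσ hbρ hρσ ρ' hρ' => ?_
    have hlt := first_lt_base hab hF hρ hσ hbρ hρσ
    have hle := C₀.le_of_first_eq a b hab hF _ (base_mem_rows hρ') _ (base_mem_rows hσ) hlt
    by_contra! hσρ'
    rcases base_lt_base_or hσ hρ' hσρ' with h | h | h
    · exact hle.not_gt h
    · exact hlt.ne h.2.1
    · exact hL h.1.symm
  by_cases hL : C₀.last a = C₀.last b
  · refine .of_upperBound (fun ρ => le_glueLast) fun ρ hρ σ hσ hρσ hσa σ' hσ' => ?_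
    have hlt := base_lt_last hab hL hρ hσ hρσ hσa
    have hle := C₀.le_of_last_eq a b hab hL _ (base_mem_rows hρ) _ (base_mem_rows hσ') hlt
    by_contra! hσ'ρ
    rcases base_lt_base_or hσ' hρ hσ'ρ with h | h | h
    · exact hle.not_gt h
    · exact hF h.1.symm
    · exact hlt.ne' (hL.trans h.2.2)
  · refine (C₀.avoidsDS4 a b hab).of_mapsTo (fun ρ => base_mem_rows) (fun σ => base_mem_rows)
      (fun ρ hρ σ hσ hρσ => ?_) (fun ρ hρ σ hσ hσρ => ?_)
    · rcases base_lt_base_or hρ hσ hρσ with h | h | h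
      exacts [h, absurd h.1 hF, absurd h.1 hL]
    · rcases base_lt_base_or hσ hρ hσρ with h | h | h
      exacts [h, absurd h.1.symm hF, absurd h.1.symm hL]

lemma glueRows_avoidsDS4_before_old {s : C₀.firstRows} {a : C₁.Col} {k : C₀.Col} :
    AvoidsDS4 (glueRows C₀ C₁ C₂ (.before s a)) (glueRows C₀ C₁ C₂ (.old k)) := by
  refine .of_lowerBound (fun σ => glueFirst_le) fun ρ hρ σ hσ hlt hρσ ρ' hρ' => ?_
  obtain ⟨r, -, rfl⟩ := mem_glueRows_before.1 hρ
  obtain ⟨r', -, rfl⟩ := mem_glueRows_before.1 hρ'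
  rcases mem_glueRows_old.1 hσ with rfl | rfl | ⟨x, -, rfl⟩
  · exact absurd hlt hρσ.not_gt
  · exact (before_lt_after.2 (before_lt_after.1 hρσ)).le
  · exact (before_lt_old.2 (before_lt_old.1 hρσ)).le

lemma glueRows_avoidsDS4_old_after {k : C₀.Col} {t : C₀.lastRows} {c : C₂.Col} :
    AvoidsDS4 (glueRows C₀ C₁ C₂ (.old k)) (glueRows C₀ C₁ C₂ (.after t c)) := by
  refine .of_upperBound (fun ρ => le_glueLast) fun ρ hρ σ hσ hρσ hlt σ' hσ' => ?_
  obtain ⟨r, -, rfl⟩ := mem_glueRows_after.1 hσ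
  obtain ⟨r', -, rfl⟩ := mem_glueRows_after.1 hσ'
  rcases mem_glueRows_old.1 hρ with rfl | rfl | ⟨x, -, rfl⟩
  · exact (before_lt_after.2 (before_lt_after.1 hρσ)).le
  · exact absurd hlt hρσ.not_gt
  · exact (old_lt_after.2 (old_lt_after.1 hρσ)).le

lemma glueRows_avoidsDS4_before_after {s : C₀.firstRows} {a : C₁.Col} {t : C₀.lastRows}
    {c : C₂.Col} :
    AvoidsDS4 (glueRows C₀ C₁ C₂ (.before s a)) (glueRows C₀ C₁ C₂ (.after t c)) := by
  rcases le_or_gt s.1 t.1 with h | h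
  · refine .of_forall_lt fun ρ hρ σ hσ => ?_
    obtain ⟨r, -, rfl⟩ := mem_glueRows_before.1 hρ
    obtain ⟨r', -, rfl⟩ := mem_glueRows_after.1 hσ
    exact before_lt_after.2 h
  · refine .of_forall_gt fun ρ hρ σ hσ => ?_
    obtain ⟨r, -, rfl⟩ := mem_glueRows_before.1 hρ
    obtain ⟨r', -, rfl⟩ := mem_glueRows_after.1 hσ
    exact after_lt_before.2 h

lemma glueRows_avoidsDS4 {a b : GCol C₀ C₁ C₂} (hab : a < b) :
    AvoidsDS4 (glueRows C₀ C₁ C₂ a) (glueRows C₀ C₁ C₂ b) := by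
  rcases a with ⟨s, a⟩ | k | ⟨t, c⟩ <;> rcases b with ⟨s', a'⟩ | k' | ⟨t', c'⟩
  · rcases GlueCol.before_lt_before.1 hab with hlt | ⟨rfl, hlt⟩
    · refine .of_forall_lt fun ρ hρ σ hσ => ?_
      obtain ⟨r, -, rfl⟩ := mem_glueRows_before.1 hρ
      obtain ⟨r', -, rfl⟩ := mem_glueRows_before.1 hσ
      exact before_lt_before.2 (.inl hlt)
    · exact (C₁.avoidsDS4 a a' hlt).map (beforeEmb s)
  · exact glueRows_avoidsDS4_before_old
  · exact glueRows_avoidsDS4_before_after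
  · exact absurd hab GlueCol.not_old_lt_before
  · exact glueRows_old_avoidsDS4 (GlueCol.old_lt_old.1 hab)
  · exact glueRows_avoidsDS4_old_after
  · exact absurd hab GlueCol.not_after_lt_before
  · exact absurd hab GlueCol.not_after_lt_old
  · rcases GlueCol.after_lt_after.1 hab with hlt | ⟨rfl, hlt⟩
    · refine .of_forall_lt fun ρ hρ σ hσ => ?_
      obtain ⟨r, -, rfl⟩ := mem_glueRows_after.1 hρ
      obtain ⟨r', -, rfl⟩ := mem_glueRows_after.1 hσ
      exact after_lt_after.2 (.inl hlt)
    · exact (C₂.avoidsDS4 c c' hlt).map (afterEmb t)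

variable (C₀ C₁ C₂) in
/-- The key step of the construction: inserting a copy of `C₁` before each first row of `C₀` and a
copy of `C₂` after each last row, and giving each column of `C₀` a new first `1`-entry inside the
former and a new last one inside the latter. -/
def glue : Block (w + 2) (p + 1) (q + 1) (f * f₁ + l * f₂) (f * l₁ + l * l₂) where
  Row := GRow C₀ C₁ C₂
  Col := GCol C₀ C₁ C₂
  rows := glueRows C₀ C₁ C₂
  firstRows := GlueRow.copies C₁.firstRows C₂.firstRows
  lastRows := GlueRow.copies C₁.lastRows C₂.lastRows
  first := glueFirst C₀ C₁ C₂
  last := glueLast C₀ C₁ C₂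
  firstRank := glueFirstRank C₀ C₁ C₂
  lastRank := glueLastRank C₀ C₁ C₂
  card_rows := card_glueRows
  card_firstRows := by
    simp only [GlueRow.card_copies, card_firstRows, card_lastRows]
  card_lastRows := by
    simp only [GlueRow.card_copies, card_firstRows, card_lastRows]
  card_row_add_two_le := by
    have h₀ := C₀.card_row_add_two_le
    have h₁ := Nat.mul_le_mul_left f C₁.card_row_add_two_le
    have h₂ := Nat.mul_le_mul_left l C₂.card_row_add_two_le
    rw [GlueRow.card_eq, C₀.card_firstRows, C₀.card_lastRows]
    linarith
  card_col_eq_first := by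
    simp only [GlueCol.card_eq, Fintype.card_coe, card_firstRows, card_lastRows,
      C₀.card_col_eq_first, C₁.card_col_eq_first, C₂.card_col_eq_first]
    ring
  card_col_eq_last := by
    simp only [GlueCol.card_eq, Fintype.card_coe, card_firstRows, card_lastRows,
      C₀.card_col_eq_last, C₁.card_col_eq_last, C₂.card_col_eq_last]
    ring
  disjoint := GlueRow.disjoint_copies C₁.disjoint C₂.disjoint
  first_mem := glueFirst_mem_copies
  last_mem := glueLast_mem_copies
  first_mem_rows := glueFirst_mem_glueRows
  last_mem_rows := glueLast_mem_glueRows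
  first_le _ _ := glueFirst_le
  le_last _ _ := le_glueLast
  first_eq _ _ := glueFirst_eq
  last_eq _ _ := glueLast_eq
  firstRank_lt _ _ := glueFirstRank_lt
  lastRank_lt _ _ := glueLastRank_lt
  last_ne_last _ _ := glueLast_ne_glueLast
  le_of_first_eq _ _ := le_of_glueFirst_eq
  le_of_last_eq _ _ := le_of_glueLast_eq
  avoidsDS4 _ _ := glueRows_avoidsDS4

end Glue

end Block

/-! ### Ackermann bounds -/

lemma two_mul_ack_le_ack_succ (m n : ℕ) : 2 * ack (m + 3) n ≤ ack (m + 3) (n + 1) :=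
  calc 2 * ack (m + 3) n ≤ ack 2 (ack (m + 3) n) := by rw [ack_two]; lia
    _ ≤ ack (m + 2) (ack (m + 3) n) := ack_mono_left _ (by lia)
    _ = ack (m + 3) (n + 1) := (ack_succ_succ _ _).symm

lemma two_pow_mul_ack_le_ack_add (m n j : ℕ) : 2 ^ j * ack (m + 3) n ≤ ack (m + 3) (n + j) := by
  induction j with
  | zero => simp
  | succ j ih =>
    calc 2 ^ (j + 1) * ack (m + 3) n = 2 * (2 ^ j * ack (m + 3) n) := by ring
      _ ≤ 2 * ack (m + 3) (n + j) := by gcongr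
      _ ≤ ack (m + 3) (n + (j + 1)) := two_mul_ack_le_ack_succ m (n + j)

lemma mul_ack_le_ack_add (m n j : ℕ) : j * ack (m + 3) n ≤ ack (m + 3) (n + j) :=
  (Nat.mul_le_mul_right _ Nat.lt_two_pow_self.le).trans (two_pow_mul_ack_le_ack_add m n j)

lemma thirteen_le_ack (m n : ℕ) : 13 ≤ ack (m + 3) (n + 1) :=
  calc 13 = ack 3 1 := by simp
    _ ≤ ack (m + 3) (n + 1) := ack_le_ack (by lia) (by lia)

lemma mul_add_mul_le_ack {m f l x y g h : ℕ} (hf : 4 * f + 2 ≤ ack (m + 3) (2 * g + 1))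
    (hl : 4 * l + 2 ≤ ack (m + 3) (2 * g + 1)) (hx : x ≤ g) (hy : y ≤ g) (hh : 4 * g + 2 ≤ h) :
    4 * (f * x + l * y) + 2 ≤ ack (m + 3) h := by
  rcases g.eq_zero_or_pos with rfl | hg
  · obtain ⟨rfl, rfl⟩ : x = 0 ∧ y = 0 := by lia
    simpa using hh.trans (lt_ack_right (m + 3) h).le
  calc 4 * (f * x + l * y) + 2 ≤ 4 * (f * g + l * g) + 2 * g := by gcongr; lia
    _ ≤ g * ((4 * f + 2) + (4 * l + 2)) := by nlinarith
    _ ≤ g * (ack (m + 3) (2 * g + 1) + ack (m + 3) (2 * g + 1)) := by gcongr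
    _ = 2 * g * ack (m + 3) (2 * g + 1) := by ring
    _ ≤ ack (m + 3) (2 * g + 1 + 2 * g) := mul_ack_le_ack_add _ _ _
    _ ≤ ack (m + 3) h := ack_mono_right _ (by lia)

/-- There is a block of width `2 * d + 2` with few first and last rows. The bounds are on
`4 * f + 2` and `4 * l + 2` because gluing reproduces them in this form. -/
def Block.ExistsSmall (d p q : ℕ) : Prop :=
  ∃ f l, 4 * f + 2 ≤ ack (d + 3) (p + q + 1) ∧ 4 * l + 2 ≤ ack (d + 3) (p + q + 1) ∧
    Nonempty (Block (2 * d + 2) p q f l)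

namespace Block.ExistsSmall

lemma zero_left (d q : ℕ) : ExistsSmall d 0 q := by
  have := thirteen_le_ack d (0 + q)
  exact ⟨2, 0, by lia, by lia, ⟨.empty rfl (by simp) le_rfl⟩⟩

lemma zero_right (d p : ℕ) : ExistsSmall d p 0 := by
  have := thirteen_le_ack d (p + 0)
  exact ⟨0, 2, by lia, by lia, ⟨.empty (by simp) rfl le_rfl⟩⟩

lemma zero_depth (p q : ℕ) : ExistsSmall 0 p q := by
  rcases p.eq_zero_or_pos with rfl | hp
  · exact zero_left 0 q
  rcases q.eq_zero_or_pos with rfl | hq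
  · exact zero_right 0 p
  have hpow : p + q < 2 ^ (p + q) := Nat.lt_two_pow_self
  have hack : ack 3 (p + q + 1) = 2 ^ (p + q) * 2 ^ 4 - 3 := by rw [ack_three, ← pow_add]
  exact ⟨q, p, by lia, by lia, ⟨.grid p q (by lia)⟩⟩

lemma succ {d p q : ℕ} (h₀ : ∀ f l, ExistsSmall d f l) (h₁ : ExistsSmall (d + 1) p (q + 1))
    (h₂ : ExistsSmall (d + 1) (p + 1) q) : ExistsSmall (d + 1) (p + 1) (q + 1) := by
  obtain ⟨f₁, l₁, hf₁, hl₁, ⟨C₁⟩⟩ := h₁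
  obtain ⟨f₂, l₂, hf₂, hl₂, ⟨C₂⟩⟩ := h₂
  obtain ⟨f, l, hf, hl, ⟨C₀⟩⟩ := h₀ f₁ l₂
  have hack : ack (d + 4) (p + 1 + (q + 1) + 1) = ack (d + 3) (ack (d + 4) (p + q + 2)) := by
    rw [← ack_succ_succ]
    congr 1
    lia
  rw [show p + (q + 1) + 1 = p + q + 2 by lia] at hf₁ hl₁
  rw [show p + 1 + q + 1 = p + q + 2 by lia] at hf₂ hl₂
  obtain ⟨g, hg, hmax⟩ : ∃ g, 4 * g + 2 ≤ ack (d + 4) (p + q + 2) ∧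
      ∀ x, 4 * x + 2 ≤ ack (d + 4) (p + q + 2) → x ≤ g :=
    ⟨(ack (d + 4) (p + q + 2) - 2) / 4, by lia, by lia⟩
  have hmono : ack (d + 3) (f₁ + l₂ + 1) ≤ ack (d + 3) (2 * g + 1) :=
    ack_mono_right _ (by linarith [hmax _ hf₁, hmax _ hl₂])
  replace hf := hf.trans hmono
  replace hl := hl.trans hmono
  refine ⟨f * f₁ + l * f₂, f * l₁ + l * l₂, ?_, ?_, ⟨C₀.glue C₁ C₂⟩⟩
  · exact hack ▸ mul_add_mul_le_ack hf hl (hmax _ hf₁) (hmax _ hf₂) hg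
  · exact hack ▸ mul_add_mul_le_ack hf hl (hmax _ hl₁) (hmax _ hl₂) hg

end Block.ExistsSmall

theorem Block.existsSmall (d p q : ℕ) : ExistsSmall d p q := by
  induction d generalizing p q with
  | zero => exact .zero_depth p q
  | succ d ihd =>
    induction p generalizing q with
    | zero => exact .zero_left _ q
    | succ p ihp =>
      induction q with
      | zero => exact .zero_right _ _
      | succ q ihq => exact .succ ihd (ihp (q + 1)) ihq

/-! ### The inverse Ackermann hierarchy -/

/-- Knuth's arrow `2 ↑ᵏ x`, with `2 ↑⁰ x = 2 * x`. Up to a shift it is the Ackermann function, and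
`knuthArrow k` is a strict lower inverse of `alphaHier (k + 1)`. -/
def knuthArrow : ℕ → ℕ → ℕ
  | 0, x => 2 * x
  | k + 1, x => (knuthArrow k)^[x] 1

lemma knuthArrow_succ_succ (k x : ℕ) :
    knuthArrow (k + 1) (x + 1) = knuthArrow k (knuthArrow (k + 1) x) :=
  Function.iterate_succ_apply' _ _ _

lemma knuthArrow_one (k : ℕ) : knuthArrow k 1 = 2 := by
  induction k with
  | zero => rfl
  | succ _ ih => exact ih

lemma knuthArrow_two (k : ℕ) : knuthArrow k 2 = 4 := by
  induction k with
  | zero => rfl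
  | succ k ih => rw [knuthArrow_succ_succ, knuthArrow_one, ih]

lemma knuthArrow_add_three (k x : ℕ) : knuthArrow k (x + 3) = ack (k + 2) x + 3 := by
  induction k generalizing x with
  | zero => rw [ack_two, knuthArrow]; ring
  | succ k ihk =>
    induction x with
    | zero => rw [knuthArrow_succ_succ, knuthArrow_two, ack_succ_zero, ihk 1]
    | succ x ihx => rw [Nat.add_right_comm, knuthArrow_succ_succ, ihx, ihk, ack_succ_succ]

lemma iterate_lt_of_lt_iterCount {f g : ℕ → ℕ} (h : ∀ m x, x < f m → g x < m) {fuel m x : ℕ}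
    (hx : x < iterCount f fuel m) : g^[x] 1 < m := by
  induction fuel generalizing m x with
  | zero => exact absurd hx x.not_lt_zero
  | succ fuel ih =>
    rw [iterCount] at hx
    split_ifs at hx with hm
    · exact absurd hx x.not_lt_zero
    cases x with
    | zero => exact not_le.1 hm
    | succ x =>
      rw [Function.iterate_succ_apply']
      exact h _ _ (ih (by lia))

lemma knuthArrow_lt_of_lt_alphaHier {k m x : ℕ} (hx : x < alphaHier (k + 1) m) :
    knuthArrow k x < m := by
  induction k generalizing m x with
  | zero =>
    simp only [alphaHier, knuthArrow] at hx ⊢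
    lia
  | succ k ih => exact iterate_lt_of_lt_iterCount (fun _ _ => ih) hx

lemma ack_lt_of_three_lt_alphaHier {d n : ℕ} (h : 3 < alphaHier (d + 5) n) :
    ack (d + 3) 18 < n := by
  have hack : 18 ≤ ack (d + 5) 0 :=
    calc 18 ≤ ack 5 0 := by
          rw [ack_succ_zero, ack_succ_succ, ack_succ_zero, ack_three, ack_three]; norm_num
      _ ≤ ack (d + 5) 0 := ack_mono_left _ (by lia)
  calc ack (d + 3) 18 ≤ ack (d + 4) (ack (d + 5) 0) := ack_le_ack (by lia) hack
    _ = ack (d + 6) 0 := by rw [ack_succ_zero (d + 5), ack_succ_succ]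
    _ < knuthArrow (d + 4) 3 := by rw [knuthArrow_add_three (d + 4) 0]; lia
    _ < n := knuthArrow_lt_of_lt_alphaHier h

lemma three_lt_alphaHier {k n : ℕ} (hk : 1 ≤ k) (h : k < invAck n) : 3 < alphaHier k n := by
  by_contra! hle
  exact Nat.notMem_of_lt_sInf h ⟨hk, hle⟩

/-! ### Matrices -/

/-- The `n × n` matrix with copies of `A` along its diagonal, with repeated column blocks truncated
at the right and zero rows at the bottom. -/
def blockDiag {m k : ℕ} [NeZero m] [NeZero k] (A : Fin m → Fin k → Bool) (n : ℕ) :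
    Fin n → Fin n → Bool :=
  fun i j => decide (i.val / m = j.val / k) && A (Fin.ofNat m i) (Fin.ofNat k j)

section blockDiag

variable {m k n : ℕ} [NeZero m] [NeZero k] {A : Fin m → Fin k → Bool}

lemma blockDiag_eq_true {i j : Fin n} : blockDiag A n i j = true ↔
    i.val / m = j.val / k ∧ A (Fin.ofNat m i) (Fin.ofNat k j) = true := by
  simp [blockDiag]

lemma ofNat_lt_ofNat_of_div_eq {a b : ℕ} (hab : a < b) (h : a / m = b / m) :
    Fin.ofNat m a < Fin.ofNat m b := by
  have ha := Nat.div_add_mod a m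
  have hb := Nat.div_add_mod b m
  rw [h] at ha
  change a % m < b % m
  lia

lemma not_matContains_blockDiag {s : ℕ} (hs : 2 ≤ s) (hA : ¬ MatContains A (DS s)) :
    ¬ MatContains (blockDiag A n) (DS s) := by
  rintro ⟨r, c, hr, hc, h⟩
  simp only [blockDiag_eq_true] at h
  have hr₀ := (h ⟨0, by lia⟩ 1 (by simp [DS])).1
  have hr₁ := (h ⟨1, by lia⟩ 0 (by simp [DS])).1
  have hr_lt : r ⟨0, by lia⟩ < r ⟨1, by lia⟩ := hr (by simp)
  have hc_lt : c 0 < c 1 := hc (by simp)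
  have hc_div : (c 0).val / k = (c 1).val / k :=
    (Nat.div_le_div_right hc_lt.le).antisymm
      (hr₀ ▸ hr₁ ▸ Nat.div_le_div_right (c := m) (Fin.le_def.1 hr_lt.le))
  have hr_div (i : Fin s) : (r i).val / m = (c 1).val / k := by
    rcases Nat.mod_two_eq_zero_or_one i with hi | hi
    · exact (h i 1 (decide_eq_true (show (i.val + 1) % 2 = 1 by lia))).1
    · exact (h i 0 (decide_eq_true hi)).1.trans hc_div
  refine hA ⟨fun i => Fin.ofNat m (r i), fun j => Fin.ofNat k (c j), ?_, ?_, fun a b hab =>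
    (h a b hab).2⟩
  · exact fun i i' hi => ofNat_lt_ofNat_of_div_eq (hr hi) ((hr_div i).trans (hr_div i').symm)
  · refine fun j j' hj => ofNat_lt_ofNat_of_div_eq (hc hj) ?_
    obtain ⟨rfl, rfl⟩ : j = 0 ∧ j' = 1 := by lia
    exact hc_div

lemma colOnes_le_colOnes_blockDiag (hmk : 2 * m ≤ k) (hkn : k ≤ n) (j : Fin n) :
    colOnes A (Fin.ofNat k j) ≤ colOnes (blockDiag A n) j := by
  have hbound : m * (j.val / k) + m ≤ n := by
    have hj := (Nat.mul_div_le j.val k).trans j.2.le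
    rcases (j.val / k).eq_zero_or_pos with h | h <;> nlinarith
  have hm : 0 < m := NeZero.pos m
  refine Nat.card_le_card_of_injective (fun i => ⟨⟨m * (j.val / k) + i.1, by lia⟩, ?_⟩) ?_
  · have hi : Fin.ofNat m (m * (j.val / k) + i.1.val) = i.1 := by
      ext
      simp [Nat.mod_eq_of_lt i.1.2]
    rw [blockDiag_eq_true, hi]
    exact ⟨by simp [Nat.mul_add_div hm], i.2⟩
  · intro i i' h
    ext
    simpa using h

end blockDiag

namespace Block

variable {w p q f l : ℕ} (C : Block w p q f l)

/-- A block as a matrix with rows and columns indexed by `Fin`. -/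
noncomputable def toMatrix : Fin (Fintype.card C.Row) → Fin (Fintype.card C.Col) → Bool :=
  fun i j => decide (monoEquivOfFin C.Row rfl i ∈ C.rows (monoEquivOfFin C.Col rfl j))

lemma not_matContains_toMatrix : ¬ MatContains C.toMatrix (DS 4) := by
  rintro ⟨r, c, hr, hc, h⟩
  simp only [toMatrix, decide_eq_true_eq] at h
  refine (C.avoidsDS4 _ _ ((monoEquivOfFin C.Col rfl).lt_iff_lt.2 (hc zero_lt_one)) _ (h 0 1 rfl) _
    (h 1 0 rfl) _ (h 2 1 rfl) _ (h 3 0 rfl) ?_ ?_).not_gt ?_ <;>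
  exact (monoEquivOfFin C.Row rfl).lt_iff_lt.2 (hr (by decide))

lemma colOnes_toMatrix (j : Fin (Fintype.card C.Col)) : colOnes C.toMatrix j = w := by
  refine .trans ?_ (C.card_rows (monoEquivOfFin C.Col rfl j))
  rw [← Nat.card_eq_finsetCard]
  exact Nat.card_congr ((monoEquivOfFin C.Row rfl).toEquiv.subtypeEquiv (by simp [toMatrix]))

end Block

theorem exists_not_matContains_le_colOnes {d n : ℕ} (h : ack (d + 3) 18 ≤ n) :
    ∃ M : Fin n → Fin n → Bool, ¬ MatContains M (DS 4) ∧ ∀ j, 2 * d + 2 ≤ colOnes M j := by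
  -- With eight columns to each first and each last row, a block has at least twice as many columns
  -- as rows, as the diagonal arrangement requires.
  obtain ⟨f, l, hf, -, ⟨C⟩⟩ := Block.existsSmall d 8 8
  have hcol := C.card_col_eq_first
  have hfl : f = l := by linarith [C.card_col_eq_last]
  have hrow := C.card_row_add_two_le
  have : NeZero (Fintype.card C.Col) := ⟨by lia⟩
  have : NeZero (Fintype.card C.Row) :=
    ⟨(Fintype.card_pos_iff.2 ⟨C.first (monoEquivOfFin C.Col rfl 0)⟩).ne'⟩
  have hack := two_mul_ack_le_ack_succ d 17
  refine ⟨blockDiag C.toMatrix n, not_matContains_blockDiag (by norm_num)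
    C.not_matContains_toMatrix, fun j => ?_⟩
  exact (C.colOnes_toMatrix _).ge.trans (colOnes_le_colOnes_blockDiag (by lia) (by lia) j)

end DSFour

/-- There is a constant `C` such that for every `n ≥ 1` there exists an
`n × n` (0,1)-matrix avoiding `DS₄` with at least `2·α(n) − C` `1`-entries in every
column. -/
theorem ds4_avoiding_construction :
    ∃ C : ℝ, ∀ n : ℕ, 1 ≤ n →
      ∃ M : Fin n → Fin n → Bool, ¬ MatContains M (DS 4) ∧
        ∀ j : Fin n, 2 * (invAck n : ℝ) - C ≤ (colOnes M j : ℝ) := by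
  refine ⟨10, fun n _ => ?_⟩
  rcases le_or_gt (invAck n) 5 with hle | hgt
  · refine ⟨fun _ _ => false, ?_, fun j => ?_⟩
    · rintro ⟨_, _, -, -, h⟩
      simpa using h 0 1 rfl
    · have : (invAck n : ℝ) ≤ 5 := by exact_mod_cast hle
      exact (by linarith : _ ≤ (0 : ℝ)).trans (Nat.cast_nonneg _)
  · obtain ⟨d, hd⟩ := Nat.exists_eq_add_of_lt hgt
    have hhier : 3 < alphaHier (d + 5) n := DSFour.three_lt_alphaHier (by lia) (by lia)
    obtain ⟨M, hM, hcol⟩ := DSFour.exists_not_matContains_le_colOnes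
      (DSFour.ack_lt_of_three_lt_alphaHier hhier).le
    refine ⟨M, hM, fun j => ?_⟩
    have hcard : 2 * ((d : ℝ) + 1) ≤ colOnes M j := by exact_mod_cast hcol j
    rw [hd]
    push_cast
    linarith
end
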